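/- Let A = I and suppose the drift b satisfies: sup_{x,μ}|b(x,μ)|(1+|x|)^{−m} < ∞ for some m ≥ 1; |b(x,μ) − b(x,σ)| ≤ C·W₁(μ,σ) for all x and all μ, σ ∈ 𝒫_V(ℝ^d); and ⟨x − y, b(x,μ) − b(y,μ)⟩ ≤ −κ|x−y|² for all x, y and all μ, where 0 < C < κ. Assume V(x) ≥ (1+|x|)^{m+1}. Let μ ∈ 𝒫_V(ℝ^d) be a stationary solution of L_μ^*μ = 0 and let (μ_t)_{t≥0} ⊂ 𝒫_V(ℝ^d) solve the Cauchy problem ∂_tμ_t = L_{μ_t}^*μ_t with initial condition ν ∈ 𝒫_V(ℝ^d). Then W₁(μ_t, μ) ≤ e^{−(κ−C)t} W₁(ν, μ) for all t ≥ 0. -/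

import Mathlib

open MeasureTheory Real Set Filter Metric
open scoped Topology RealInnerProductSpace NNReal ENNReal

noncomputable section

abbrev Ed (d : ℕ) : Type := EuclideanSpace ℝ (Fin d)

variable {d : ℕ}

/-- Second-order partial derivative `∂_i ∂_j φ (x)`. -/
def hess2 (φ : Ed d → ℝ) (x : Ed d) (i j : Fin d) : ℝ :=
  iteratedFDeriv ℝ 2 φ x ![EuclideanSpace.single i 1, EuclideanSpace.single j 1]

/-- The Laplacian. -/
def lap (φ : Ed d → ℝ) (x : Ed d) : ℝ := ∑ i, hess2 φ x i i

/-- The Kolmogorov operator with unit diffusion: `L φ = Δφ + ⟨B, ∇φ⟩`. -/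
def LopI (B : Ed d → Ed d) (φ : Ed d → ℝ) (x : Ed d) : ℝ :=
  lap φ x + ⟪B x, gradient φ x⟫

/-- Membership in `𝒫_V(ℝ^d)`. -/
def memPV (V : Ed d → ℝ) (μ : Measure (Ed d)) : Prop :=
  IsProbabilityMeasure μ ∧ Integrable V μ

/-- `C_0^∞` test functions. -/
def IsTestFun (φ : Ed d → ℝ) : Prop :=
  ContDiff ℝ (⊤ : ℕ∞) φ ∧ HasCompactSupport φ

/-- The Kantorovich `1`-distance, defined by duality over `1`-Lipschitz
functions. -/
def kant (μ ν : Measure (Ed d)) : ℝ :=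
  ⨆ f : {f : Ed d → ℝ // LipschitzWith 1 f},
    (∫ x, f.1 x ∂μ - ∫ x, f.1 x ∂ν)

/-- Stationary solution of `L_μ^*μ = 0` (with `A = I`). -/
def IsStationarySolI (B : Ed d → Ed d) (μ : Measure (Ed d)) : Prop :=
  ∀ φ : Ed d → ℝ, IsTestFun φ → ∫ x, LopI B φ x ∂μ = 0

/-- Solution of the nonlinear Cauchy problem (with `A = I`). -/
def IsCauchySolI (b : Ed d → Measure (Ed d) → Ed d)
    (ν : Measure (Ed d)) (μ : ℝ → Measure (Ed d)) : Prop :=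
  μ 0 = ν ∧ ∀ φ : Ed d → ℝ, IsTestFun φ → ∀ t : ℝ, 0 ≤ t →
    ∫ x, φ x ∂(μ t) - ∫ x, φ x ∂ν
      = ∫ s in (0:ℝ)..t, ∫ x, LopI (fun y => b y (μ s)) φ x ∂(μ s)

/-!
By duality, `W₁(μ_t, μ)` is the supremum of `∫ f dμ_t - ∫ f dμ` over `1`-Lipschitz `f`. Let `B` be a
Lipschitz dissipative field close to `b(·, μ)`. One Euler step of size `τ` for `Δ + ⟨B, ∇⟩` maps a
`1`-Lipschitz function to a `(1 - τκ + O(τ²))`-Lipschitz one, and its difference quotient at a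
mollified `f` is `Δf + ⟨B, ∇f⟩` up to a small error. Since `μ` is stationary and
`|b(x, μ_t) - b(x, μ)| ≤ C W₁(μ_t, μ)`, every `F_f(t) = ∫ f dμ_t - ∫ f dμ` then satisfies
`F_f' ≤ (W - F_f) / τ - (κ - C - O(τ)) W + error` with `W = sup_f F_f`. A nearly optimal `f` makes
the first term negligible, so Gronwall's inequality for the supremum gives the exponential decay.

The field `B` is a mollified Yosida approximation of `b(·, μ)`, and it has to be close to `b(·, μ)`
in `L¹` of `μ` and of the occupation measure `∫₀ᵀ μ_t dt`, while `b` is merely Borel. Both measures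
are absolutely continuous because their distributional Laplacian is of first order, and the
mollified fields converge Lebesgue-almost everywhere.
-/

lemma IsTestFun.continuous {φ : Ed d → ℝ} (hφ : IsTestFun φ) : Continuous φ := hφ.1.continuous

lemma IsTestFun.differentiable {φ : Ed d → ℝ} (hφ : IsTestFun φ) : Differentiable ℝ φ :=
  hφ.1.differentiable (by simp)

lemma IsTestFun.integrable {φ : Ed d → ℝ} (hφ : IsTestFun φ) (μ : Measure (Ed d))
    [IsFiniteMeasureOnCompacts μ] : Integrable φ μ :=
  hφ.continuous.integrable_of_hasCompactSupport hφ.2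

lemma IsTestFun.exists_abs_le {φ : Ed d → ℝ} (hφ : IsTestFun φ) :
    ∃ c, 0 ≤ c ∧ ∀ x, |φ x| ≤ c := by
  obtain ⟨c, hc⟩ := hφ.2.exists_bound_of_continuous hφ.continuous
  exact ⟨c, (norm_nonneg _).trans (hc 0), hc⟩

lemma IsTestFun.exists_norm_fderiv_le {φ : Ed d → ℝ} (hφ : IsTestFun φ) :
    ∃ c, ∀ x, ‖fderiv ℝ φ x‖ ≤ c :=
  (hφ.2.fderiv ℝ).exists_bound_of_continuous (hφ.1.continuous_fderiv (by simp))

lemma IsTestFun.fderiv_apply {φ : Ed d → ℝ} (hφ : IsTestFun φ) (v : Ed d) :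
    IsTestFun (fun y => fderiv ℝ φ y v) :=
  ⟨(hφ.1.fderiv_right (m := (⊤ : ℕ∞)) (by simp)).clm_apply contDiff_const, hφ.2.fderiv_apply ℝ v⟩

lemma IsTestFun.add {φ ψ : Ed d → ℝ} (hφ : IsTestFun φ) (hψ : IsTestFun ψ) :
    IsTestFun (φ + ψ) := ⟨hφ.1.add hψ.1, hφ.2.add hψ.2⟩

lemma IsTestFun.sum {ι : Type*} (s : Finset ι) {φ : ι → Ed d → ℝ} (hφ : ∀ i, IsTestFun (φ i)) :
    IsTestFun (fun y => ∑ i ∈ s, φ i y) := by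
  refine ⟨ContDiff.sum fun i _ => (hφ i).1, ?_⟩
  classical
  induction s using Finset.induction_on with
  | empty => simpa using! HasCompactSupport.zero
  | insert a s ha ih => simpa [Finset.sum_insert ha] using! (hφ a).2.add ih

lemma hess2_eq_fderiv_fderiv {φ : Ed d → ℝ} (hφ : ContDiff ℝ 2 φ) (x : Ed d) (i j : Fin d) :
    hess2 φ x i j = fderiv ℝ (fun y => fderiv ℝ φ y (EuclideanSpace.single j 1)) x
      (EuclideanSpace.single i 1) := by
  have hdiff : DifferentiableAt ℝ (fderiv ℝ φ) x :=
    (hφ.fderiv_right (m := 1) (by norm_num)).differentiable (by simp) x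
  rw [hess2, iteratedFDeriv_two_apply, fderiv_clm_apply hdiff (differentiableAt_const _)]
  simp

lemma IsTestFun.contDiff_two {φ : Ed d → ℝ} (hφ : IsTestFun φ) : ContDiff ℝ 2 φ :=
  contDiff_infty.1 hφ.1 2

lemma IsTestFun.hess2 {φ : Ed d → ℝ} (hφ : IsTestFun φ) (i j : Fin d) :
    IsTestFun (fun y => hess2 φ y i j) := by
  simp_rw [hess2_eq_fderiv_fderiv hφ.contDiff_two]
  exact (hφ.fderiv_apply _).fderiv_apply _

lemma IsTestFun.lap {φ : Ed d → ℝ} (hφ : IsTestFun φ) : IsTestFun (lap φ) :=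
  IsTestFun.sum Finset.univ fun i => hφ.hess2 i i

lemma exists_isTestFun_eq_one_eq_zero {K U : Set (Ed d)} (hK : IsCompact K) (hU : IsOpen U)
    (hKU : K ⊆ U) :
    ∃ g : Ed d → ℝ, IsTestFun g ∧ (∀ x, 0 ≤ g x) ∧ (∀ x, g x ≤ 1) ∧ (∀ x ∈ K, g x = 1) ∧
      ∀ x, x ∉ U → g x = 0 := by
  obtain ⟨L, hL, hKL, hLU⟩ := exists_compact_between hK hU hKU
  obtain ⟨f, hf0, hf1, hf⟩ := exists_contMDiffMap_zero_one_of_isClosed (n := (⊤ : ℕ∞))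
    (modelWithCornersSelf ℝ (Ed d)) isOpen_interior.isClosed_compl hK.isClosed
    (Set.disjoint_compl_left_iff_subset.2 hKL)
  have hfL : ∀ x, x ∉ L → f x = 0 := fun x hx => hf0 fun h => hx (interior_subset h)
  exact ⟨f, ⟨f.contMDiff.contDiff, .intro hL hfL⟩, fun x => (hf x).1, fun x => (hf x).2, hf1,
    fun x hx => hfL x fun h => hx (hLU h)⟩

lemma exists_isTestFun_measureReal_le_integral_le {K U : Set (Ed d)} (hK : IsCompact K)
    (hU : IsOpen U) (hKU : K ⊆ U) :
    ∃ g : Ed d → ℝ, IsTestFun g ∧ (∀ x, 0 ≤ g x) ∧ (∀ x, g x ≤ 1) ∧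
      (∀ μ : Measure (Ed d), ∀ [IsFiniteMeasureOnCompacts μ], μ.real K ≤ ∫ x, g x ∂μ) ∧
      ∀ μ : Measure (Ed d), ∀ [IsFiniteMeasureOnCompacts μ], μ U ≠ ∞ →
        ∫ x, g x ∂μ ≤ μ.real U := by
  obtain ⟨g, hg, hg0, hg1, hgK, hgU⟩ := exists_isTestFun_eq_one_eq_zero hK hU hKU
  refine ⟨g, hg, hg0, hg1, fun μ _ => ?_, fun μ _ hμU => ?_⟩
  · rw [← integral_indicator_one hK.measurableSet]
    refine integral_mono ((integrable_indicator_iff hK.measurableSet).2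
      (integrableOn_const hK.measure_ne_top)) (hg.integrable μ) fun x => ?_
    by_cases hx : x ∈ K <;> simp [hx, hgK, hg0]
  · rw [← integral_indicator_one hU.measurableSet]
    refine integral_mono (hg.integrable μ) ((integrable_indicator_iff hU.measurableSet).2
      (integrableOn_const hμU)) fun x => ?_
    by_cases hx : x ∈ U <;> simp [hx, hgU, hg1]

lemma LopI_eq (B : Ed d → Ed d) (φ : Ed d → ℝ) (x : Ed d) :
    LopI B φ x = lap φ x + fderiv ℝ φ x (B x) := by
  rw [LopI, gradient, real_inner_comm, InnerProductSpace.toDual_symm_apply]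

/-! ### Mollification -/

open scoped Convolution in
/-- The mollification `∫ f (x - y) φ y dy` of a function `f` by a kernel `φ`. -/
def moll (φ f : Ed d → ℝ) : Ed d → ℝ := f ⋆[ContinuousLinearMap.mul ℝ ℝ, volume] φ

lemma moll_apply (φ f : Ed d → ℝ) (x : Ed d) : moll φ f x = ∫ y, f (x - y) * φ y := by
  simp [moll, convolution_eq_swap]

lemma moll_comm (φ f : Ed d → ℝ) : moll φ f = moll f φ := by
  ext x
  rw [moll_apply f φ]
  simp only [moll, convolution_def, ContinuousLinearMap.mul_apply', mul_comm]

lemma integrable_moll_integrand {φ f : Ed d → ℝ} (hφ : IsTestFun φ) (hf : Continuous f)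
    (x : Ed d) : Integrable (fun y => f (x - y) * φ y) :=
  ((hf.comp (by fun_prop)).mul hφ.continuous).integrable_of_hasCompactSupport hφ.2.mul_left

lemma moll_add {φ f g : Ed d → ℝ} (hφ : IsTestFun φ) (hf : Continuous f) (hg : Continuous g)
    (x : Ed d) : moll φ (fun y => f y + g y) x = moll φ f x + moll φ g x := by
  simp_rw [moll_apply, add_mul]
  exact integral_add (integrable_moll_integrand hφ hf x) (integrable_moll_integrand hφ hg x)

lemma moll_sub {φ f g : Ed d → ℝ} (hφ : IsTestFun φ) (hf : Continuous f) (hg : Continuous g)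
    (x : Ed d) : moll φ (fun y => f y - g y) x = moll φ f x - moll φ g x := by
  simp_rw [moll_apply, sub_mul]
  exact integral_sub (integrable_moll_integrand hφ hf x) (integrable_moll_integrand hφ hg x)

lemma moll_sum {ι : Type*} (s : Finset ι) {φ : Ed d → ℝ} {f : ι → Ed d → ℝ} (hφ : IsTestFun φ)
    (hf : ∀ i, Continuous (f i)) (x : Ed d) :
    moll φ (fun y => ∑ i ∈ s, f i y) x = ∑ i ∈ s, moll φ (f i) x := by
  simp_rw [moll_apply, Finset.sum_mul]
  exact integral_finsetSum s fun i _ => integrable_moll_integrand hφ (hf i) x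

lemma moll_const_mul (φ f : Ed d → ℝ) (c : ℝ) (x : Ed d) :
    moll φ (fun y => c * f y) x = c * moll φ f x := by
  simp_rw [moll_apply, mul_assoc]
  exact integral_const_mul c _

lemma moll_comp_add_right (φ f : Ed d → ℝ) (x v : Ed d) :
    moll φ (fun y => f (y + v)) x = moll φ f (x + v) := by
  simp_rw [moll_apply, sub_add_eq_add_sub]

lemma contDiff_moll {φ f : Ed d → ℝ} (hφ : IsTestFun φ) (hf : Continuous f) :
    ContDiff ℝ (⊤ : ℕ∞) (moll φ f) :=
  hφ.2.contDiff_convolution_right _ hf.locallyIntegrable hφ.1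

lemma isTestFun_moll {φ f : Ed d → ℝ} (hφ : IsTestFun φ) (hf : Continuous f)
    (hc : HasCompactSupport f) : IsTestFun (moll φ f) :=
  ⟨contDiff_moll hφ hf, hc.convolution _ hφ.2⟩

lemma fderiv_moll {φ f : Ed d → ℝ} (hφ : IsTestFun φ) (hf : Continuous f) (x v : Ed d) :
    fderiv ℝ (moll φ f) x v = moll (fun y => fderiv ℝ φ y v) f x := by
  have h := hφ.2.hasFDerivAt_convolution_right (ContinuousLinearMap.mul ℝ ℝ)
    hf.locallyIntegrable (μ := volume) (hφ.1.of_le (by simp)) x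
  rw [moll, h.fderiv, convolution_precompR_apply _ hf.locallyIntegrable (hφ.2.fderiv ℝ)
    (hφ.1.continuous_fderiv (by simp))]
  rfl

lemma hess2_moll {φ f : Ed d → ℝ} (hφ : IsTestFun φ) (hf : Continuous f) (x : Ed d)
    (i j : Fin d) :
    hess2 (moll φ f) x i j = moll (fun y => hess2 φ y i j) f x := by
  rw [hess2_eq_fderiv_fderiv (contDiff_infty.1 (contDiff_moll hφ hf) 2)]
  simp_rw [fderiv_moll hφ hf, hess2_eq_fderiv_fderiv hφ.contDiff_two]
  rw [fderiv_moll (hφ.fderiv_apply _) hf]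

lemma abs_moll_sub_moll_le {φ f : Ed d → ℝ} (hφ : IsTestFun φ) {K : ℝ≥0}
    (hf : LipschitzWith K f) (x y : Ed d) :
    |moll φ f x - moll φ f y| ≤ (∫ z, |φ z|) * K * ‖x - y‖ := by
  rw [moll_apply, moll_apply, ← integral_sub (integrable_moll_integrand hφ hf.continuous x)
    (integrable_moll_integrand hφ hf.continuous y), ← Real.norm_eq_abs, mul_assoc,
    ← integral_mul_const]
  refine norm_integral_le_of_norm_le ((hφ.integrable volume).abs.mul_const _)
    (.of_forall fun z => ?_)
  rw [← sub_mul, norm_mul, mul_comm, Real.norm_eq_abs (φ z)]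
  gcongr
  simpa only [dist_eq_norm, sub_sub_sub_cancel_right] using hf.dist_le_mul (x - z) (y - z)

lemma lap_moll {φ f : Ed d → ℝ} (hφ : IsTestFun φ) (hf : Continuous f) (x : Ed d) :
    lap (moll φ f) x = moll (lap φ) f x := by
  simp_rw [lap, hess2_moll hφ hf, moll_apply, lap, Finset.mul_sum]
  exact (integral_finsetSum _ fun i _ => integrable_moll_integrand (hφ.hess2 i i) hf x).symm

lemma abs_moll_le {φ f : Ed d → ℝ} (hφ : Integrable φ) {c : ℝ} (hf : ∀ x, |f x| ≤ c)
    (x : Ed d) : |moll φ f x| ≤ c * ∫ y, |φ y| := by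
  rw [moll_apply, ← Real.norm_eq_abs, ← integral_const_mul]
  refine norm_integral_le_of_norm_le (hφ.abs.const_mul c) (.of_forall fun y => ?_)
  rw [norm_mul]
  exact mul_le_mul_of_nonneg_right (hf _) (norm_nonneg _)

lemma norm_fderiv_moll_le {φ f : Ed d → ℝ} (hφ : IsTestFun φ) (hf : Continuous f) {c : ℝ}
    (hfc : ∀ x, |f x| ≤ c) (x : Ed d) :
    ‖fderiv ℝ (moll φ f) x‖ ≤ c * ∫ y, ‖fderiv ℝ φ y‖ := by
  have hc : 0 ≤ c := (abs_nonneg _).trans (hfc 0)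
  refine ContinuousLinearMap.opNorm_le_bound _
    (mul_nonneg hc (integral_nonneg fun _ => norm_nonneg _)) fun v => ?_
  rw [fderiv_moll hφ hf, mul_assoc, ← integral_mul_const]
  refine (abs_moll_le ((hφ.fderiv_apply v).integrable volume) hfc x).trans ?_
  gcongr
  · exact ((hφ.fderiv_apply v).integrable volume).abs
  · exact ((hφ.1.continuous_fderiv (by simp)).norm.integrable_of_hasCompactSupport
      (hφ.2.fderiv ℝ).norm).mul_const _
  · exact fun y => (fderiv ℝ φ y).le_opNorm v

/-! ### Approximation of dissipative fields by Lipschitz ones -/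

lemma exists_integral_norm_sub_le_of_tendsto {α F : Type*} [MeasurableSpace α]
    [NormedAddCommGroup F] {M : Measure α} {f : α → F} {g : ℕ → α → F} {bound : α → ℝ}
    (hf : AEStronglyMeasurable f M) (hg : ∀ n, AEStronglyMeasurable (g n) M)
    (hbound : Integrable bound M) (hle : ∀ n x, ‖f x - g n x‖ ≤ bound x)
    (hlim : ∀ᵐ x ∂M, Tendsto (fun n => g n x) atTop (𝓝 (f x))) {η : ℝ} (hη : 0 < η) :
    ∃ n, Integrable (fun x => ‖f x - g n x‖) M ∧ ∫ x, ‖f x - g n x‖ ∂M ≤ η := by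
  have hmeas : ∀ n, AEStronglyMeasurable (fun x => ‖f x - g n x‖) M := fun n => (hf.sub (hg n)).norm
  have hle' : ∀ n x, ‖‖f x - g n x‖‖ ≤ bound x := fun n x => (norm_norm _).trans_le (hle n x)
  have htend : Tendsto (fun n => ∫ x, ‖f x - g n x‖ ∂M) atTop (𝓝 (∫ _, (0 : ℝ) ∂M)) :=
    tendsto_integral_of_dominated_convergence _ hmeas hbound (fun n => .of_forall (hle' n))
      (hlim.mono fun x hx => by simpa using (hx.const_sub (f x)).norm)
  rw [integral_zero] at htend
  obtain ⟨n, hn⟩ := (htend.eventually (eventually_le_nhds hη)).exists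
  exact ⟨n, hbound.mono' (hmeas n) (.of_forall (hle' n)), hn⟩

section PolyGrowth

open scoped Convolution

variable {E : Type*} [NormedAddCommGroup E]

lemma continuous_one_add_norm_rpow (p : ℝ) : Continuous fun x : E => (1 + ‖x‖) ^ p :=
  (continuous_const.add continuous_norm).rpow_const fun x => Or.inl
    (by linarith [norm_nonneg x] : (0 : ℝ) < 1 + ‖x‖).ne'

lemma one_add_norm_sub_rpow_le {m : ℝ} (hm : 0 ≤ m) (x y : E) (hy : ‖y‖ ≤ 1) :
    (1 + ‖x - y‖) ^ m ≤ 2 ^ m * (1 + ‖x‖) ^ m := by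
  rw [← Real.mul_rpow (by norm_num) (by linarith [norm_nonneg x])]
  refine Real.rpow_le_rpow (by linarith [norm_nonneg (x - y)]) ?_ hm
  linarith [norm_sub_le x y, norm_nonneg x]

/-- The growth condition `‖B x‖ ≤ c (1 + ‖x‖)^m` on a vector field `B`. -/
def HasPolyGrowth (c m : ℝ) (B : E → E) : Prop :=
  ∀ x, ‖B x‖ ≤ c * (1 + ‖x‖) ^ m

namespace HasPolyGrowth

variable {c m : ℝ} {B : E → E}

lemma nonneg (hB : HasPolyGrowth c m B) : 0 ≤ c := by
  simpa using (norm_nonneg _).trans (hB 0)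

lemma sub {c' : ℝ} {B' : E → E} (hB : HasPolyGrowth c m B) (hB' : HasPolyGrowth c' m B') :
    HasPolyGrowth (c + c') m (fun x => B x - B' x) := fun x => by
  rw [add_mul]
  exact (norm_sub_le _ _).trans (add_le_add (hB x) (hB' x))

lemma norm_sq_le (hB : HasPolyGrowth c m B) {p : ℝ} (hp : m * 2 ≤ p) (x : E) :
    ‖B x‖ ^ 2 ≤ c ^ 2 * (1 + ‖x‖) ^ p := by
  have hx : 0 ≤ ‖x‖ := norm_nonneg x
  calc ‖B x‖ ^ 2 ≤ (c * (1 + ‖x‖) ^ m) ^ 2 := by gcongr; exact hB x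
    _ = c ^ 2 * (1 + ‖x‖) ^ (m * 2) := by
        rw [mul_pow, ← Real.rpow_two ((1 + ‖x‖) ^ m), ← Real.rpow_mul (by positivity)]
    _ ≤ c ^ 2 * (1 + ‖x‖) ^ p := by gcongr; linarith

section Integral

variable [MeasurableSpace E] [OpensMeasurableSpace E] {M : Measure E}

lemma integrable_norm (hB : HasPolyGrowth c m B) (hBm : Measurable B)
    (hM : Integrable (fun x => (1 + ‖x‖) ^ m) M) : Integrable (fun x => ‖B x‖) M :=
  (hM.const_mul c).mono' hBm.norm.aestronglyMeasurable
    (.of_forall fun x => by rw [norm_norm]; exact hB x)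

lemma integrable_norm_sq (hB : HasPolyGrowth c m B) (hBm : Measurable B) {p : ℝ}
    (hp : m * 2 ≤ p) (hM : Integrable (fun x => (1 + ‖x‖) ^ p) M) :
    Integrable (fun x => ‖B x‖ ^ 2) M :=
  (hM.const_mul (c ^ 2)).mono' (hBm.norm.pow_const 2).aestronglyMeasurable
    (.of_forall fun x => by
      rw [Real.norm_of_nonneg (by positivity)]
      exact hB.norm_sq_le hp x)

lemma integral_norm_sq_le (hB : HasPolyGrowth c m B) (hBm : Measurable B) {p : ℝ}
    (hp : m * 2 ≤ p) (hM : Integrable (fun x => (1 + ‖x‖) ^ p) M) :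
    ∫ x, ‖B x‖ ^ 2 ∂M ≤ c ^ 2 * ∫ x, (1 + ‖x‖) ^ p ∂M := by
  rw [← integral_const_mul]
  exact integral_mono (hB.integrable_norm_sq hBm hp hM) (hM.const_mul _) (hB.norm_sq_le hp)

end Integral

variable [NormedSpace ℝ E]

lemma add_smul (hB : HasPolyGrowth c m B) (hm : 1 ≤ m) (κ : ℝ) :
    HasPolyGrowth (c + |κ|) m (fun x => B x + κ • x) := fun x => by
  have hx : ‖x‖ ≤ (1 + ‖x‖) ^ m :=
    (le_add_of_nonneg_left zero_le_one).trans
      (Real.self_le_rpow_of_one_le (le_add_of_nonneg_right (norm_nonneg x)) hm)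
  calc ‖B x + κ • x‖ ≤ ‖B x‖ + |κ| * ‖x‖ := by
        simpa only [norm_smul, Real.norm_eq_abs] using norm_add_le (B x) (κ • x)
    _ ≤ c * (1 + ‖x‖) ^ m + |κ| * (1 + ‖x‖) ^ m := by gcongr; exact hB x
    _ = (c + |κ|) * (1 + ‖x‖) ^ m := by ring

variable [FiniteDimensional ℝ E] [MeasurableSpace E] [BorelSpace E]

lemma locallyIntegrable (hB : HasPolyGrowth c m B) (hBm : Measurable B)
    (μ : Measure E) [IsLocallyFiniteMeasure μ] : LocallyIntegrable B μ :=
  have := FiniteDimensional.proper ℝ E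
  (continuous_const.mul (continuous_one_add_norm_rpow m)).locallyIntegrable.mono
    hBm.aestronglyMeasurable (.of_forall fun x => (hB x).trans (le_abs_self _))

lemma normed_convolution {μ : Measure E} [μ.IsAddHaarMeasure] (φ : ContDiffBump (0 : E))
    (hB : HasPolyGrowth c m B) (hm : 0 ≤ m) (hφ : φ.rOut ≤ 1) :
    HasPolyGrowth (c * 2 ^ m) m (φ.normed μ ⋆[ContinuousLinearMap.lsmul ℝ ℝ, μ] B) := by
  intro x
  have hle : ∀ y, ‖φ.normed μ y • B (x - y)‖ ≤
      φ.normed μ y * (c * 2 ^ m * (1 + ‖x‖) ^ m) := fun y => by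
    rw [norm_smul, Real.norm_of_nonneg (φ.nonneg_normed y)]
    by_cases hy : ‖y‖ ≤ 1
    · refine mul_le_mul_of_nonneg_left ((hB _).trans ?_) (φ.nonneg_normed y)
      rw [mul_assoc]
      exact mul_le_mul_of_nonneg_left (one_add_norm_sub_rpow_le hm x y hy) hB.nonneg
    · have h0 : φ.normed μ y = 0 := by
        rw [← Function.notMem_support, φ.support_normed_eq, mem_ball_zero_iff]
        linarith
      simp [h0]
  refine (norm_integral_le_of_norm_le (φ.integrable_normed.mul_const _) (.of_forall hle)).trans ?_
  rw [integral_mul_const, φ.integral_normed, one_mul]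

end HasPolyGrowth

lemma hasPolyGrowth_of_lipschitzWith {K : ℝ≥0} {B : E → E} (hB : LipschitzWith K B) {m : ℝ}
    (hm : 1 ≤ m) : HasPolyGrowth (‖B 0‖ + K) m B := fun x => by
  have hx : 0 ≤ ‖x‖ := norm_nonneg x
  have hlip : ‖B x - B 0‖ ≤ K * ‖x‖ := by simpa using hB.norm_sub_le x 0
  calc ‖B x‖ ≤ ‖B x - B 0‖ + ‖B 0‖ := norm_le_norm_sub_add _ _
    _ ≤ (‖B 0‖ + K) * (1 + ‖x‖) := by
        nlinarith [mul_nonneg (norm_nonneg (B 0)) hx, K.coe_nonneg]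
    _ ≤ (‖B 0‖ + K) * (1 + ‖x‖) ^ m := by
        gcongr
        exact Real.self_le_rpow_of_one_le (le_add_of_nonneg_right hx) hm

end PolyGrowth

section Dissipative

open scoped Convolution

variable {E : Type*} [NormedAddCommGroup E] [InnerProductSpace ℝ E]

/-- Dissipativity `⟪x - y, B x - B y⟫ ≤ -κ ‖x - y‖²` of a vector field `B`, with a rate `κ` of
either sign; `κ = 0` says that `-B` is monotone. -/
def IsDissipative (κ : ℝ) (B : E → E) : Prop :=
  ∀ x y, ⟪x - y, B x - B y⟫ ≤ -κ * ‖x - y‖ ^ 2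

namespace IsDissipative

variable {κ r : ℝ} {B J : E → E}

lemma add_smul (hB : IsDissipative κ B) (c : ℝ) :
    IsDissipative (κ - c) (fun x => B x + c • x) := fun x y => by
  have h : B x + c • x - (B y + c • y) = (B x - B y) + c • (x - y) := by module
  rw [h, inner_add_right, inner_smul_right, real_inner_self_eq_norm_sq]
  linarith [hB x y]

lemma norm_sub_le_norm_sub_smul (hB : IsDissipative 0 B) (hr : 0 ≤ r) (x y : E) :
    ‖x - y‖ ≤ ‖(x - r • B x) - (y - r • B y)‖ := by
  have h : (x - r • B x) - (y - r • B y) = (x - y) - r • (B x - B y) := by module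
  have hsq : ‖x - y‖ ^ 2 ≤ ⟪x - y, (x - r • B x) - (y - r • B y)⟫ := by
    rw [h, inner_sub_right, real_inner_self_eq_norm_sq, inner_smul_right]
    nlinarith [hB x y]
  have hcs := real_inner_le_norm (x - y) ((x - r • B x) - (y - r • B y))
  by_contra! hlt
  nlinarith [norm_nonneg (x - y), norm_nonneg ((x - r • B x) - (y - r • B y))]

/-! `B ∘ J` is the Yosida approximation of `B` when `J = (id - r B)⁻¹` is its resolvent. -/

lemma inner_comp_resolvent_le (hB : IsDissipative 0 B) (hJ : ∀ x, J x - r • B (J x) = x)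
    (x y : E) : ⟪x - y, B (J x) - B (J y)⟫ ≤ -r * ‖B (J x) - B (J y)‖ ^ 2 := by
  have h : x - y = (J x - J y) - r • (B (J x) - B (J y)) := by
    conv_lhs => rw [← hJ x, ← hJ y]
    module
  rw [h, inner_sub_left, real_inner_smul_left, real_inner_self_eq_norm_sq]
  linarith [hB (J x) (J y)]

lemma comp_resolvent (hB : IsDissipative 0 B) (hr : 0 ≤ r) (hJ : ∀ x, J x - r • B (J x) = x) :
    IsDissipative 0 (B ∘ J) := fun x y =>
  (hB.inner_comp_resolvent_le hJ x y).trans (by nlinarith [sq_nonneg ‖B (J x) - B (J y)‖])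

lemma lipschitzWith_comp_resolvent (hB : IsDissipative 0 B) {r : ℝ≥0} (hr : 0 < r)
    (hJ : ∀ x, J x - (r : ℝ) • B (J x) = x) : LipschitzWith r⁻¹ (B ∘ J) := by
  refine LipschitzWith.of_dist_le_mul fun x y => ?_
  have hr' : (0 : ℝ) < r := hr
  have hmono := hB.inner_comp_resolvent_le hJ x y
  have hcs := (abs_le.1 (abs_real_inner_le_norm (x - y) (B (J x) - B (J y)))).1
  rw [dist_eq_norm, dist_eq_norm, NNReal.coe_inv, inv_mul_eq_div, le_div_iff₀' hr',
    Function.comp_apply, Function.comp_apply]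
  by_contra! hlt
  have hpos : 0 < ‖B (J x) - B (J y)‖ :=
    pos_of_mul_pos_right ((norm_nonneg (x - y)).trans_lt hlt) hr'.le
  nlinarith [mul_lt_mul_of_pos_right hlt hpos]

lemma norm_comp_resolvent_le (hB : IsDissipative 0 B) (hr : 0 < r)
    (hJ : ∀ x, J x - r • B (J x) = x) (x : E) : ‖B (J x)‖ ≤ ‖B x‖ := by
  have hdiss := hB x (J x)
  have hx : x - J x = -(r • B (J x)) := sub_eq_of_eq_add (by rw [neg_add_eq_sub, hJ x])
  rw [hx, inner_neg_left, real_inner_smul_left, inner_sub_right, real_inner_self_eq_norm_sq,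
    neg_zero, zero_mul, neg_nonpos] at hdiss
  have hle := nonneg_of_mul_nonneg_right hdiss hr
  have hcs := real_inner_le_norm (B (J x)) (B x)
  by_contra! hlt
  nlinarith [norm_nonneg (B x)]

lemma norm_resolvent_sub_le (hB : IsDissipative 0 B) (hr : 0 < r)
    (hJ : ∀ x, J x - r • B (J x) = x) (x : E) : ‖J x - x‖ ≤ r * ‖B x‖ := by
  have hx : J x - x = r • B (J x) := by rw [sub_eq_iff_eq_add', ← sub_eq_iff_eq_add, hJ x]
  rw [hx, norm_smul, Real.norm_of_nonneg hr.le]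
  exact mul_le_mul_of_nonneg_left (hB.norm_comp_resolvent_le hr hJ x) hr.le

end IsDissipative

lemma antilipschitzWith_of_hasFDerivAt {E F : Type*} [NormedAddCommGroup E] [NormedSpace ℝ E]
    [NormedAddCommGroup F] [NormedSpace ℝ F] {f : E → F} {f' : E →L[ℝ] F} {K : ℝ≥0} {x : E}
    (hf : AntilipschitzWith K f) (hf' : HasFDerivAt f f' x) : AntilipschitzWith K f' := by
  refine f'.antilipschitz_of_bound fun v => ?_
  have hlim := ((hf'.hasLineDerivAt v).tendsto_slope_zero.norm).const_mul (K : ℝ)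
  refine ge_of_tendsto hlim (eventually_mem_nhdsWithin.mono fun t ht => ?_)
  have ht' : 0 < ‖t‖ := norm_pos_iff.2 ht
  have h := hf.le_mul_dist (x + t • v) x
  rw [dist_eq_norm, dist_eq_norm, add_sub_cancel_left, norm_smul] at h
  rw [norm_smul, norm_inv, mul_left_comm, inv_mul_eq_div, le_div_iff₀ ht']
  linarith

lemma surjective_of_contDiff_of_antilipschitzWith {E : Type*} [NormedAddCommGroup E]
    [NormedSpace ℝ E] [FiniteDimensional ℝ E] {F : E → E} {K : ℝ≥0}
    (hF : ContDiff ℝ 1 F) (hK : AntilipschitzWith K F) : Function.Surjective F := by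
  have hproper : IsProperMap F := by
    have := FiniteDimensional.proper ℝ E
    refine isProperMap_iff_tendsto_cocompact.2 ⟨hF.continuous, ?_⟩
    rw [← cobounded_eq_cocompact]
    exact hK.tendsto_cobounded
  have hopen : IsOpen (range F) := by
    refine isOpen_iff_mem_nhds.2 ?_
    rintro _ ⟨x, rfl⟩
    have := FiniteDimensional.complete ℝ E
    have hx : HasStrictFDerivAt F (fderiv ℝ F x) x := hF.contDiffAt.hasStrictFDerivAt (by simp)
    have hsurj : Function.Surjective (fderiv ℝ F x) := LinearMap.injective_iff_surjective.1
      (antilipschitzWith_of_hasFDerivAt hK hx.hasFDerivAt).injective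
    rw [← hx.map_nhds_eq_of_surj (LinearMap.range_eq_top.2 hsurj)]
    exact range_mem_map
  exact range_eq_univ.1 (IsClopen.eq_univ ⟨hproper.isClosedMap.isClosed_range, hopen⟩
    (range_nonempty F))

lemma IsDissipative.exists_resolvent [FiniteDimensional ℝ E] {B : E → E} (hB : IsDissipative 0 B)
    (hBc : ContDiff ℝ 1 B) {r : ℝ} (hr : 0 ≤ r) : ∃ J : E → E, ∀ x, J x - r • B (J x) = x := by
  have hsurj : Function.Surjective fun x => x - r • B x :=
    surjective_of_contDiff_of_antilipschitzWith (K := 1) (by fun_prop)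
      (AntilipschitzWith.of_le_mul_dist fun x y => by
        simpa [dist_eq_norm] using hB.norm_sub_le_norm_sub_smul hr x y)
  exact ⟨Function.surjInv hsurj, Function.surjInv_eq hsurj⟩

lemma IsDissipative.exists_lipschitzWith_seq [FiniteDimensional ℝ E] {κ : ℝ} {B : E → E}
    (hB : IsDissipative κ B) (hBc : ContDiff ℝ 1 B) :
    ∃ A : ℕ → E → E, (∀ n, ∃ K, LipschitzWith K (A n)) ∧ (∀ n, IsDissipative κ (A n)) ∧
      (∀ n x, ‖B x - A n x‖ ≤ 2 * ‖B x + κ • x‖) ∧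
      ∀ x, Tendsto (fun n => A n x) atTop (𝓝 (B x)) := by
  set B₀ : E → E := fun x => B x + κ • x with hB₀
  have hdiss : IsDissipative 0 B₀ := by simpa using hB.add_smul κ
  have hB₀c : ContDiff ℝ 1 B₀ := by fun_prop
  set r : ℕ → ℝ≥0 := fun n => 1 / ((n : ℝ≥0) + 1)
  have hr : ∀ n, 0 < r n := fun n => by positivity
  choose J hJ using fun n => hdiss.exists_resolvent hB₀c (r n).2
  have hBB₀ : ∀ x, B₀ x + (-κ) • x = B x := fun x => by simp only [hB₀]; module
  refine ⟨fun n x => B₀ (J n x) + (-κ) • x, fun n => ⟨_,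
    (hdiss.lipschitzWith_comp_resolvent (hr n) (hJ n)).add (lipschitzWith_smul (-κ))⟩,
    fun n => ?_, fun n x => ?_, fun x => ?_⟩
  · simpa using (hdiss.comp_resolvent (r n).2 (hJ n)).add_smul (-κ)
  · calc ‖B x - (B₀ (J n x) + (-κ) • x)‖ = ‖B₀ x - B₀ (J n x)‖ := by
          rw [← hBB₀ x, add_sub_add_right_eq_sub]
      _ ≤ ‖B₀ x‖ + ‖B₀ (J n x)‖ := norm_sub_le _ _
      _ ≤ 2 * ‖B₀ x‖ := by linarith [hdiss.norm_comp_resolvent_le (hr n) (hJ n) x]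
  · rw [← hBB₀ x]
    have hr0 : Tendsto (fun n => (r n : ℝ)) atTop (𝓝 0) := by
      simpa [r] using tendsto_one_div_add_atTop_nhds_zero_nat (𝕜 := ℝ)
    have hJx : Tendsto (fun n => J n x) atTop (𝓝 x) := tendsto_iff_norm_sub_tendsto_zero.2 <|
      squeeze_zero (fun _ => norm_nonneg _)
        (fun n => hdiss.norm_resolvent_sub_le (hr n) (hJ n) x)
        (by simpa using hr0.mul_const ‖B₀ x‖)
    exact ((hB₀c.continuous.tendsto x).comp hJx).add_const _

section Mollified
variable [FiniteDimensional ℝ E] [MeasurableSpace E] [BorelSpace E] {μ : Measure E}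
  [μ.IsAddHaarMeasure] (φ : ContDiffBump (0 : E)) {B : E → E}

lemma integrable_normed_smul_sub (hB : LocallyIntegrable B μ) (x : E) :
    Integrable (fun y => φ.normed μ y • B (x - y)) μ :=
  φ.hasCompactSupport_normed.convolutionExists_left (ContinuousLinearMap.lsmul ℝ ℝ)
    φ.continuous_normed hB x

lemma IsDissipative.normed_convolution {κ : ℝ} (hB : IsDissipative κ B)
    (hBl : LocallyIntegrable B μ) :
    IsDissipative κ (φ.normed μ ⋆[ContinuousLinearMap.lsmul ℝ ℝ, μ] B) := by
  intro x y
  have hx := integrable_normed_smul_sub φ hBl x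
  have hy := integrable_normed_smul_sub φ hBl y
  simp only [convolution_def, ContinuousLinearMap.lsmul_apply]
  have hxy : Integrable (fun z => φ.normed μ z • B (x - z) - φ.normed μ z • B (y - z)) μ :=
    hx.sub hy
  rw [← integral_sub hx hy, ← integral_inner hxy]
  calc ∫ z, ⟪x - y, φ.normed μ z • B (x - z) - φ.normed μ z • B (y - z)⟫ ∂μ
      ≤ ∫ z, φ.normed μ z * (-κ * ‖x - y‖ ^ 2) ∂μ := by
        refine integral_mono (hxy.const_inner _) (φ.integrable_normed.mul_const _)
          fun z => ?_
        beta_reduce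
        rw [← smul_sub, real_inner_smul_right]
        refine mul_le_mul_of_nonneg_left ?_ (φ.nonneg_normed z)
        simpa only [sub_sub_sub_cancel_right] using hB (x - z) (y - z)
    _ = -κ * ‖x - y‖ ^ 2 := by rw [integral_mul_const, φ.integral_normed, one_mul]

end Mollified

variable [FiniteDimensional ℝ E] [MeasurableSpace E] [BorelSpace E] {M : Measure E}
  {c κ m : ℝ} {B : E → E}

lemma IsDissipative.exists_lipschitzWith_of_contDiff (hB : IsDissipative κ B)
    (hgrow : HasPolyGrowth c m B) (hBc : ContDiff ℝ 1 B) (hm : 1 ≤ m)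
    (hM : Integrable (fun x => (1 + ‖x‖) ^ m) M) {η : ℝ} (hη : 0 < η) :
    ∃ (A : E → E) (K : ℝ≥0), LipschitzWith K A ∧ IsDissipative κ A ∧
      Integrable (fun x => ‖B x - A x‖) M ∧ ∫ x, ‖B x - A x‖ ∂M ≤ η := by
  obtain ⟨A, hAL, hAd, hAle, hAlim⟩ := hB.exists_lipschitzWith_seq hBc
  have hA : ∀ n, Continuous (A n) := fun n => (hAL n).elim fun _ h => h.continuous
  obtain ⟨n, hint, hn⟩ := exists_integral_norm_sub_le_of_tendsto
    hBc.continuous.aestronglyMeasurable (fun n => (hA n).aestronglyMeasurable)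
    ((hM.const_mul (c + |κ|)).const_mul 2)
    (fun n x => (hAle n x).trans (by gcongr; exact hgrow.add_smul hm κ x)) (.of_forall hAlim) hη
  obtain ⟨K, hK⟩ := hAL n
  exact ⟨A n, K, hK, hAd n, hint, hn⟩

lemma IsDissipative.exists_contDiff_of_absolutelyContinuous (hB : IsDissipative κ B)
    (hgrow : HasPolyGrowth c m B) (hBm : Measurable B) (hm : 0 ≤ m) {μ : Measure E}
    [μ.IsAddHaarMeasure] (hac : M ≪ μ) (hM : Integrable (fun x => (1 + ‖x‖) ^ m) M)
    {η : ℝ} (hη : 0 < η) :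
    ∃ A : E → E, ContDiff ℝ 1 A ∧ IsDissipative κ A ∧ HasPolyGrowth (c * 2 ^ m) m A ∧
      Integrable (fun x => ‖B x - A x‖) M ∧ ∫ x, ‖B x - A x‖ ∂M ≤ η := by
  have hBl : LocallyIntegrable B μ := hgrow.locallyIntegrable hBm μ
  set φ : ℕ → ContDiffBump (0 : E) := fun n =>
    ⟨1 / ((n : ℝ) + 1) / 2, 1 / ((n : ℝ) + 1), by positivity, half_lt_self (by positivity)⟩
  have hφ : ∀ n, (φ n).rOut ≤ 1 := fun n => div_le_one_of_le₀ (by simp) (by positivity)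
  have hA : ∀ n, ContDiff ℝ 1 ((φ n).normed μ ⋆[ContinuousLinearMap.lsmul ℝ ℝ, μ] B) := fun n =>
    (φ n).hasCompactSupport_normed.contDiff_convolution_left _ (φ n).contDiff_normed hBl
  have hgrowA := fun n => hgrow.normed_convolution (μ := μ) (φ n) hm (hφ n)
  have hlim := hac.ae_le (ContDiffBump.ae_convolution_tendsto_right_of_locallyIntegrable
    (φ := φ) (K := 2) tendsto_one_div_add_atTop_nhds_zero_nat
    (.of_forall fun n => (mul_div_cancel₀ _ two_ne_zero).ge) hBl)
  obtain ⟨n, hint, hn⟩ := exists_integral_norm_sub_le_of_tendsto hBm.aestronglyMeasurable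
    (fun n => (hA n).continuous.aestronglyMeasurable) (hM.const_mul (c + c * 2 ^ m))
    (fun n x => by
      rw [add_mul]
      exact (norm_sub_le _ _).trans (add_le_add (hgrow x) (hgrowA n x))) hlim hη
  exact ⟨_, hA n, hB.normed_convolution (φ n) hBl, hgrowA n, hint, hn⟩

lemma IsDissipative.exists_lipschitzWith_of_absolutelyContinuous (hB : IsDissipative κ B)
    (hgrow : HasPolyGrowth c m B) (hBm : Measurable B) (hm : 1 ≤ m) {μ : Measure E}
    [μ.IsAddHaarMeasure] (hac : M ≪ μ) (hM : Integrable (fun x => (1 + ‖x‖) ^ m) M)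
    {η : ℝ} (hη : 0 < η) :
    ∃ (A : E → E) (K : ℝ≥0), LipschitzWith K A ∧ IsDissipative κ A ∧
      Integrable (fun x => ‖B x - A x‖) M ∧ ∫ x, ‖B x - A x‖ ∂M ≤ η := by
  obtain ⟨B', hB'c, hB'd, hB'g, hint', hle'⟩ := hB.exists_contDiff_of_absolutelyContinuous
    hgrow hBm (zero_le_one.trans hm) hac hM (half_pos hη)
  obtain ⟨A, K, hAK, hAd, hint, hle⟩ :=
    hB'd.exists_lipschitzWith_of_contDiff hB'g hB'c hm hM (half_pos hη)
  have htri : ∀ x, ‖B x - A x‖ ≤ ‖B x - B' x‖ + ‖B' x - A x‖ := fun x =>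
    norm_sub_le_norm_sub_add_norm_sub _ _ _
  have hBA : Integrable (fun x => ‖B x - A x‖) M := (hint'.add hint).mono'
    (hBm.aestronglyMeasurable.sub hAK.continuous.aestronglyMeasurable).norm
    (.of_forall fun x => (norm_norm _).trans_le (htri x))
  refine ⟨A, K, hAK, hAd, hBA, (integral_mono hBA (hint'.add hint) htri).trans ?_⟩
  rw [integral_add' hint' hint]
  linarith

end Dissipative

/-! ### Measures whose distributional Laplacian is of first order -/

section RadialBump

variable {E : Type*} [NormedAddCommGroup E]

/-- A smooth radial bump supported in the unit ball. -/
def radialBump (y : E) : ℝ := expNegInvGlue (1 - ‖y‖ ^ 2)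

/-- The nonnegative kernel `k` such that `∇ radialBump (y) = -k(y) y`. -/
def radialBumpKernel (y : E) : ℝ := 2 * deriv expNegInvGlue (1 - ‖y‖ ^ 2)

lemma continuous_radialBumpKernel : Continuous (radialBumpKernel : E → ℝ) :=
  continuous_const.mul ((expNegInvGlue.contDiff.continuous_deriv le_rfl).comp (by fun_prop))

lemma radialBumpKernel_nonneg (y : E) : 0 ≤ radialBumpKernel y :=
  mul_nonneg zero_le_two expNegInvGlue.monotone.deriv_nonneg

lemma hasCompactSupport_radialBump [ProperSpace E] : HasCompactSupport (radialBump : E → ℝ) := by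
  refine .intro (isCompact_closedBall 0 1) fun y hy => expNegInvGlue.zero_of_nonpos ?_
  rw [mem_closedBall_zero_iff, not_le] at hy
  nlinarith

lemma hasCompactSupport_radialBumpKernel [ProperSpace E] :
    HasCompactSupport (radialBumpKernel : E → ℝ) := by
  refine .intro (isCompact_closedBall 0 1) fun y hy => ?_
  rw [mem_closedBall_zero_iff, not_le] at hy
  have heq : expNegInvGlue =ᶠ[𝓝 (1 - ‖y‖ ^ 2)] fun _ => 0 := by
    filter_upwards [gt_mem_nhds (show 1 - ‖y‖ ^ 2 < 0 by nlinarith)] with s hs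
    exact expNegInvGlue.zero_of_nonpos hs.le
  simp [radialBumpKernel, heq.deriv_eq]

variable [InnerProductSpace ℝ E]

lemma hasFDerivAt_comp_norm_sq {P : ℝ → ℝ} {P' : ℝ} {y : E} (hP : HasDerivAt P P' (‖y‖ ^ 2)) :
    HasFDerivAt (fun z : E => P (‖z‖ ^ 2)) ((2 * P') • innerSL ℝ y) y := by
  refine (hP.comp_hasFDerivAt y (hasStrictFDerivAt_norm_sq y).hasFDerivAt).congr_fderiv ?_
  ext v
  simp only [smul_apply, nsmul_eq_mul, smul_eq_mul, Nat.cast_ofNat]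
  ring

lemma contDiff_radialBump : ContDiff ℝ (⊤ : ℕ∞) (radialBump : E → ℝ) :=
  expNegInvGlue.contDiff.comp (contDiff_const.sub (contDiff_norm_sq ℝ))

lemma fderiv_radialBump (y v : E) :
    fderiv ℝ radialBump y v = -(radialBumpKernel y * ⟪y, v⟫) := by
  have hprofile : HasDerivAt (fun s : ℝ => expNegInvGlue (1 - s))
      (-deriv expNegInvGlue (1 - ‖y‖ ^ 2)) (‖y‖ ^ 2) := by
    have hdiff : Differentiable ℝ expNegInvGlue :=
      (expNegInvGlue.contDiff (n := 1)).differentiable (by simp)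
    simpa using! (hdiff _).hasDerivAt.comp (‖y‖ ^ 2) ((hasDerivAt_id (‖y‖ ^ 2)).const_sub 1)
  rw [show radialBump = fun z : E => expNegInvGlue (1 - ‖z‖ ^ 2) from rfl,
    (hasFDerivAt_comp_norm_sq hprofile).fderiv]
  simp [radialBumpKernel]

lemma integral_radialBumpKernel_pos [ProperSpace E] [Nontrivial E] [MeasurableSpace E]
    [BorelSpace E] (μ : Measure E) [IsFiniteMeasureOnCompacts μ] [μ.IsOpenPosMeasure] :
    0 < ∫ y : E, radialBumpKernel y ∂μ := by
  obtain ⟨y, hy⟩ : ∃ y : E, radialBumpKernel y ≠ 0 := by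
    by_contra! hzero
    have hderiv : ∀ y : E, fderiv ℝ radialBump y = 0 := fun y => by
      ext v
      simp [fderiv_radialBump, hzero]
    obtain ⟨e, he⟩ := exists_norm_eq E zero_le_one
    have hconst : radialBump (0 : E) = radialBump e :=
      is_const_of_fderiv_eq_zero (contDiff_radialBump.differentiable (by simp)) hderiv 0 e
    simp only [radialBump, norm_zero, he, ne_eq, OfNat.ofNat_ne_zero, not_false_eq_true, zero_pow,
      sub_zero, one_pow, sub_self, expNegInvGlue.zero] at hconst
    exact (expNegInvGlue.pos_of_pos one_pos).ne' hconst
  exact continuous_radialBumpKernel.integral_pos_of_hasCompactSupport_nonneg_nonzero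
    hasCompactSupport_radialBumpKernel radialBumpKernel_nonneg hy

end RadialBump

section ScaledAverage

variable {E : Type*} [NormedAddCommGroup E] [NormedSpace ℝ E] [MeasureSpace E]

/-- The average `∫ k(y) g(x - r y) dy` of `g` around `x` at scale `r`. -/
def scaledAverage (k g : E → ℝ) (r : ℝ) (x : E) : ℝ := ∫ y, k y * g (x - r • y)

lemma norm_scaledAverage_le {k g : E → ℝ} (hk : Integrable k) {c : ℝ} (hg : ∀ x, |g x| ≤ c)
    (r : ℝ) (x : E) : ‖scaledAverage k g r x‖ ≤ c * ∫ y, |k y| := by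
  rw [scaledAverage, ← integral_const_mul]
  refine norm_integral_le_of_norm_le (hk.abs.const_mul c) (.of_forall fun y => ?_)
  rw [norm_mul, mul_comm]
  exact mul_le_mul_of_nonneg_right (hg _) (norm_nonneg _)

lemma scaledAverage_zero (k g : E → ℝ) (x : E) :
    scaledAverage k g 0 x = (∫ y, k y) * g x := by
  simp only [scaledAverage, zero_smul, sub_zero, integral_mul_const]

variable [BorelSpace E]

lemma continuous_scaledAverage {k g : E → ℝ} (hk : Integrable k) (hg : Continuous g) {c : ℝ}
    (hgc : ∀ x, |g x| ≤ c) (r : ℝ) : Continuous (scaledAverage k g r) := by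
  refine continuous_of_dominated (bound := fun y => c * |k y|)
    (fun x => hk.aestronglyMeasurable.mul (hg.comp (by fun_prop)).aestronglyMeasurable)
    (fun x => .of_forall fun y => ?_)
    (hk.abs.const_mul c) (.of_forall fun y => continuous_const.mul (hg.comp (by fun_prop)))
  rw [norm_mul, mul_comm]
  exact mul_le_mul_of_nonneg_right (hgc _) (norm_nonneg _)

lemma integrable_mul_comp_sub_smul [IsFiniteMeasureOnCompacts (volume : Measure E)] {k g : E → ℝ}
    (hk : Continuous k) (hkc : HasCompactSupport k) (hg : Continuous g) (x : E) (r : ℝ) :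
    Integrable (fun y => k y * g (x - r • y)) :=
  (hk.mul (hg.comp (by fun_prop))).integrable_of_hasCompactSupport hkc.mul_right

lemma hasDerivAt_scaledAverage [IsFiniteMeasureOnCompacts (volume : Measure E)]
    {k g : E → ℝ} (hk : Continuous k) (hkc : HasCompactSupport k) (hg : ContDiff ℝ 1 g) {c : ℝ}
    (hgc : ∀ x, ‖fderiv ℝ g x‖ ≤ c) (x : E) (r : ℝ) :
    HasDerivAt (fun r => scaledAverage k g r x) (∫ y, k y * -(fderiv ℝ g (x - r • y) y)) r := by
  have hF' : Continuous fun y => k y * -(fderiv ℝ g (x - r • y) y) :=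
    hk.mul ((hg.continuous_fderiv_apply (by simp)).comp
      (by fun_prop : Continuous fun y : E => (x - r • y, y))).neg
  refine (hasDerivAt_integral_of_dominated_loc_of_deriv_le
    (F' := fun s y => k y * -(fderiv ℝ g (x - s • y) y)) (bound := fun y => |k y| * (c * ‖y‖))
    univ_mem (.of_forall fun r =>
      (integrable_mul_comp_sub_smul hk hkc hg.continuous x r).aestronglyMeasurable)
    (integrable_mul_comp_sub_smul hk hkc hg.continuous x r) hF'.aestronglyMeasurable
    (.of_forall fun y s _ => ?_)
    ((hk.abs.mul (continuous_const.mul continuous_norm)).integrable_of_hasCompactSupport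
      hkc.norm.mul_right)
    (.of_forall fun y s _ => ?_)).2
  · rw [norm_mul, norm_neg, Real.norm_eq_abs (k y)]
    gcongr
    exact (fderiv ℝ g (x - s • y)).le_of_opNorm_le (hgc _) y
  · have hline : HasDerivAt (fun s : ℝ => x - s • y) (-y) s := by
      simpa using ((hasDerivAt_id s).smul_const y).const_sub x
    simpa using ((hg.differentiable (by simp) (x - s • y)).hasFDerivAt.comp_hasDerivAt s
      hline).const_mul (k y)

end ScaledAverage

lemma fderiv_comp_sub_smul {E : Type*} [NormedAddCommGroup E] [NormedSpace ℝ E] {g : E → ℝ}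
    {x y : E} {r : ℝ} (hg : DifferentiableAt ℝ g (x - r • y)) (v : E) :
    fderiv ℝ (fun z => g (x - r • z)) y v = -(r * fderiv ℝ g (x - r • y) v) := by
  have hinner : HasFDerivAt (fun z : E => x - r • z) (-(r • ContinuousLinearMap.id ℝ E)) y :=
    ((hasFDerivAt_id y).const_smul r).const_sub x
  have hcomp : fderiv ℝ (fun z => g (x - r • z)) y = _ := (hg.hasFDerivAt.comp y hinner).fderiv
  rw [hcomp]
  simp

lemma IsTestFun.integral_fderiv_mul_comp_sub_smul {p h : Ed d → ℝ} (hp : IsTestFun p)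
    (hh : ContDiff ℝ 1 h) (x v : Ed d) (r : ℝ) :
    ∫ y, fderiv ℝ p y v * h (x - r • y) = r * ∫ y, p y * fderiv ℝ h (x - r • y) v := by
  have hhd : Differentiable ℝ h := hh.differentiable (by simp)
  have hderiv : ∀ y, fderiv ℝ (fun z => h (x - r • z)) y v = -(r * fderiv ℝ h (x - r • y) v) :=
    fun y => fderiv_comp_sub_smul (hhd _) v
  have hint : Integrable (fun y => p y * fderiv ℝ (fun z => h (x - r • z)) y v) := by
    simp_rw [hderiv, mul_neg, mul_left_comm (p _) r]
    exact ((integrable_mul_comp_sub_smul hp.continuous hp.2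
      ((hh.continuous_fderiv (by simp)).clm_apply continuous_const) x r).const_mul r).neg
  have hparts := integral_mul_fderiv_eq_neg_fderiv_mul_of_integrable
    (integrable_mul_comp_sub_smul (hp.fderiv_apply v).continuous (hp.fderiv_apply v).2
      hh.continuous x r) hint
    (integrable_mul_comp_sub_smul hp.continuous hp.2 hh.continuous x r)
    (fun y _ => hp.differentiable y) (fun y _ => (hhd _).comp y (by fun_prop))
  simp_rw [hderiv, mul_neg, mul_left_comm (p _) r, integral_neg, integral_const_mul,
    neg_inj] at hparts
  exact hparts.symm

lemma fderiv_apply_eq_sum (L : Ed d →L[ℝ] ℝ) (v : Ed d) :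
    L v = ∑ i, v i * L (EuclideanSpace.single i 1) := by
  conv_lhs => rw [← (EuclideanSpace.basisFun (Fin d) ℝ).sum_repr v]
  simp

-- `∂_r g(x - r y) = -∇g(x - r y) · y`, and `k(y) y = -∇p(y)` allows one integration by parts.
lemma hasDerivAt_scaledAverage_of_fderiv_eq {p k g : Ed d → ℝ} (hp : IsTestFun p)
    (hk : Continuous k) (hkc : HasCompactSupport k)
    (hpk : ∀ y v, fderiv ℝ p y v = -(k y * ⟪y, v⟫)) (hg : IsTestFun g) (x : Ed d) (r : ℝ) :
    HasDerivAt (fun r => scaledAverage k g r x) (r * scaledAverage p (lap g) r x) r := by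
  obtain ⟨c, hc⟩ := hg.exists_norm_fderiv_le
  refine (hasDerivAt_scaledAverage hk hkc (hg.1.of_le (by simp)) hc x r).congr_deriv ?_
  let e : Fin d → Ed d := fun i => EuclideanSpace.single i 1
  have hexpand : ∀ y, k y * -(fderiv ℝ g (x - r • y) y) =
      ∑ i, fderiv ℝ p y (e i) * fderiv ℝ g (x - r • y) (e i) := by
    intro y
    rw [fderiv_apply_eq_sum _ y, ← Finset.sum_neg_distrib, Finset.mul_sum]
    refine Finset.sum_congr rfl fun i _ => ?_
    rw [hpk, EuclideanSpace.inner_single_right]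
    simp only [conj_trivial, one_mul, e]
    ring
  calc ∫ y, k y * -(fderiv ℝ g (x - r • y) y)
      = ∑ i, ∫ y, fderiv ℝ p y (e i) * fderiv ℝ g (x - r • y) (e i) := by
        simp_rw [hexpand]
        exact integral_finsetSum _ fun i _ => integrable_mul_comp_sub_smul
          (hp.fderiv_apply _).continuous (hp.fderiv_apply _).2 (hg.fderiv_apply _).continuous x r
    _ = ∑ i, r * ∫ y, p y * hess2 g (x - r • y) i i := by
        simp_rw [hess2_eq_fderiv_fderiv hg.contDiff_two]
        exact Finset.sum_congr rfl fun i _ => hp.integral_fderiv_mul_comp_sub_smul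
          ((hg.fderiv_apply _).1.of_le (by simp)) x _ r
    _ = r * scaledAverage p (lap g) r x := by
        have hlap : ∀ y, p y * lap g (x - r • y) = ∑ i, p y * hess2 g (x - r • y) i i :=
          fun y => Finset.mul_sum ..
        simp_rw [scaledAverage, hlap]
        rw [← Finset.mul_sum, integral_finsetSum _ fun i _ =>
          integrable_mul_comp_sub_smul hp.continuous hp.2 (hg.hess2 i i).continuous x r]

lemma IsTestFun.comp_smul {p : Ed d → ℝ} (hp : IsTestFun p) {r : ℝ} (hr : r ≠ 0) :
    IsTestFun (fun y => p (r • y)) :=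
  ⟨hp.1.comp (contDiff_const_smul r), hp.2.comp_homeomorph (Homeomorph.smulOfNeZero r hr)⟩

lemma integral_comp_inv_smul (f : Ed d → ℝ) {r : ℝ} (hr : 0 < r) :
    ∫ y, f (r⁻¹ • y) = r ^ d * ∫ y, f y := by
  rw [Measure.integral_comp_inv_smul_of_nonneg _ _ hr.le, finrank_euclideanSpace_fin, smul_eq_mul]

lemma scaledAverage_eq_moll (p g : Ed d → ℝ) {r : ℝ} (hr : 0 < r) (x : Ed d) :
    scaledAverage p g r x = (r ^ d)⁻¹ * moll (fun y => p (r⁻¹ • y)) g x := by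
  rw [moll_apply, scaledAverage, eq_inv_mul_iff_mul_eq₀ (by positivity),
    ← integral_comp_inv_smul _ hr]
  simp only [smul_smul, mul_inv_cancel₀ hr.ne', one_smul, mul_comm]

/-- `|∫ Δφ dM| ≤ K (‖φ‖_∞ + ‖∇φ‖_∞)` for all test functions `φ`. -/
def HasFirstOrderLap (K : ℝ) (M : Measure (Ed d)) : Prop :=
  ∀ φ : Ed d → ℝ, IsTestFun φ → ∀ A₀ A₁ : ℝ, 0 ≤ A₀ → 0 ≤ A₁ → (∀ x, |φ x| ≤ A₀) →
    (∀ x, ‖fderiv ℝ φ x‖ ≤ A₁) → |∫ x, lap φ x ∂M| ≤ K * (A₀ + A₁)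

namespace HasFirstOrderLap

variable {M : Measure (Ed d)} {K : ℝ}

lemma nonneg (h : HasFirstOrderLap K M) : 0 ≤ K := by
  have hzero : IsTestFun (0 : Ed d → ℝ) := ⟨contDiff_const, .zero⟩
  have := h 0 hzero 1 0 zero_le_one le_rfl (by simp) (by simp)
  linarith [abs_nonneg (∫ x, lap 0 x ∂M)]

lemma abs_integral_scaledAverage_lap_le (h : HasFirstOrderLap K M) {p g : Ed d → ℝ}
    (hp : IsTestFun p) (hg : IsTestFun g) (hg1 : ∀ x, |g x| ≤ 1) {r : ℝ} (hr : 0 ≤ r)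
    (hr1 : r ≤ 1) :
    |∫ x, r * scaledAverage p (lap g) r x ∂M| ≤ K * ((∫ y, |p y|) + ∫ y, ‖fderiv ℝ p y‖) := by
  have hK := h.nonneg
  have hp0 : 0 ≤ ∫ y, |p y| := integral_nonneg fun _ => abs_nonneg _
  have hp1 : 0 ≤ ∫ y, ‖fderiv ℝ p y‖ := integral_nonneg fun _ => norm_nonneg _
  rcases hr.eq_or_lt with rfl | hr
  · simp only [zero_mul, integral_zero, abs_zero]
    positivity
  set ψ : Ed d → ℝ := fun y => p (r⁻¹ • y)
  have hψ : IsTestFun ψ := hp.comp_smul (inv_ne_zero hr.ne')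
  have hψ0 : ∫ y, |ψ y| = r ^ d * ∫ y, |p y| := integral_comp_inv_smul (fun y => |p y|) hr
  have hψ1 : ∫ y, ‖fderiv ℝ ψ y‖ = r⁻¹ * (r ^ d * ∫ y, ‖fderiv ℝ p y‖) := by
    simp only [ψ, fderiv_comp_smul, norm_smul, norm_inv, Real.norm_of_nonneg hr.le,
      integral_const_mul, integral_comp_inv_smul (fun y => ‖fderiv ℝ p y‖) hr]
  have hlap : ∀ x, scaledAverage p (lap g) r x = (r ^ d)⁻¹ * lap (moll ψ g) x := fun x => by
    rw [scaledAverage_eq_moll _ _ hr, moll_comm ψ g, lap_moll hg hψ.continuous, moll_comm]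
  have hmoll := h (moll ψ g) (isTestFun_moll hψ hg.continuous hg.2) (1 * ∫ y, |ψ y|)
    (1 * ∫ y, ‖fderiv ℝ ψ y‖) (by positivity) (by positivity)
    (abs_moll_le (hψ.integrable volume) hg1) (norm_fderiv_moll_le hψ hg.continuous hg1)
  simp_rw [hlap, ← mul_assoc]
  rw [integral_const_mul, abs_mul, abs_of_pos (by positivity)]
  calc r * (r ^ d)⁻¹ * |∫ x, lap (moll ψ g) x ∂M|
      ≤ r * (r ^ d)⁻¹ * (K * (1 * (∫ y, |ψ y|) + 1 * ∫ y, ‖fderiv ℝ ψ y‖)) := by gcongr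
    _ = K * (r * (∫ y, |p y|) + ∫ y, ‖fderiv ℝ p y‖) := by
        rw [hψ0, hψ1]
        field_simp
    _ ≤ K * ((∫ y, |p y|) + ∫ y, ‖fderiv ℝ p y‖) := by
        gcongr
        exact mul_le_of_le_one_left hp0 hr1

end HasFirstOrderLap

lemma hasDerivAt_integral_scaledAverage {M : Measure (Ed d)} [IsFiniteMeasure M]
    {p k g : Ed d → ℝ} (hp : IsTestFun p) (hk : Continuous k) (hkc : HasCompactSupport k)
    (hpk : ∀ y v, fderiv ℝ p y v = -(k y * ⟪y, v⟫)) (hg : IsTestFun g) (r : ℝ) :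
    HasDerivAt (fun r => ∫ x, scaledAverage k g r x ∂M)
      (∫ x, r * scaledAverage p (lap g) r x ∂M) r := by
  obtain ⟨c, -, hc⟩ := hg.exists_abs_le
  obtain ⟨l, -, hl⟩ := hg.lap.exists_abs_le
  have hki : Integrable k := hk.integrable_of_hasCompactSupport hkc
  have hpi : Integrable p := hp.integrable volume
  have hmeas : ∀ s, AEStronglyMeasurable (scaledAverage k g s) M := fun s =>
    (continuous_scaledAverage hki hg.continuous hc s).aestronglyMeasurable
  refine (hasDerivAt_integral_of_dominated_loc_of_deriv_le (s := ball r 1)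
    (F' := fun s x => s * scaledAverage p (lap g) s x)
    (bound := fun _ => (|r| + 1) * (l * ∫ y, |p y|)) (ball_mem_nhds _ one_pos) (.of_forall hmeas)
    (Integrable.of_bound (hmeas r) _ (.of_forall (norm_scaledAverage_le hki hc r)))
    (continuous_const.mul
      (continuous_scaledAverage hpi hg.lap.continuous hl r)).aestronglyMeasurable
    (.of_forall fun x s hs => ?_) (integrable_const _)
    (.of_forall fun x s _ => hasDerivAt_scaledAverage_of_fderiv_eq hp hk hkc hpk hg x s)).2
  rw [norm_mul]
  refine mul_le_mul ?_ (norm_scaledAverage_le hpi hl s x) (norm_nonneg _) (by positivity)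
  rw [mem_ball_iff_norm] at hs
  rw [← Real.norm_eq_abs r]
  linarith [norm_le_norm_add_norm_sub' s r]

lemma scaledAverage_le {k g : Ed d → ℝ} (hk : Continuous k) (hkc : HasCompactSupport k) {c : ℝ}
    (hkb : ∀ y, ‖k y‖ ≤ c) (hg : IsTestFun g) (hg0 : ∀ x, 0 ≤ g x) {r : ℝ} (hr : 0 < r)
    (x : Ed d) : scaledAverage k g r x ≤ c * ((r ^ d)⁻¹ * ∫ x, g x) := by
  have hgx : IsTestFun (fun y => g (x - y)) :=
    ⟨hg.1.comp (contDiff_const.sub contDiff_id), hg.2.comp_homeomorph (Homeomorph.subLeft x)⟩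
  calc scaledAverage k g r x ≤ ∫ y, c * g (x - r • y) :=
        integral_mono (integrable_mul_comp_sub_smul hk hkc hg.continuous x r)
          (((hgx.comp_smul hr.ne').integrable volume).const_mul c)
          fun y => mul_le_mul_of_nonneg_right ((le_abs_self _).trans (hkb y)) (hg0 _)
    _ = c * ((r ^ d)⁻¹ * ∫ x, g x) := by
        rw [integral_const_mul, Measure.integral_comp_smul_of_nonneg volume (fun y => g (x - y))
          r (hR := hr.le), finrank_euclideanSpace_fin, smul_eq_mul, integral_sub_left_eq_self]

namespace HasFirstOrderLap

variable {M : Measure (Ed d)} {K : ℝ}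

lemma exists_integral_le [IsFiniteMeasure M] (h : HasFirstOrderLap K M) (hd : 0 < d) :
    ∃ C, 0 ≤ C ∧ ∀ g : Ed d → ℝ, IsTestFun g → (∀ x, 0 ≤ g x) → (∀ x, g x ≤ 1) →
      ∀ r : ℝ, 0 < r → r ≤ 1 → ∫ x, g x ∂M ≤ C * (r + (r ^ d)⁻¹ * ∫ x, g x) := by
  have : Nonempty (Fin d) := ⟨⟨0, hd⟩⟩
  let p : Ed d → ℝ := radialBump
  let k : Ed d → ℝ := radialBumpKernel
  have hp : IsTestFun p := ⟨contDiff_radialBump, hasCompactSupport_radialBump⟩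
  have hk : Continuous k := continuous_radialBumpKernel
  have hkc : HasCompactSupport k := hasCompactSupport_radialBumpKernel
  have hki : Integrable k := hk.integrable_of_hasCompactSupport hkc
  obtain ⟨B, hB⟩ := hkc.exists_bound_of_continuous hk
  set I := ∫ y, k y
  have hI : 0 < I := integral_radialBumpKernel_pos volume
  set A := K * ((∫ y, |p y|) + ∫ y, ‖fderiv ℝ p y‖)
  have hA : 0 ≤ A := mul_nonneg h.nonneg (add_nonneg (integral_nonneg fun _ => abs_nonneg _)
    (integral_nonneg fun _ => norm_nonneg _))
  have hB0 : 0 ≤ B := (norm_nonneg _).trans (hB 0)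
  refine ⟨I⁻¹ * (A + B * M.real univ), by positivity, fun g hg hg0 hg1 r hr hr1 => ?_⟩
  have hgabs : ∀ x, |g x| ≤ 1 := fun x => abs_le.2 ⟨by linarith [hg0 x], hg1 x⟩
  have hdiff : ‖(∫ x, scaledAverage k g r x ∂M) - ∫ x, scaledAverage k g 0 x ∂M‖ ≤ A * (r - 0) :=
    norm_image_sub_le_of_norm_deriv_le_segment' (fun s _ =>
      (hasDerivAt_integral_scaledAverage hp hk hkc fderiv_radialBump hg s).hasDerivWithinAt)
      (fun s hs => h.abs_integral_scaledAverage_lap_le hp hg hgabs hs.1 (hs.2.le.trans hr1)) r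
      (right_mem_Icc.2 hr.le)
  have hzero : ∫ x, scaledAverage k g 0 x ∂M = I * ∫ x, g x ∂M := by
    simp_rw [scaledAverage_zero, integral_const_mul, I]
  have hscale : ∫ x, scaledAverage k g r x ∂M ≤ M.real univ * (B * ((r ^ d)⁻¹ * ∫ x, g x)) := by
    refine (integral_mono (Integrable.of_bound (continuous_scaledAverage hki hg.continuous hgabs
      r).aestronglyMeasurable _ (.of_forall (norm_scaledAverage_le hki hgabs r)))
      (integrable_const _) (scaledAverage_le hk hkc hB hg hg0 hr)).trans_eq ?_
    rw [integral_const, smul_eq_mul]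
  rw [hzero, sub_zero, Real.norm_eq_abs] at hdiff
  rw [mul_assoc, le_inv_mul_iff₀ hI]
  have hgI : 0 ≤ (r ^ d)⁻¹ * ∫ x, g x := mul_nonneg (by positivity) (integral_nonneg hg0)
  have hcross : 0 ≤ B * M.real univ * r + A * ((r ^ d)⁻¹ * ∫ x, g x) := by positivity
  linarith [(abs_le.1 hdiff).1]

lemma measureReal_eq_zero_of_isCompact [IsFiniteMeasure M] (h : HasFirstOrderLap K M) (hd : 0 < d)
    {N : Set (Ed d)} (hN : IsCompact N) (hN0 : volume N = 0) : M.real N = 0 := by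
  obtain ⟨C, hC, hCg⟩ := h.exists_integral_le hd
  have hle : ∀ r : ℝ, 0 < r → r ≤ 1 → M.real N ≤ C * (r + r) := by
    intro r hr hr1
    have hpos : (0 : ℝ) < r ^ (d + 1) := by positivity
    obtain ⟨U, hNU, hUo, hU⟩ := N.exists_isOpen_lt_of_lt (μ := volume)
      (ENNReal.ofReal (r ^ (d + 1))) (by rw [hN0]; simpa using hpos)
    obtain ⟨g, hg, hg0, hg1, hMg, hgU⟩ := exists_isTestFun_measureReal_le_integral_le hN hUo hNU
    have hvol : (r ^ d)⁻¹ * ∫ x, g x ≤ r := by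
      rw [inv_mul_le_iff₀ (by positivity), ← pow_succ]
      exact (hgU volume hU.ne_top).trans (ENNReal.toReal_le_of_le_ofReal hpos.le hU.le)
    exact (hMg M).trans ((hCg g hg hg0 hg1 r hr hr1).trans (by gcongr))
  have hlim : Tendsto (fun r : ℝ => C * (r + r)) (𝓝[>] 0) (𝓝 0) :=
    tendsto_nhdsWithin_of_tendsto_nhds (Continuous.tendsto' (by fun_prop) _ _ (by simp))
  refine le_antisymm (ge_of_tendsto hlim ?_) measureReal_nonneg
  filter_upwards [Ioc_mem_nhdsGT one_pos] with r hr using hle r hr.1 hr.2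

theorem absolutelyContinuous [IsFiniteMeasure M] (h : HasFirstOrderLap K M) (hd : 0 < d) :
    M ≪ volume := by
  refine Measure.AbsolutelyContinuous.mk fun s hs hs0 => ?_
  rw [hs.measure_eq_iSup_isCompact]
  simp only [ENNReal.iSup_eq_zero]
  exact fun N hNs hN => (measureReal_eq_zero_iff).1
    (h.measureReal_eq_zero_of_isCompact hd hN (measure_mono_null hNs hs0))

end HasFirstOrderLap

/-! ### Truncated Lyapunov functions -/

lemma LopI_comp {T T' : ℝ → ℝ} {T'' : ℝ} {f : Ed d → ℝ} {x : Ed d} (hf : ContDiff ℝ 2 f)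
    (hTf : ContDiff ℝ 2 fun y => T (f y)) (hT : ∀ y, HasDerivAt T (T' (f y)) (f y))
    (hT' : HasDerivAt T' T'' (f x)) (B : Ed d → Ed d) :
    LopI B (fun y => T (f y)) x =
      T' (f x) * LopI B f x + T'' * ∑ i, fderiv ℝ f x (EuclideanSpace.single i 1) ^ 2 := by
  have hfderiv : ∀ y, HasFDerivAt f (fderiv ℝ f y) y := fun y =>
    (hf.differentiable two_ne_zero y).hasFDerivAt
  have hcomp : ∀ y, fderiv ℝ (fun y => T (f y)) y = T' (f y) • fderiv ℝ f y := fun y =>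
    ((hT y).comp_hasFDerivAt y (hfderiv y)).fderiv
  have hhess : ∀ i, hess2 (fun y => T (f y)) x i i =
      T' (f x) * hess2 f x i i + T'' * fderiv ℝ f x (EuclideanSpace.single i 1) ^ 2 := by
    intro i
    have hpartial : HasFDerivAt (fun y => fderiv ℝ f y (EuclideanSpace.single i 1)) _ x :=
      ((hf.fderiv_right (m := 1) le_rfl).clm_apply contDiff_const).differentiable one_ne_zero x
        |>.hasFDerivAt
    rw [hess2_eq_fderiv_fderiv hTf, hess2_eq_fderiv_fderiv hf]
    simp only [hcomp, smul_apply, smul_eq_mul]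
    have hT'f : HasFDerivAt (fun y => T' (f y)) (T'' • fderiv ℝ f x) x :=
      hT'.comp_hasFDerivAt x (hfderiv x)
    rw [(hT'f.fun_mul hpartial).fderiv]
    simp only [add_apply, smul_apply, smul_eq_mul]
    ring
  rw [LopI_eq, LopI_eq, lap, lap, hcomp]
  simp only [hhess, Finset.sum_add_distrib, ← Finset.mul_sum, smul_apply, smul_eq_mul]
  ring

lemma fderiv_one_add_norm_sq (x v : Ed d) :
    fderiv ℝ (fun y : Ed d => 1 + ‖y‖ ^ 2) x v = 2 * ⟪x, v⟫ := by
  rw [fderiv_const_add, fderiv_norm_sq]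
  simp

lemma lap_one_add_norm_sq (x : Ed d) : lap (fun y : Ed d => 1 + ‖y‖ ^ 2) x = 2 * d := by
  have hhess : ∀ i, hess2 (fun y : Ed d => 1 + ‖y‖ ^ 2) x i i = 2 := by
    intro i
    rw [hess2_eq_fderiv_fderiv (contDiff_const.add (contDiff_norm_sq ℝ))]
    simp only [fderiv_one_add_norm_sq, EuclideanSpace.inner_single_right]
    have hproj : HasFDerivAt (fun y : Ed d => 2 * y i)
        ((2 : ℝ) • EuclideanSpace.proj (𝕜 := ℝ) i) x :=
      (EuclideanSpace.proj (𝕜 := ℝ) i).hasFDerivAt.const_mul 2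
    simp [hproj.fderiv]
  simp [lap, hhess, mul_comm]

lemma contDiff_one_add_norm_sq_rpow (q : ℝ) :
    ContDiff ℝ (⊤ : ℕ∞) fun x : Ed d => (1 + ‖x‖ ^ 2) ^ q :=
  (contDiff_const.add (contDiff_norm_sq ℝ)).rpow_const_of_ne fun x => by positivity

lemma LopI_one_add_norm_sq_rpow (q : ℝ) (B : Ed d → Ed d) (x : Ed d) :
    LopI B (fun y => (1 + ‖y‖ ^ 2) ^ q) x =
      q * (1 + ‖x‖ ^ 2) ^ (q - 1) * (2 * d + 2 * ⟪x, B x⟫) +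
        q * ((q - 1) * (1 + ‖x‖ ^ 2) ^ (q - 1 - 1)) * (4 * ‖x‖ ^ 2) := by
  have hrpow : ∀ (e : ℝ) (y : Ed d), HasDerivAt (fun s : ℝ => s ^ e)
      (e * (1 + ‖y‖ ^ 2) ^ (e - 1)) (1 + ‖y‖ ^ 2) := fun e y =>
    Real.hasDerivAt_rpow_const (Or.inl (by positivity))
  rw [LopI_comp (T := fun s => s ^ q) (T' := fun s => q * s ^ (q - 1))
    (contDiff_const.add (contDiff_norm_sq ℝ))
    (contDiff_infty.1 (contDiff_one_add_norm_sq_rpow q) 2) (hrpow q)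
    ((hrpow (q - 1) x).const_mul q) B, LopI_eq, lap_one_add_norm_sq]
  simp only [fderiv_one_add_norm_sq, mul_pow, ← Finset.mul_sum, EuclideanSpace.inner_single_right]
  norm_num [EuclideanSpace.norm_sq_eq]

lemma one_add_rpow_mul_sub_le {e κ A r : ℝ} (he : 0 ≤ e) (hκ : 0 < κ) (hA : 0 ≤ A) (hr : 0 ≤ r) :
    (1 + r) ^ e * (A - κ * r) ≤ (1 + A / κ) ^ e * A := by
  rcases le_total r (A / κ) with h | h
  · have hsub : 0 ≤ A - κ * r := by rw [le_div_iff₀ hκ] at h; linarith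
    have hκr : 0 ≤ κ * r := by positivity
    gcongr
    linarith
  · have hsub : A - κ * r ≤ 0 := by rw [div_le_iff₀ hκ] at h; linarith
    exact (mul_nonpos_of_nonneg_of_nonpos (by positivity) hsub).trans (by positivity)

lemma LopI_one_add_norm_sq_rpow_le {q κ c A : ℝ} (hq : 1 ≤ q) (hκ : 0 < κ)
    (hA : 2 * d + c ^ 2 / κ + 4 * (q - 1) ≤ A) {B : Ed d → Ed d} {x : Ed d}
    (hB : ⟪x, B x⟫ ≤ -κ * ‖x‖ ^ 2 + c * ‖x‖) :
    LopI B (fun y => (1 + ‖y‖ ^ 2) ^ q) x ≤ q * ((1 + A / κ) ^ (q - 1) * A) := by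
  have hq1 : 0 ≤ q - 1 := sub_nonneg.2 hq
  have hA0 : 0 ≤ A := le_trans (by positivity) hA
  have hpow : (1 + ‖x‖ ^ 2) ^ (q - 1 - 1) * ‖x‖ ^ 2 ≤ (1 + ‖x‖ ^ 2) ^ (q - 1) := by
    rw [Real.rpow_sub_one (by positivity) (q - 1), div_mul_eq_mul_div, div_le_iff₀ (by positivity)]
    gcongr
    linarith
  have hdrift : 2 * ⟪x, B x⟫ ≤ c ^ 2 / κ - κ * ‖x‖ ^ 2 := by
    have hsq : 0 ≤ (κ * ‖x‖ - c) ^ 2 / κ := by positivity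
    have hexpand : (κ * ‖x‖ - c) ^ 2 / κ = κ * ‖x‖ ^ 2 + c ^ 2 / κ - 2 * c * ‖x‖ := by
      field_simp
      ring
    linarith
  rw [LopI_one_add_norm_sq_rpow]
  calc _ = q * ((1 + ‖x‖ ^ 2) ^ (q - 1) * (2 * d + 2 * ⟪x, B x⟫) +
          4 * (q - 1) * ((1 + ‖x‖ ^ 2) ^ (q - 1 - 1) * ‖x‖ ^ 2)) := by ring
    _ ≤ q * ((1 + ‖x‖ ^ 2) ^ (q - 1) * (2 * d + (c ^ 2 / κ - κ * ‖x‖ ^ 2)) +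
          4 * (q - 1) * (1 + ‖x‖ ^ 2) ^ (q - 1)) := by gcongr
    _ = q * ((1 + ‖x‖ ^ 2) ^ (q - 1) *
          (2 * d + c ^ 2 / κ + 4 * (q - 1) - κ * ‖x‖ ^ 2)) := by ring
    _ ≤ q * ((1 + ‖x‖ ^ 2) ^ (q - 1) * (A - κ * ‖x‖ ^ 2)) := by gcongr
    _ ≤ q * ((1 + A / κ) ^ (q - 1) * A) := by
        gcongr q * ?_
        exact one_add_rpow_mul_sub_le hq1 hκ hA0 (by positivity)

/-- A smooth cutoff on the half-line `[0, ∞)`, equal to `1` up to `N` and to `0` from `2 * N` on. -/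
def truncWeight (N u : ℝ) : ℝ := Real.smoothTransition (2 - u / N)

/-- The primitive of `truncWeight N`: a smooth concave truncation of the identity of `[0, ∞)`,
exact up to `N` and constant from `2 * N` on. -/
def truncProfile (N s : ℝ) : ℝ := ∫ u in (0 : ℝ)..s, truncWeight N u

lemma contDiff_truncWeight (N : ℝ) : ContDiff ℝ (⊤ : ℕ∞) (truncWeight N) :=
  Real.smoothTransition.contDiff.comp (by fun_prop)

lemma truncWeight_nonneg (N u : ℝ) : 0 ≤ truncWeight N u := Real.smoothTransition.nonneg _

lemma truncWeight_le_one (N u : ℝ) : truncWeight N u ≤ 1 := Real.smoothTransition.le_one _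

lemma deriv_truncWeight_nonpos {N : ℝ} (hN : 0 < N) (u : ℝ) : deriv (truncWeight N) u ≤ 0 := by
  refine Antitone.deriv_nonpos fun u v huv => Real.smoothTransition.monotone ?_
  gcongr

lemma intervalIntegrable_truncWeight (N a b : ℝ) : IntervalIntegrable (truncWeight N) volume a b :=
  (contDiff_truncWeight N).continuous.intervalIntegrable a b

lemma hasDerivAt_truncProfile (N s : ℝ) : HasDerivAt (truncProfile N) (truncWeight N s) s :=
  ((contDiff_truncWeight N).continuous.integral_hasStrictDerivAt 0 s).hasDerivAt

lemma contDiff_truncProfile (N : ℝ) : ContDiff ℝ (⊤ : ℕ∞) (truncProfile N) := by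
  rw [contDiff_infty_iff_deriv, funext fun s => (hasDerivAt_truncProfile N s).deriv]
  exact ⟨fun s => (hasDerivAt_truncProfile N s).differentiableAt, contDiff_truncWeight N⟩

lemma truncProfile_nonneg (N : ℝ) {s : ℝ} (hs : 0 ≤ s) : 0 ≤ truncProfile N s :=
  intervalIntegral.integral_nonneg hs fun _ _ => truncWeight_nonneg N _

lemma truncProfile_le (N : ℝ) {s : ℝ} (hs : 0 ≤ s) : truncProfile N s ≤ s := by
  simpa [truncProfile] using! intervalIntegral.integral_mono_on hs
    (intervalIntegrable_truncWeight N 0 s) (intervalIntegrable_const (c := (1 : ℝ)))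
    fun u _ => truncWeight_le_one N u

lemma truncProfile_of_le {N s : ℝ} (hN : 0 < N) (hs0 : 0 ≤ s) (hs : s ≤ N) :
    truncProfile N s = s := by
  have hone : EqOn (truncWeight N) (fun _ => (1 : ℝ)) (uIcc 0 s) := by
    intro u hu
    rw [uIcc_of_le hs0] at hu
    have : u / N ≤ 1 := (div_le_one hN).2 (hu.2.trans hs)
    exact Real.smoothTransition.one_of_one_le (by linarith)
  simp [truncProfile, intervalIntegral.integral_congr hone]

lemma truncProfile_of_two_mul_le {N s : ℝ} (hN : 0 < N) (hs : 2 * N ≤ s) :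
    truncProfile N s = truncProfile N (2 * N) := by
  have hzero : EqOn (truncWeight N) (fun _ => (0 : ℝ)) (uIcc (2 * N) s) := by
    intro u hu
    rw [uIcc_of_le hs] at hu
    have : 2 ≤ u / N := (le_div_iff₀ hN).2 hu.1
    exact Real.smoothTransition.zero_of_nonpos (by linarith)
  rw [truncProfile, truncProfile, ← intervalIntegral.integral_add_adjacent_intervals
    (intervalIntegrable_truncWeight N 0 (2 * N)) (intervalIntegrable_truncWeight N (2 * N) s),
    intervalIntegral.integral_congr hzero]
  simp

/-- The Lyapunov function `(1 + ‖x‖ ^ 2) ^ q` truncated at level `N`, lowered by a constant so that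
it is a test function. -/
def truncLyapunov (q N : ℝ) (x : Ed d) : ℝ :=
  truncProfile N ((1 + ‖x‖ ^ 2) ^ q) - truncProfile N (2 * N)

lemma isTestFun_truncLyapunov {q N : ℝ} (hq : 1 ≤ q) (hN : 1 ≤ N) :
    IsTestFun (truncLyapunov q N : Ed d → ℝ) := by
  refine ⟨((contDiff_truncProfile N).comp (contDiff_one_add_norm_sq_rpow q)).sub contDiff_const,
    HasCompactSupport.intro (isCompact_closedBall 0 (2 * N)) fun x hx => ?_⟩
  rw [mem_closedBall_zero_iff, not_le] at hx
  have hlevel : 2 * N ≤ (1 + ‖x‖ ^ 2) ^ q :=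
    calc 2 * N ≤ 1 + ‖x‖ ^ 2 := by nlinarith
      _ ≤ (1 + ‖x‖ ^ 2) ^ q := Real.self_le_rpow_of_one_le (by nlinarith) hq
  rw [truncLyapunov, truncProfile_of_two_mul_le (by linarith) hlevel, sub_self]

lemma LopI_truncLyapunov_le {q N K : ℝ} (hq : 1 ≤ q) (hN : 1 ≤ N) (hK : 0 ≤ K) {B : Ed d → Ed d}
    {x : Ed d} (hB : LopI B (fun y => (1 + ‖y‖ ^ 2) ^ q) x ≤ K) :
    LopI B (truncLyapunov q N) x ≤ K := by
  have hchain := LopI_comp (T := fun s => truncProfile N s - truncProfile N (2 * N))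
    (contDiff_infty.1 (contDiff_one_add_norm_sq_rpow q) 2)
    (isTestFun_truncLyapunov hq hN).contDiff_two
    (fun y => (hasDerivAt_truncProfile N ((1 + ‖y‖ ^ 2) ^ q)).sub_const _)
    ((contDiff_truncWeight N).differentiable (by simp) ((1 + ‖x‖ ^ 2) ^ q)).hasDerivAt B
  have hconcave := mul_nonpos_of_nonpos_of_nonneg
    (deriv_truncWeight_nonpos (by linarith : 0 < N) ((1 + ‖x‖ ^ 2) ^ q))
    (Finset.sum_nonneg fun i (_ : i ∈ Finset.univ) => sq_nonneg
      (fderiv ℝ (fun y : Ed d => (1 + ‖y‖ ^ 2) ^ q) x (EuclideanSpace.single i 1)))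
  calc LopI B (truncLyapunov q N) x
      ≤ truncWeight N ((1 + ‖x‖ ^ 2) ^ q) * LopI B (fun y => (1 + ‖y‖ ^ 2) ^ q) x := by
        unfold truncLyapunov
        linarith
    _ ≤ truncWeight N ((1 + ‖x‖ ^ 2) ^ q) * K :=
        mul_le_mul_of_nonneg_left hB (truncWeight_nonneg _ _)
    _ ≤ K := mul_le_of_le_one_left hK (truncWeight_le_one _ _)

lemma eq_of_forall_integral_isTestFun_eq {μ ν : Measure (Ed d)} [IsFiniteMeasure μ]
    [IsFiniteMeasure ν] (h : ∀ φ : Ed d → ℝ, IsTestFun φ → ∫ x, φ x ∂μ = ∫ x, φ x ∂ν) :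
    μ = ν := by
  have hle : ∀ {μ ν : Measure (Ed d)} [IsFiniteMeasure μ] [IsFiniteMeasure ν],
      (∀ φ : Ed d → ℝ, IsTestFun φ → ∫ x, φ x ∂μ = ∫ x, φ x ∂ν) →
        ∀ K : Set (Ed d), IsCompact K → μ K ≤ ν K := by
    intro μ ν _ _ h K hK
    refine ENNReal.le_of_forall_pos_le_add fun ε hε _ => ?_
    obtain ⟨U, hKU, hUo, hU⟩ := K.exists_isOpen_le_add ν (ε := ε) (by simpa using hε.ne')
    obtain ⟨g, hg, -, -, hgK, hgU⟩ := exists_isTestFun_measureReal_le_integral_le hK hUo hKU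
    refine le_trans ((ENNReal.toReal_le_toReal (measure_ne_top μ K)
      (measure_ne_top ν U)).1 ?_) hU
    exact (hgK μ).trans ((h g hg).trans_le (hgU ν (measure_ne_top ν U)))
  have heq : ∀ K : Set (Ed d), IsCompact K → μ K = ν K := fun K hK =>
    le_antisymm (hle h K hK) (hle (fun φ hφ => (h φ hφ).symm) K hK)
  ext s hs
  rw [hs.measure_eq_iSup_isCompact, hs.measure_eq_iSup_isCompact]
  exact iSup_congr fun K => iSup_congr fun _ => iSup_congr (heq K)

lemma measurable_LopI {B : Ed d → Ed d} (hB : Measurable B) {φ : Ed d → ℝ} (hφ : IsTestFun φ) :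
    Measurable (LopI B φ) := by
  have hfderiv : Continuous fun z : Ed d × Ed d => fderiv ℝ φ z.1 z.2 :=
    hφ.1.continuous_fderiv_apply (by simp)
  rw [funext (LopI_eq B φ)]
  exact hφ.lap.continuous.measurable.add (hfderiv.measurable.comp (measurable_id.prodMk hB))

lemma IsTestFun.exists_abs_LopI_le {φ : Ed d → ℝ} (hφ : IsTestFun φ) (c m : ℝ) :
    ∃ C, 0 ≤ C ∧ ∀ B : Ed d → Ed d, HasPolyGrowth c m B → ∀ x, |LopI B φ x| ≤ C := by
  obtain ⟨C₀, hC₀, hlap⟩ := hφ.lap.exists_abs_le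
  have hsupp : HasCompactSupport fun x => ‖fderiv ℝ φ x‖ * (c * (1 + ‖x‖) ^ m) :=
    (hφ.2.fderiv ℝ).norm.mul_right
  obtain ⟨C₁, hC₁⟩ := hsupp.exists_bound_of_continuous
    ((hφ.1.continuous_fderiv (by simp)).norm.mul
      (continuous_const.mul (continuous_one_add_norm_rpow m)))
  refine ⟨C₀ + C₁, add_nonneg hC₀ ((norm_nonneg _).trans (hC₁ 0)), fun B hB x => ?_⟩
  have hgrad : |fderiv ℝ φ x (B x)| ≤ C₁ :=
    calc |fderiv ℝ φ x (B x)| ≤ ‖fderiv ℝ φ x‖ * ‖B x‖ := (fderiv ℝ φ x).le_opNorm _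
      _ ≤ ‖fderiv ℝ φ x‖ * (c * (1 + ‖x‖) ^ m) := by gcongr; exact hB x
      _ ≤ C₁ := (le_abs_self _).trans (hC₁ x)
  rw [LopI_eq]
  exact (abs_add_le _ _).trans (add_le_add (hlap x) hgrad)

lemma HasPolyGrowth.integrable_LopI {M : Measure (Ed d)} [IsFiniteMeasure M] {m c : ℝ}
    {B : Ed d → Ed d} (hgrow : HasPolyGrowth c m B) (hB : Measurable B) {φ : Ed d → ℝ}
    (hφ : IsTestFun φ) : Integrable (LopI B φ) M := by
  obtain ⟨C, -, hC⟩ := hφ.exists_abs_LopI_le c m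
  exact Integrable.of_bound (measurable_LopI hB hφ).aestronglyMeasurable C (.of_forall (hC _ hgrow))

lemma LopI_add (B : Ed d → Ed d) {φ ψ : Ed d → ℝ} (hφ : IsTestFun φ) (hψ : IsTestFun ψ)
    (x : Ed d) : LopI B (φ + ψ) x = LopI B φ x + LopI B ψ x := by
  have hhess : ∀ i, hess2 (φ + ψ) x i i = hess2 φ x i i + hess2 ψ x i i := fun i => by
    simp only [hess2, iteratedFDeriv_add_apply hφ.contDiff_two.contDiffAt
      hψ.contDiff_two.contDiffAt, add_apply]
  have hfderiv : fderiv ℝ (φ + ψ) x = fderiv ℝ φ x + fderiv ℝ ψ x :=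
    fderiv_add (hφ.differentiable x) (hψ.differentiable x)
  simp only [LopI_eq, lap, hhess, hfderiv, Finset.sum_add_distrib, add_apply]
  ring

/-! ### Flows of probability measures -/

/-- A curve of probability measures solving the linear equation `∂ₜμ = L*μ` with time-dependent
drift `β` of polynomial growth, on the half-line `[0, ∞)`. The curve is extended by its initial
value to negative times, and the drift depends on time through the current measure only. -/
structure IsFlow (m c : ℝ) (β : ℝ → Ed d → Ed d) (μ : ℝ → Measure (Ed d)) : Prop where
  one_le : 1 ≤ m
  prob : ∀ s, IsProbabilityMeasure (μ s)
  meas : ∀ s, Measurable (β s)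
  grow : ∀ s, HasPolyGrowth c m (β s)
  congr : ∀ s t, μ s = μ t → β s = β t
  frozen : ∀ s, s ≤ 0 → μ s = μ 0
  eqn : ∀ φ : Ed d → ℝ, IsTestFun φ → ∀ t : ℝ, 0 ≤ t →
    ∫ x, φ x ∂(μ t) - ∫ x, φ x ∂(μ 0) = ∫ s in (0 : ℝ)..t, ∫ x, LopI (β s) φ x ∂(μ s)

lemma intervalIntegrable_of_forall_not_imp_eq {G : ℝ → ℝ} {a c : ℝ} (hG : ∀ s, |G s| ≤ c)
    (h : ∀ s, 0 ≤ s → ¬ IntervalIntegrable G volume 0 s → G s = a) {t : ℝ} (ht : 0 ≤ t) :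
    IntervalIntegrable G volume 0 t := by
  by_contra hbad
  set S : Set ℝ := {s | 0 ≤ s ∧ ¬ IntervalIntegrable G volume 0 s}
  have hSne : S.Nonempty := ⟨t, ht, hbad⟩
  have hSb : BddBelow S := ⟨0, fun s hs => hs.1⟩
  have hbelow : AEStronglyMeasurable G (volume.restrict (Ioo 0 (sInf S))) := by
    refine LocallyIntegrableOn.aestronglyMeasurable fun s hs => ?_
    obtain ⟨u, hsu, huS⟩ := exists_between hs.2
    have hu : 0 ≤ u := (hs.1.trans hsu).le
    refine ⟨Ioc 0 u, mem_nhdsWithin_of_mem_nhds (Ioc_mem_nhds hs.1 hsu),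
      (intervalIntegrable_iff_integrableOn_Ioc_of_le hu).1 ?_⟩
    by_contra hnot
    exact huS.not_ge (csInf_le hSb ⟨hu, hnot⟩)
  have habove : AEStronglyMeasurable G (volume.restrict (Ioi (sInf S))) := by
    refine (aestronglyMeasurable_const (b := a)).congr ?_
    filter_upwards [ae_restrict_mem measurableSet_Ioi] with s hs
    obtain ⟨u, hu, hus⟩ := (csInf_lt_iff hSb hSne).1 hs
    have hs0 : 0 ≤ s := hu.1.trans hus.le
    refine (h s hs0 fun hint => hu.2 (hint.mono_set ?_)).symm
    rw [uIcc_of_le hu.1, uIcc_of_le hs0]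
    exact Icc_subset_Icc_right hus.le
  have hmeas : AEStronglyMeasurable G (volume.restrict (Ioc 0 t)) := by
    have hat : AEStronglyMeasurable G (volume.restrict {sInf S}) := by simp
    refine (aestronglyMeasurable_union_iff.2
      ⟨hbelow, aestronglyMeasurable_union_iff.2 ⟨hat, habove⟩⟩).mono_set fun s hs => ?_
    rcases lt_trichotomy s (sInf S) with hlt | heq | hgt
    · exact Or.inl ⟨hs.1, hlt⟩
    · exact Or.inr (Or.inl heq)
    · exact Or.inr (Or.inr hgt)
  exact hbad ((intervalIntegrable_iff_integrableOn_Ioc_of_le ht).2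
    (Integrable.of_bound hmeas c (.of_forall hG)))

namespace IsFlow

variable {m c : ℝ} {β : ℝ → Ed d → Ed d} {μ : ℝ → Measure (Ed d)}

lemma integrable_LopI (h : IsFlow m c β μ) {φ : Ed d → ℝ} (hφ : IsTestFun φ) (s : ℝ) :
    Integrable (LopI (β s) φ) (μ s) :=
  have := h.prob s
  (h.grow s).integrable_LopI (h.meas s) hφ

lemma exists_abs_integral_LopI_le (h : IsFlow m c β μ) {φ : Ed d → ℝ} (hφ : IsTestFun φ) :
    ∃ C, 0 ≤ C ∧ ∀ s, |∫ x, LopI (β s) φ x ∂(μ s)| ≤ C := by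
  obtain ⟨C, hC0, hC⟩ := hφ.exists_abs_LopI_le c m
  refine ⟨C, hC0, fun s => ?_⟩
  have := h.prob s
  simpa using! norm_integral_le_of_norm_le_const (μ := μ s) (f := LopI (β s) φ)
    (.of_forall (hC _ (h.grow s)))

-- A non-integrable right-hand side is `0` by convention, so the equation says that every test
-- function with such a right-hand side keeps its initial integral; adding one to any other test
-- function shows that they all do.
lemma eq_of_not_intervalIntegrable (h : IsFlow m c β μ) {φ : Ed d → ℝ} (hφ : IsTestFun φ)
    {t : ℝ} (ht : 0 ≤ t)
    (hn : ¬ IntervalIntegrable (fun s => ∫ x, LopI (β s) φ x ∂(μ s)) volume 0 t) :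
    μ t = μ 0 := by
  have hprob := h.prob
  have hconst : ∀ ψ : Ed d → ℝ, IsTestFun ψ →
      ¬ IntervalIntegrable (fun s => ∫ x, LopI (β s) ψ x ∂(μ s)) volume 0 t →
      ∫ x, ψ x ∂(μ t) = ∫ x, ψ x ∂(μ 0) := by
    intro ψ hψ hn
    rw [← sub_eq_zero, h.eqn ψ hψ t ht, intervalIntegral.integral_undef hn]
  refine eq_of_forall_integral_isTestFun_eq fun ψ hψ => ?_
  by_cases hi : IntervalIntegrable (fun s => ∫ x, LopI (β s) ψ x ∂(μ s)) volume 0 t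
  · have hsum := hconst (φ + ψ) (hφ.add hψ) fun hint => hn <| (hint.sub hi).congr fun s _ => by
      simp_rw [LopI_add _ hφ hψ]
      simp [integral_add (h.integrable_LopI hφ s) (h.integrable_LopI hψ s)]
    simp only [Pi.add_apply] at hsum
    rw [integral_add (hφ.integrable _) (hψ.integrable _),
      integral_add (hφ.integrable _) (hψ.integrable _), hconst φ hφ hn] at hsum
    exact add_left_cancel hsum
  · exact hconst ψ hψ hi

lemma intervalIntegrable (h : IsFlow m c β μ) {φ : Ed d → ℝ} (hφ : IsTestFun φ) {t : ℝ}
    (ht : 0 ≤ t) : IntervalIntegrable (fun s => ∫ x, LopI (β s) φ x ∂(μ s)) volume 0 t := by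
  obtain ⟨C, -, hC⟩ := h.exists_abs_integral_LopI_le hφ
  refine intervalIntegrable_of_forall_not_imp_eq (a := ∫ x, LopI (β 0) φ x ∂(μ 0)) hC
    (fun s hs hn => ?_) ht
  have heq := h.eq_of_not_intervalIntegrable hφ hs hn
  rw [h.congr s 0 heq, heq]

lemma sub_eq (h : IsFlow m c β μ) {φ : Ed d → ℝ} (hφ : IsTestFun φ) {s t : ℝ} (hs : 0 ≤ s)
    (ht : 0 ≤ t) : ∫ x, φ x ∂(μ t) - ∫ x, φ x ∂(μ s) =
      ∫ u in s..t, ∫ x, LopI (β u) φ x ∂(μ u) := by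
  rw [← intervalIntegral.integral_interval_sub_left (h.intervalIntegrable hφ ht)
    (h.intervalIntegrable hφ hs), ← h.eqn φ hφ t ht, ← h.eqn φ hφ s hs]
  ring

lemma eq_max_zero (h : IsFlow m c β μ) (s : ℝ) : μ s = μ (max s 0) := by
  rcases le_total s 0 with hs | hs
  · rw [max_eq_right hs, h.frozen s hs]
  · rw [max_eq_left hs]

lemma continuous_integral (h : IsFlow m c β μ) {φ : Ed d → ℝ} (hφ : IsTestFun φ) :
    Continuous fun s => ∫ x, φ x ∂(μ s) := by
  obtain ⟨C, hC0, hC⟩ := h.exists_abs_integral_LopI_le hφ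
  refine (LipschitzWith.of_dist_le_mul (K := C.toNNReal) fun s t => ?_).continuous
  rw [h.eq_max_zero s, h.eq_max_zero t, Real.dist_eq,
    h.sub_eq hφ (le_max_right _ _) (le_max_right _ _), ← Real.norm_eq_abs,
    Real.coe_toNNReal _ hC0]
  refine (intervalIntegral.norm_integral_le_of_norm_le_const (C := C) fun u _ => hC u).trans ?_
  gcongr
  exact abs_max_sub_max_le_abs _ _ _

lemma measurable_apply_of_isCompact (h : IsFlow m c β μ) {K : Set (Ed d)} (hK : IsCompact K) :
    Measurable fun s => μ s K := by
  have hprob := h.prob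
  choose g hg _ _ hgK hgU using fun n : ℕ => exists_isTestFun_measureReal_le_integral_le hK
    (isOpen_thickening (δ := 1 / ((n : ℝ) + 1)) (E := K))
    (self_subset_thickening (by positivity) K)
  have hthickening : ∀ s, Tendsto (fun n : ℕ => (μ s).real (thickening (1 / ((n : ℝ) + 1)) K))
      atTop (𝓝 ((μ s).real K)) := fun s =>
    (ENNReal.continuousAt_toReal (measure_ne_top (μ s) K)).tendsto.comp <|
      (tendsto_measure_thickening_of_isClosed ⟨1, one_pos, measure_ne_top _ _⟩ hK.isClosed).comp
        (tendsto_nhdsWithin_iff.2 ⟨tendsto_one_div_add_atTop_nhds_zero_nat,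
          .of_forall fun n => by simp only [mem_Ioi]; positivity⟩)
  have hlim : ∀ s, Tendsto (fun n => ∫ x, g n x ∂(μ s)) atTop (𝓝 ((μ s).real K)) := fun s =>
    tendsto_of_tendsto_of_tendsto_of_le_of_le tendsto_const_nhds (hthickening s)
      (fun n => hgK n (μ s)) (fun n => hgU n (μ s) (measure_ne_top _ _))
  simpa [ofReal_measureReal] using (measurable_of_tendsto_metrizable (fun n =>
    (h.continuous_integral (hg n)).measurable) (tendsto_pi_nhds.2 hlim)).ennreal_ofReal

lemma measurable (h : IsFlow m c β μ) : Measurable μ := by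
  have hprob := h.prob
  refine Measurable.measure_of_isPiSystem_of_isProbabilityMeasure (S := {s | IsClosed s})
    ((BorelSpace.measurable_eq (α := Ed d)).trans borel_eq_generateFrom_isClosed)
    isPiSystem_isClosed fun F hF => ?_
  have hexhaust : ∀ s, μ s F = ⨆ n : ℕ, μ s (F ∩ closedBall 0 n) := by
    intro s
    rw [← Monotone.measure_iUnion, ← inter_iUnion, iUnion_closedBall_nat, inter_univ]
    exact fun i j hij => inter_subset_inter_right _ (closedBall_subset_closedBall
      (by exact_mod_cast hij))
  simp_rw [hexhaust]
  exact Measurable.iSup fun n =>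
    h.measurable_apply_of_isCompact ((isCompact_closedBall _ _).inter_left hF)

end IsFlow

/-! ### Moments and occupation measures -/

lemma one_add_norm_sq_rpow_le {E : Type*} [SeminormedAddCommGroup E] {p : ℝ} (hp : 0 ≤ p) (x : E) :
    (1 + ‖x‖ ^ 2) ^ (p / 2) ≤ (1 + ‖x‖) ^ p := by
  have hx := norm_nonneg x
  calc (1 + ‖x‖ ^ 2) ^ (p / 2) ≤ ((1 + ‖x‖) ^ (2 : ℝ)) ^ (p / 2) := by
        refine Real.rpow_le_rpow (by positivity) ?_ (by positivity)
        rw [Real.rpow_two]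
        nlinarith
    _ = (1 + ‖x‖) ^ p := by rw [← Real.rpow_mul (by positivity), mul_div_cancel₀ p two_ne_zero]

lemma one_add_norm_rpow_le {E : Type*} [SeminormedAddCommGroup E] {p : ℝ} (hp : 0 ≤ p) (x : E) :
    (1 + ‖x‖) ^ p ≤ 2 ^ (p / 2) * (1 + ‖x‖ ^ 2) ^ (p / 2) := by
  have hx := norm_nonneg x
  calc (1 + ‖x‖) ^ p = ((1 + ‖x‖) ^ (2 : ℝ)) ^ (p / 2) := by
        rw [← Real.rpow_mul (by positivity), mul_div_cancel₀ p two_ne_zero]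
    _ ≤ (2 * (1 + ‖x‖ ^ 2)) ^ (p / 2) := by
        refine Real.rpow_le_rpow (by positivity) ?_ (by positivity)
        rw [Real.rpow_two]
        nlinarith [sq_nonneg (1 - ‖x‖)]
    _ = 2 ^ (p / 2) * (1 + ‖x‖ ^ 2) ^ (p / 2) := Real.mul_rpow (by norm_num) (by positivity)

lemma integrable_one_add_norm_rpow_of_le {E : Type*} [NormedAddCommGroup E] [MeasurableSpace E]
    [OpensMeasurableSpace E] {M : Measure E} {p q : ℝ} (hpq : p ≤ q)
    (hq : Integrable (fun x => (1 + ‖x‖) ^ q) M) : Integrable (fun x => (1 + ‖x‖) ^ p) M := by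
  refine hq.mono' (continuous_one_add_norm_rpow p).aestronglyMeasurable (.of_forall fun x => ?_)
  have hx := norm_nonneg x
  rw [Real.norm_of_nonneg (by positivity)]
  exact Real.rpow_le_rpow_of_exponent_le (by linarith) hpq

lemma integral_one_add_norm_rpow_le_of_le {E : Type*} [NormedAddCommGroup E] [MeasurableSpace E]
    [OpensMeasurableSpace E] {M : Measure E} {p q : ℝ} (hpq : p ≤ q)
    (hq : Integrable (fun x => (1 + ‖x‖) ^ q) M) :
    ∫ x, (1 + ‖x‖) ^ p ∂M ≤ ∫ x, (1 + ‖x‖) ^ q ∂M :=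
  integral_mono (integrable_one_add_norm_rpow_of_le hpq hq) hq fun x =>
    Real.rpow_le_rpow_of_exponent_le (by simp) hpq

lemma IsDissipative.inner_self_le {E : Type*} [NormedAddCommGroup E] [InnerProductSpace ℝ E]
    {κ c m : ℝ} {B : E → E} (hB : IsDissipative κ B) (hgrow : HasPolyGrowth c m B) (x : E) :
    ⟪x, B x⟫ ≤ -κ * ‖x‖ ^ 2 + c * ‖x‖ := by
  have hzero : ⟪x, B 0⟫ ≤ c * ‖x‖ :=
    calc ⟪x, B 0⟫ ≤ ‖x‖ * ‖B 0‖ := real_inner_le_norm x (B 0)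
      _ ≤ ‖x‖ * c := by gcongr; simpa using hgrow 0
      _ = c * ‖x‖ := mul_comm _ _
  have hdiff := hB x 0
  rw [sub_zero, inner_sub_right] at hdiff
  linarith

namespace IsFlow

variable {m c : ℝ} {β : ℝ → Ed d → Ed d} {μ : ℝ → Measure (Ed d)}

lemma integral_truncLyapunov_le (h : IsFlow m c β μ) {q N K : ℝ} (hq : 1 ≤ q) (hN : 1 ≤ N)
    (hK : 0 ≤ K) (hL : ∀ s x, LopI (β s) (fun y => (1 + ‖y‖ ^ 2) ^ q) x ≤ K) {s : ℝ}
    (hs : 0 ≤ s) :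
    ∫ x, truncLyapunov q N x ∂(μ s) ≤ ∫ x, truncLyapunov q N x ∂(μ 0) + K * s := by
  have hprob := h.prob
  have hφ : IsTestFun (truncLyapunov q N : Ed d → ℝ) := isTestFun_truncLyapunov hq hN
  have hmean : ∀ u, ∫ x, LopI (β u) (truncLyapunov q N) x ∂(μ u) ≤ K := fun u =>
    (integral_mono (h.integrable_LopI hφ u) (integrable_const K) fun x =>
      LopI_truncLyapunov_le hq hN hK (hL u x)).trans_eq (by simp)
  have hincr := intervalIntegral.integral_mono_on hs (h.intervalIntegrable hφ hs)
    intervalIntegrable_const fun u _ => hmean u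
  rw [← h.sub_eq hφ le_rfl hs, intervalIntegral.integral_const, sub_zero, smul_eq_mul] at hincr
  linarith

lemma integral_one_add_norm_sq_rpow_le (h : IsFlow m c β μ) {q K : ℝ} (hq : 1 ≤ q) (hK : 0 ≤ K)
    (hL : ∀ s x, LopI (β s) (fun y => (1 + ‖y‖ ^ 2) ^ q) x ≤ K)
    (hint : ∀ s, Integrable (fun x => (1 + ‖x‖ ^ 2) ^ q) (μ s)) {s : ℝ} (hs : 0 ≤ s) :
    ∫ x, (1 + ‖x‖ ^ 2) ^ q ∂(μ s) ≤ ∫ x, (1 + ‖x‖ ^ 2) ^ q ∂(μ 0) + K * s := by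
  have hprob := h.prob
  have hcont : ∀ N, Continuous fun x : Ed d => truncProfile N ((1 + ‖x‖ ^ 2) ^ q) := fun N =>
    (contDiff_truncProfile N).continuous.comp (contDiff_one_add_norm_sq_rpow q).continuous
  have habs : ∀ N (x : Ed d), ‖truncProfile N ((1 + ‖x‖ ^ 2) ^ q)‖ ≤ (1 + ‖x‖ ^ 2) ^ q :=
    fun N x => by
      rw [Real.norm_of_nonneg (truncProfile_nonneg N (by positivity))]
      exact truncProfile_le N (by positivity)
  have htrunc : ∀ N t, Integrable (fun x => truncProfile N ((1 + ‖x‖ ^ 2) ^ q)) (μ t) :=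
    fun N t => (hint t).mono' (hcont N).aestronglyMeasurable (.of_forall (habs N))
  have hlevel : ∀ N t, ∫ x, truncLyapunov q N x ∂(μ t) =
      ∫ x, truncProfile N ((1 + ‖x‖ ^ 2) ^ q) ∂(μ t) - truncProfile N (2 * N) := fun N t => by
    simp [truncLyapunov, integral_sub (htrunc N t) (integrable_const _)]
  have hlim : Tendsto (fun N => ∫ x, truncProfile N ((1 + ‖x‖ ^ 2) ^ q) ∂(μ s)) atTop
      (𝓝 (∫ x, (1 + ‖x‖ ^ 2) ^ q ∂(μ s))) := by
    refine tendsto_integral_filter_of_dominated_convergence _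
      (.of_forall fun N => (hcont N).aestronglyMeasurable) (.of_forall fun N =>
        .of_forall (habs N)) (hint s) (.of_forall fun x => tendsto_const_nhds.congr' ?_)
    filter_upwards [eventually_ge_atTop ((1 + ‖x‖ ^ 2) ^ q), eventually_gt_atTop 0] with N hN hN0
    exact (truncProfile_of_le hN0 (by positivity) hN).symm
  refine le_of_tendsto hlim ?_
  filter_upwards [eventually_ge_atTop 1] with N hN
  have hstep := h.integral_truncLyapunov_le hq hN hK hL hs
  have hinit : ∫ x, truncProfile N ((1 + ‖x‖ ^ 2) ^ q) ∂(μ 0) ≤ ∫ x, (1 + ‖x‖ ^ 2) ^ q ∂(μ 0) :=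
    integral_mono (htrunc N 0) (hint 0) fun x => truncProfile_le N (by positivity)
  rw [hlevel, hlevel] at hstep
  linarith

lemma exists_integral_one_add_norm_rpow_le (h : IsFlow m c β μ) {κ p : ℝ} (hκ : 0 < κ) (hp : 2 ≤ p)
    (hdiss : ∀ s, IsDissipative κ (β s))
    (hmom : ∀ s, Integrable (fun x => (1 + ‖x‖) ^ p) (μ s)) (T : ℝ) :
    ∃ Q, ∀ s, s ≤ T → ∫ x, (1 + ‖x‖) ^ p ∂(μ s) ≤ Q := by
  have hp0 : 0 ≤ p := by linarith
  have hq : 1 ≤ p / 2 := by linarith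
  set A : ℝ := 2 * d + c ^ 2 / κ + 4 * (p / 2 - 1)
  have hA : 0 ≤ A := add_nonneg (by positivity) (by linarith)
  set K : ℝ := p / 2 * ((1 + A / κ) ^ (p / 2 - 1) * A)
  have hK : 0 ≤ K := by positivity
  have hint : ∀ s, Integrable (fun x => (1 + ‖x‖ ^ 2) ^ (p / 2)) (μ s) := fun s =>
    (hmom s).mono' (contDiff_one_add_norm_sq_rpow _).continuous.aestronglyMeasurable
      (.of_forall fun x => by
        rw [Real.norm_of_nonneg (by positivity)]
        exact one_add_norm_sq_rpow_le hp0 x)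
  refine ⟨2 ^ (p / 2) * (∫ x, (1 + ‖x‖ ^ 2) ^ (p / 2) ∂(μ 0) + K * max T 0), fun s hs => ?_⟩
  calc ∫ x, (1 + ‖x‖) ^ p ∂(μ s)
      ≤ 2 ^ (p / 2) * ∫ x, (1 + ‖x‖ ^ 2) ^ (p / 2) ∂(μ s) := by
        rw [← integral_const_mul]
        exact integral_mono (hmom s) ((hint s).const_mul _) (one_add_norm_rpow_le hp0)
    _ ≤ 2 ^ (p / 2) * (∫ x, (1 + ‖x‖ ^ 2) ^ (p / 2) ∂(μ 0) + K * max s 0) := by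
        rw [h.eq_max_zero s]
        gcongr
        exact h.integral_one_add_norm_sq_rpow_le hq hK (fun s x =>
          LopI_one_add_norm_sq_rpow_le hq hκ le_rfl ((hdiss s).inner_self_le (h.grow s) x))
          hint (le_max_right _ _)
    _ ≤ _ := by gcongr

/-- The curve of measures as a Markov kernel from time to space. -/
def kernel (h : IsFlow m c β μ) : ProbabilityTheory.Kernel ℝ (Ed d) := ⟨μ, h.measurable⟩

instance isMarkovKernel_kernel (h : IsFlow m c β μ) : ProbabilityTheory.IsMarkovKernel h.kernel :=
  ⟨h.prob⟩

/-- The occupation measure `∫₀ᵀ μ s ds` of the flow. -/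
def occupation (h : IsFlow m c β μ) (T : ℝ) : Measure (Ed d) :=
  (volume.restrict (Ioc 0 T)).bind h.kernel

instance isFiniteMeasure_occupation (h : IsFlow m c β μ) (T : ℝ) :
    IsFiniteMeasure (h.occupation T) :=
  inferInstanceAs (IsFiniteMeasure ((volume.restrict (Ioc 0 T)).bind h.kernel))

lemma integrable_occupation (h : IsFlow m c β μ) {T Q : ℝ} {f : Ed d → ℝ} (hf : Continuous f)
    (hfi : ∀ s, Integrable f (μ s)) (hQ : ∀ s, s ≤ T → ∫ x, ‖f x‖ ∂(μ s) ≤ Q) :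
    Integrable f (h.occupation T) := by
  refine (Measure.integrable_comp_iff hf.aestronglyMeasurable).2 ⟨.of_forall hfi, ?_⟩
  refine Measure.integrableOn_of_bounded (M := Q) (by simp)
    (hf.norm.stronglyMeasurable.integral_kernel (κ := h.kernel)).aestronglyMeasurable ?_
  filter_upwards [ae_restrict_mem measurableSet_Ioc] with s hs
  rw [Real.norm_of_nonneg (integral_nonneg fun x => norm_nonneg _)]
  exact hQ s hs.2

lemma integrableOn_integral (h : IsFlow m c β μ) {T : ℝ} {f : Ed d → ℝ}
    (hf : Integrable f (h.occupation T)) :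
    IntegrableOn (fun s => ∫ x, f x ∂(μ s)) (Ioc 0 T) := by
  rw [occupation, Measure.comp_eq_comp_const_apply] at hf
  simpa [IntegrableOn] using! hf.integral_comp

lemma integral_occupation (h : IsFlow m c β μ) {T : ℝ} {f : Ed d → ℝ}
    (hf : Integrable f (h.occupation T)) :
    ∫ x, f x ∂(h.occupation T) = ∫ s in Ioc 0 T, ∫ x, f x ∂(μ s) := by
  rw [occupation, Measure.comp_eq_comp_const_apply] at hf ⊢
  simpa using! ProbabilityTheory.Kernel.integral_comp hf

end IsFlow

lemma HasPolyGrowth.abs_integral_fderiv_apply_le {M : Measure (Ed d)} {m c A : ℝ}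
    {B : Ed d → Ed d} (hgrow : HasPolyGrowth c m B) {φ : Ed d → ℝ} (hA : 0 ≤ A)
    (hφA : ∀ x, ‖fderiv ℝ φ x‖ ≤ A) (hM : Integrable (fun x => (1 + ‖x‖) ^ m) M) :
    |∫ x, fderiv ℝ φ x (B x) ∂M| ≤ A * (c * ∫ x, (1 + ‖x‖) ^ m ∂M) := by
  rw [← Real.norm_eq_abs, ← integral_const_mul, ← integral_const_mul]
  exact norm_integral_le_of_norm_le ((hM.const_mul c).const_mul A) (.of_forall fun x =>
    ((fderiv ℝ φ x).le_opNorm _).trans (mul_le_mul (hφA x) (hgrow x) (norm_nonneg _) hA))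

lemma HasPolyGrowth.integral_LopI_eq {M : Measure (Ed d)} [IsFiniteMeasure M] {m c : ℝ}
    {B : Ed d → Ed d} (hgrow : HasPolyGrowth c m B) (hB : Measurable B) {φ : Ed d → ℝ}
    (hφ : IsTestFun φ) :
    ∫ x, LopI B φ x ∂M = ∫ x, lap φ x ∂M + ∫ x, fderiv ℝ φ x (B x) ∂M := by
  have hfderiv : Integrable (fun x => fderiv ℝ φ x (B x)) M :=
    ((hgrow.integrable_LopI hB hφ).sub (hφ.lap.integrable M)).congr
      (.of_forall fun x => by simp [LopI_eq])
  rw [← integral_add (hφ.lap.integrable M) hfderiv]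
  simp only [LopI_eq]

lemma IsStationarySolI.hasFirstOrderLap {σ : Measure (Ed d)} [IsFiniteMeasure σ] {m c : ℝ}
    {B : Ed d → Ed d} (hσ : IsStationarySolI B σ) (hB : Measurable B) (hgrow : HasPolyGrowth c m B)
    (hmom : Integrable (fun x => (1 + ‖x‖) ^ m) σ) :
    HasFirstOrderLap (c * ∫ x, (1 + ‖x‖) ^ m ∂σ) σ := by
  intro φ hφ A₀ A₁ hA₀ hA₁ _ hφA₁
  have hQ : 0 ≤ c * ∫ x : Ed d, (1 + ‖x‖) ^ m ∂σ :=
    mul_nonneg hgrow.nonneg (integral_nonneg fun x => by positivity)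
  have hzero := hσ φ hφ
  rw [hgrow.integral_LopI_eq hB hφ] at hzero
  rw [eq_neg_of_add_eq_zero_left hzero, abs_neg, mul_comm]
  exact (hgrow.abs_integral_fderiv_apply_le hA₁ hφA₁ hmom).trans
    (mul_le_mul_of_nonneg_right (le_add_of_nonneg_left hA₀) hQ)

/-- `B` is a `K`-Lipschitz `κ`-dissipative field which approximates the drift `b` within `η` in
mean, both under `σ` and along the curve `μ` up to the time `T`. -/
structure IsDriftApprox (κ η T : ℝ) (K : ℝ≥0) (b B : Ed d → Ed d) (μ : ℝ → Measure (Ed d))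
    (σ : Measure (Ed d)) : Prop where
  lipschitzWith : LipschitzWith K B
  isDissipative : IsDissipative κ B
  integral_le : ∫ x, ‖b x - B x‖ ∂σ ≤ η
  integrableOn : IntegrableOn (fun s => ∫ x, ‖b x - B x‖ ∂(μ s)) (Ioc 0 T)
  setIntegral_le : ∫ s in Ioc 0 T, ∫ x, ‖b x - B x‖ ∂(μ s) ≤ η

namespace IsFlow

variable {m c : ℝ} {β : ℝ → Ed d → Ed d} {μ : ℝ → Measure (Ed d)}

lemma hasFirstOrderLap_occupation (h : IsFlow m c β μ) {T Q : ℝ} (hT : 0 ≤ T)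
    (hmom : ∀ s, Integrable (fun x => (1 + ‖x‖) ^ m) (μ s))
    (hQ : ∀ s, s ≤ T → ∫ x, (1 + ‖x‖) ^ m ∂(μ s) ≤ Q) :
    HasFirstOrderLap (2 + c * Q * T) (h.occupation T) := by
  intro φ hφ A₀ A₁ hA₀ hA₁ hφA₀ hφA₁
  have hprob := h.prob
  have hc : 0 ≤ c := (h.grow 0).nonneg
  have hQ0 : 0 ≤ Q := (integral_nonneg fun x => by positivity).trans (hQ 0 hT)
  have hlap := hφ.lap.integrable (h.occupation T)
  have hLint := h.intervalIntegrable hφ hT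
  have heqn := h.sub_eq hφ le_rfl hT
  rw [intervalIntegrable_iff_integrableOn_Ioc_of_le hT] at hLint
  rw [intervalIntegral.integral_of_le hT] at heqn
  have hends : ∀ s, |∫ x, φ x ∂(μ s)| ≤ A₀ := fun s => by
    simpa using! norm_integral_le_of_norm_le_const (μ := μ s) (f := φ) (.of_forall hφA₀)
  have hdrift : |∫ s in Ioc 0 T, (∫ x, lap φ x ∂(μ s) - ∫ x, LopI (β s) φ x ∂(μ s))| ≤
      A₁ * (c * Q) * T := by
    rw [← Real.norm_eq_abs]
    refine (norm_setIntegral_le_of_norm_le_const (C := A₁ * (c * Q)) measure_Ioc_lt_top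
      fun s hs => ?_).trans_eq (by simp [hT])
    rw [(h.grow s).integral_LopI_eq (h.meas s) hφ, sub_add_cancel_left, norm_neg]
    refine ((h.grow s).abs_integral_fderiv_apply_le hA₁ hφA₁ (hmom s)).trans ?_
    gcongr
    exact hQ s hs.2
  rw [integral_sub (h.integrableOn_integral hlap) hLint, ← heqn] at hdrift
  rw [h.integral_occupation hlap]
  have hcross : 0 ≤ c * Q * T * A₀ := by positivity
  have hdrift := abs_le.1 hdrift
  have h0 := abs_le.1 (hends 0)
  have hT := abs_le.1 (hends T)
  exact abs_le.2 ⟨by linarith, by linarith⟩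

lemma exists_isDriftApprox (h : IsFlow m c β μ) (hd : 0 < d) {κ T Q : ℝ} (hT : 0 ≤ T)
    (hmom : ∀ s, Integrable (fun x => (1 + ‖x‖) ^ m) (μ s))
    (hQ : ∀ s, s ≤ T → ∫ x, (1 + ‖x‖) ^ m ∂(μ s) ≤ Q)
    {σ : Measure (Ed d)} [IsProbabilityMeasure σ] {b : Ed d → Ed d} (hb : Measurable b)
    (hgrow : HasPolyGrowth c m b) (hdiss : IsDissipative κ b)
    (hσm : Integrable (fun x => (1 + ‖x‖) ^ m) σ) (hσ : IsStationarySolI b σ)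
    {η : ℝ} (hη : 0 < η) :
    ∃ (B : Ed d → Ed d) (K : ℝ≥0), IsDriftApprox κ η T K b B μ σ := by
  have hac : σ + h.occupation T ≪ volume :=
    ((hσ.hasFirstOrderLap hb hgrow hσm).absolutelyContinuous hd).add_left
      ((h.hasFirstOrderLap_occupation hT hmom hQ).absolutelyContinuous hd)
  have hocc : Integrable (fun x => (1 + ‖x‖) ^ m) (h.occupation T) := by
    refine h.integrable_occupation (Q := Q) (continuous_one_add_norm_rpow m) hmom fun s hs => ?_
    exact (integral_congr_ae (.of_forall fun x => Real.norm_of_nonneg (by positivity))).trans_le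
      (hQ s hs)
  obtain ⟨B, K, hB, hBdiss, hint, hle⟩ := hdiss.exists_lipschitzWith_of_absolutelyContinuous hgrow
    hb h.one_le hac (hσm.add_measure hocc) hη
  obtain ⟨hintσ, hintμ⟩ := integrable_add_measure.1 hint
  rw [integral_add_measure hintσ hintμ, h.integral_occupation hintμ] at hle
  have hσ0 : 0 ≤ ∫ x, ‖b x - B x‖ ∂σ := integral_nonneg fun x => norm_nonneg _
  have hμ0 : 0 ≤ ∫ s in Ioc 0 T, ∫ x, ‖b x - B x‖ ∂(μ s) :=
    integral_nonneg fun s => integral_nonneg fun x => norm_nonneg _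
  exact ⟨B, K, hB, hBdiss, by linarith, h.integrableOn_integral hintμ, by linarith⟩

end IsFlow

/-! ### A Gronwall inequality for suprema -/

lemma lipschitzOnWith_of_isLUB_range {ι α : Type*} [PseudoMetricSpace α] {K : ℝ≥0} {s : Set α}
    {F : ι → α → ℝ} {W : α → ℝ} (hF : ∀ i, LipschitzOnWith K (F i) s)
    (hW : ∀ x ∈ s, IsLUB (range fun i => F i x) (W x)) : LipschitzOnWith K W s := by
  refine LipschitzOnWith.of_le_add_mul K fun x hx y hy => (hW x hx).2 ?_
  rintro _ ⟨i, rfl⟩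
  exact ((hF i).le_add_mul hx hy).trans (add_le_add_left ((hW y hy).1 (mem_range_self i)) _)

lemma lipschitzOnWith_of_sub_eq_integral {F D : ℝ → ℝ} {T : ℝ} {c : ℝ≥0}
    (hF : ∀ s t, 0 ≤ s → s ≤ t → t ≤ T → F t - F s = ∫ u in s..t, D u)
    (hD : ∀ s ∈ Icc 0 T, |D s| ≤ c) : LipschitzOnWith c F (Icc 0 T) := by
  have hle : ∀ s t, 0 ≤ s → s ≤ t → t ≤ T → dist (F s) (F t) ≤ c * dist s t := by
    intro s t hs hst htT
    rw [dist_comm, dist_comm s, Real.dist_eq, Real.dist_eq, hF s t hs hst htT, ← Real.norm_eq_abs]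
    refine intervalIntegral.norm_integral_le_of_norm_le_const fun u hu => ?_
    rw [uIoc_of_le hst] at hu
    exact hD u ⟨hs.trans hu.1.le, hu.2.trans htT⟩
  refine LipschitzOnWith.of_dist_le_mul fun s hs t ht => ?_
  rcases le_total s t with hst | hts
  · exact hle s t hs.1 hst ht.2
  · rw [dist_comm, dist_comm s]
    exact hle t s ht.1 hts hs.2

lemma le_exp_mul_of_forall_sub_le {g r : ℝ → ℝ} {T a : ℝ} (hT : 0 ≤ T)
    (hg : ContinuousOn g (Icc 0 T)) (hr : Tendsto r (𝓝[>] 0) (𝓝 0))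
    (hstep : ∀ t δ, 0 ≤ t → 0 < δ → t + δ ≤ T → g (t + δ) - g t ≤ δ * (a * g t + r δ)) :
    g T ≤ Real.exp (a * T) * g 0 := by
  have hgronwall := le_gronwallBound_of_liminf_deriv_right_le (f' := fun t => a * g t) (δ := g 0)
    (K := a) (ε := 0) hg (fun t ht z hz => ?_) le_rfl (fun t _ => (add_zero _).ge) T ⟨hT, le_rfl⟩
  · rwa [gronwallBound_ε0, sub_zero, mul_comm] at hgronwall
  have hshift : Tendsto (fun u => u - t) (𝓝[>] t) (𝓝[>] 0) := by
    refine tendsto_nhdsWithin_iff.2 ⟨?_, ?_⟩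
    · have hcont : Continuous fun u : ℝ => u - t := by fun_prop
      simpa only [sub_self] using (hcont.tendsto t).mono_left nhdsWithin_le_nhds
    · filter_upwards [self_mem_nhdsWithin] with u hu using sub_pos.2 (mem_Ioi.1 hu)
  have hlim : Tendsto (fun u => a * g t + r (u - t)) (𝓝[>] t) (𝓝 (a * g t)) := by
    simpa only [add_zero, Function.comp_def] using (hr.comp hshift).const_add (a * g t)
  refine Eventually.frequently ?_
  filter_upwards [hlim.eventually_lt_const hz, self_mem_nhdsWithin, Ioc_mem_nhdsGT ht.2]
    with u hu htu huT
  have hδ : 0 < u - t := sub_pos.2 htu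
  refine lt_of_le_of_lt ?_ hu
  rw [inv_mul_le_iff₀ hδ]
  simpa only [add_sub_cancel] using hstep t (u - t) ht.1 hδ (by linarith [huT.2])

section

variable {ι : Type*} {F D : ι → ℝ → ℝ} {W E : ℝ → ℝ} {T h l : ℝ} {c : ℝ≥0}

-- On `[t, t + δ]` the deficit `W - F i` of an index that is `δ²`-optimal at time `t + δ` is `O(δ)`.
lemma sub_le_of_isLUB_range {t δ : ℝ} (hh : 0 < h) (hl : 0 ≤ l)
    (hF : ∀ i, LipschitzOnWith c (F i) (Icc 0 T))
    (hW : ∀ s ∈ Icc 0 T, IsLUB (range fun i => F i s) (W s))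
    (hD : ∀ i s t, 0 ≤ s → s ≤ t → t ≤ T → F i t - F i s = ∫ u in s..t, D i u)
    (hDi : ∀ i s t, 0 ≤ s → s ≤ t → t ≤ T → IntervalIntegrable (D i) volume s t)
    (hE : IntegrableOn E (Ioc 0 T))
    (hineq : ∀ i, ∀ s ∈ Icc 0 T, D i s ≤ (W s - F i s) / h - l * W s + E s)
    (ht : 0 ≤ t) (hδ : 0 < δ) (htδ : t + δ ≤ T) :
    W (t + δ) - W t ≤
      δ * (-l * W t + δ * (1 + l * c + (δ + 2 * c) / h)) + ∫ s in t..(t + δ), E s := by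
  have hWlip := lipschitzOnWith_of_isLUB_range hF hW
  have hmem : ∀ s ∈ Icc t (t + δ), s ∈ Icc 0 T := fun s hs => ⟨ht.trans hs.1, hs.2.trans htδ⟩
  have hleft : t ∈ Icc t (t + δ) := ⟨le_rfl, by linarith⟩
  have hright : t + δ ∈ Icc t (t + δ) := ⟨by linarith, le_rfl⟩
  have hdist : ∀ s ∈ Icc t (t + δ), ∀ u ∈ Icc t (t + δ), c * dist s u ≤ c * δ := fun s hs u hu =>
    mul_le_mul_of_nonneg_left (by simpa using Real.dist_le_of_mem_Icc hs hu) c.2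
  obtain ⟨_, ⟨i, rfl⟩, hi, -⟩ := (hW _ (hmem _ hright)).exists_between
    (sub_lt_self (W (t + δ)) (pow_pos hδ 2))
  dsimp only at hi
  have hdrift : ∀ s ∈ Icc t (t + δ),
      D i s ≤ ((δ ^ 2 + 2 * c * δ) / h - l * W t + l * (c * δ)) + E s := by
    intro s hs
    have hFs := ((hF i).le_add_mul (hmem _ hright) (hmem s hs)).trans
      (add_le_add_right (hdist _ hright s hs) _)
    have hWs := (hWlip.le_add_mul (hmem s hs) (hmem _ hright)).trans
      (add_le_add_right (hdist s hs _ hright) _)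
    have hWt := (hWlip.le_add_mul (hmem t hleft) (hmem s hs)).trans
      (add_le_add_right (hdist t hleft s hs) _)
    have hdeficit : (W s - F i s) / h ≤ (δ ^ 2 + 2 * c * δ) / h := by
      gcongr
      linarith
    have hdecay : l * W t ≤ l * (W s + c * δ) := mul_le_mul_of_nonneg_left hWt hl
    linarith [hineq i s (hmem s hs)]
  have hEint : IntervalIntegrable E volume t (t + δ) := by
    rw [intervalIntegrable_iff_integrableOn_Ioc_of_le (by linarith)]
    exact hE.mono_set (Ioc_subset_Ioc ht htδ)
  have hincr := intervalIntegral.integral_mono_on (by linarith)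
    (hDi i t (t + δ) ht (by linarith) htδ) (intervalIntegrable_const.add hEint) hdrift
  rw [intervalIntegral.integral_add intervalIntegrable_const hEint,
    intervalIntegral.integral_const, smul_eq_mul, add_sub_cancel_left,
    ← hD i t (t + δ) ht (by linarith) htδ] at hincr
  have hFW : F i t ≤ W t := (hW t (hmem t hleft)).1 (mem_range_self i)
  have hsplit : δ * ((δ ^ 2 + 2 * c * δ) / h - l * W t + l * (c * δ)) =
      δ * (-l * W t + δ * (l * c + (δ + 2 * c) / h)) := by ring
  linarith

lemma le_exp_mul_add_integral_of_isLUB_range (hT : 0 ≤ T) (hh : 0 < h) (hl : 0 ≤ l)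
    (hW : ∀ s ∈ Icc 0 T, IsLUB (range fun i => F i s) (W s))
    (hD : ∀ i s t, 0 ≤ s → s ≤ t → t ≤ T → F i t - F i s = ∫ u in s..t, D i u)
    (hDi : ∀ i s t, 0 ≤ s → s ≤ t → t ≤ T → IntervalIntegrable (D i) volume s t)
    (hDc : ∀ i, ∀ s ∈ Icc 0 T, |D i s| ≤ c)
    (hE : IntegrableOn E (Ioc 0 T)) (hE0 : ∀ s, 0 ≤ E s)
    (hineq : ∀ i, ∀ s ∈ Icc 0 T, D i s ≤ (W s - F i s) / h - l * W s + E s) :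
    W T ≤ Real.exp (-l * T) * W 0 + ∫ s in (0 : ℝ)..T, E s := by
  have hF : ∀ i, LipschitzOnWith c (F i) (Icc 0 T) := fun i =>
    lipschitzOnWith_of_sub_eq_integral (hD i) (hDc i)
  have hEint : ∀ s t, 0 ≤ s → s ≤ t → t ≤ T → IntervalIntegrable E volume s t := by
    intro s t hs hst htT
    rw [intervalIntegrable_iff_integrableOn_Ioc_of_le hst]
    exact hE.mono_set (Ioc_subset_Ioc hs htT)
  have hprimitive : ContinuousOn (fun t => ∫ s in (0 : ℝ)..t, E s) (Icc 0 T) := by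
    simpa only [uIcc_of_le hT] using intervalIntegral.continuousOn_primitive_interval'
      (hEint 0 T le_rfl hT le_rfl) left_mem_uIcc
  have hr : Tendsto (fun δ => δ * (1 + l * c + (δ + 2 * c) / h)) (𝓝[>] 0) (𝓝 0) := by
    have hcont : Continuous fun δ : ℝ => δ * (1 + l * c + (δ + 2 * c) / h) := by fun_prop
    simpa only [zero_mul] using (hcont.tendsto 0).mono_left nhdsWithin_le_nhds
  have hgronwall := le_exp_mul_of_forall_sub_le (a := -l) hT
    ((lipschitzOnWith_of_isLUB_range hF hW).continuousOn.sub hprimitive) hr fun t δ ht hδ htδ => by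
      have hstep := sub_le_of_isLUB_range hh hl hF hW hD hDi hE hineq ht hδ htδ
      have hpos : 0 ≤ l * ∫ s in (0 : ℝ)..t, E s :=
        mul_nonneg hl (intervalIntegral.integral_nonneg ht fun s _ => hE0 s)
      have hadd := intervalIntegral.integral_add_adjacent_intervals
        (hEint 0 t le_rfl ht (by linarith)) (hEint t (t + δ) ht (by linarith) htδ)
      simp only [Pi.sub_apply]
      nlinarith [mul_nonneg hδ.le hpos]
  simp only [Pi.sub_apply, intervalIntegral.integral_same, sub_zero] at hgronwall
  linarith

end

/-! ### The Kantorovich distance and its mollification -/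

section

variable {E : Type*} [NormedAddCommGroup E] [MeasurableSpace E] [BorelSpace E]
  [SecondCountableTopology E]

lemma integrable_of_lipschitzWith {F : Type*} [NormedAddCommGroup F] {M : Measure E}
    [IsFiniteMeasure M] (hM : Integrable (fun x => ‖x‖) M) {K : ℝ≥0} {f : E → F}
    (hf : LipschitzWith K f) : Integrable f M := by
  refine ((hM.const_mul (K : ℝ)).add (integrable_const ‖f 0‖)).mono'
    hf.continuous.aestronglyMeasurable (.of_forall fun x => ?_)
  have hx := hf.norm_sub_le x 0
  rw [sub_zero] at hx
  exact (norm_le_norm_sub_add (f x) (f 0)).trans (add_le_add_left hx _)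

lemma integral_sub_integral_le_of_lipschitzWith {μ ν : Measure E} [IsProbabilityMeasure μ]
    [IsProbabilityMeasure ν] (hμ : Integrable (fun x => ‖x‖) μ)
    (hν : Integrable (fun x => ‖x‖) ν) {f : E → ℝ} (hf : LipschitzWith 1 f) :
    ∫ x, f x ∂μ - ∫ x, f x ∂ν ≤ ∫ x, ‖x‖ ∂μ + ∫ x, ‖x‖ ∂ν := by
  have hdiff : ∀ x, |f x - f 0| ≤ ‖x‖ := fun x => by
    simpa using hf.norm_sub_le x 0
  have hupper : ∫ x, f x ∂μ ≤ ∫ x, (f 0 + ‖x‖) ∂μ :=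
    integral_mono (integrable_of_lipschitzWith hμ hf) ((integrable_const _).add hμ)
      fun x => by linarith [(abs_le.1 (hdiff x)).2]
  have hlower : ∫ x, (f 0 - ‖x‖) ∂ν ≤ ∫ x, f x ∂ν :=
    integral_mono ((integrable_const _).sub hν) (integrable_of_lipschitzWith hν hf)
      fun x => by linarith [(abs_le.1 (hdiff x)).1]
  rw [integral_add (integrable_const _) hμ] at hupper
  rw [integral_sub (integrable_const _) hν] at hlower
  simp only [integral_const, probReal_univ, one_smul] at hupper hlower
  linarith

end

lemma le_kant {μ ν : Measure (Ed d)} [IsProbabilityMeasure μ]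
    [IsProbabilityMeasure ν] (hμ : Integrable (fun x => ‖x‖) μ)
    (hν : Integrable (fun x => ‖x‖) ν) {f : Ed d → ℝ} (hf : LipschitzWith 1 f) :
    ∫ x, f x ∂μ - ∫ x, f x ∂ν ≤ kant μ ν := by
  refine le_ciSup (f := fun f : {f : Ed d → ℝ // LipschitzWith 1 f} =>
    ∫ x, f.1 x ∂μ - ∫ x, f.1 x ∂ν) ⟨∫ x, ‖x‖ ∂μ + ∫ x, ‖x‖ ∂ν, ?_⟩ ⟨f, hf⟩
  rintro _ ⟨g, rfl⟩
  exact integral_sub_integral_le_of_lipschitzWith hμ hν g.2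

lemma kant_le_of_forall {μ ν : Measure (Ed d)} {a : ℝ}
    (h : ∀ f : Ed d → ℝ, LipschitzWith 1 f → ∫ x, f x ∂μ - ∫ x, f x ∂ν ≤ a) : kant μ ν ≤ a := by
  have : Nonempty {f : Ed d → ℝ // LipschitzWith 1 f} := ⟨fun _ => 0, LipschitzWith.const' 0⟩
  exact ciSup_le fun f => h f.1 f.2

lemma kant_eq_zero_of_subsingleton [Subsingleton (Ed d)] (μ ν : Measure (Ed d))
    [IsProbabilityMeasure μ] [IsProbabilityMeasure ν] : kant μ ν = 0 := by
  have hconst : ∀ (ρ : Measure (Ed d)) [IsProbabilityMeasure ρ] (f : Ed d → ℝ),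
      ∫ x, f x ∂ρ = f 0 := fun ρ _ f => by
    simp [integral_congr_ae (.of_forall fun x => congrArg f (Subsingleton.elim x 0) : f =ᵐ[ρ] _)]
  simp [kant, hconst]

/-- `ψ` is a smooth probability density vanishing outside the closed ball of radius `ε`. -/
structure IsMollifier (ε : ℝ) (ψ : Ed d → ℝ) : Prop where
  isTestFun : IsTestFun ψ
  nonneg : ∀ y, 0 ≤ ψ y
  integral_eq_one : ∫ y, ψ y = 1
  norm_le : ∀ y, ψ y ≠ 0 → ‖y‖ ≤ ε

lemma exists_isMollifier (d : ℕ) {ε : ℝ} (hε : 0 < ε) : ∃ ψ : Ed d → ℝ, IsMollifier ε ψ := by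
  let φ : ContDiffBump (0 : Ed d) := ⟨ε / 2, ε, half_pos hε, half_lt_self hε⟩
  refine ⟨φ.normed volume, ⟨φ.contDiff_normed, φ.hasCompactSupport_normed⟩, φ.nonneg_normed,
    φ.integral_normed, fun y hy => ?_⟩
  have hy' : y ∈ Function.support (φ.normed volume) := hy
  rw [φ.support_normed_eq] at hy'
  exact (mem_ball_zero_iff.1 hy').le

namespace IsMollifier

variable {ε : ℝ} {ψ : Ed d → ℝ}

lemma integral_abs (h : IsMollifier ε ψ) : ∫ y, |ψ y| = 1 := by
  simp_rw [abs_of_nonneg (h.nonneg _)]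
  exact h.integral_eq_one

lemma lipschitzWith_moll (h : IsMollifier ε ψ) {f : Ed d → ℝ} {K : ℝ≥0} (hf : LipschitzWith K f) :
    LipschitzWith K (moll ψ f) :=
  LipschitzWith.of_dist_le_mul fun x y => by
    rw [Real.dist_eq, dist_eq_norm]
    simpa only [h.integral_abs, one_mul] using abs_moll_sub_moll_le h.isTestFun hf x y

lemma abs_moll_sub_le (h : IsMollifier ε ψ) {f : Ed d → ℝ} (hf : Continuous f) {x : Ed d}
    {a b : ℝ} (hfb : ∀ y, ‖y‖ ≤ ε → |f (x - y) - b| ≤ a) : |moll ψ f x - b| ≤ a := by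
  have hψ := h.isTestFun.integrable (volume : Measure (Ed d))
  have haverage : moll ψ f x - b = ∫ y, (f (x - y) - b) * ψ y := by
    simp_rw [sub_mul]
    rw [integral_sub (integrable_moll_integrand h.isTestFun hf x) (hψ.const_mul b),
      integral_const_mul, h.integral_eq_one, mul_one, moll_apply]
  calc |moll ψ f x - b| ≤ ∫ y, a * ψ y := by
        rw [haverage, ← Real.norm_eq_abs]
        refine norm_integral_le_of_norm_le (hψ.const_mul a) (.of_forall fun y => ?_)
        rw [norm_mul, Real.norm_of_nonneg (h.nonneg y)]
        by_cases hy : ψ y = 0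
        · simp [hy]
        · exact mul_le_mul_of_nonneg_right (hfb y (h.norm_le y hy)) (h.nonneg y)
    _ = a := by rw [integral_const_mul, h.integral_eq_one, mul_one]

lemma abs_moll_sub_self_le (h : IsMollifier ε ψ) {f : Ed d → ℝ} (hf : LipschitzWith 1 f)
    (x : Ed d) : |moll ψ f x - f x| ≤ ε :=
  h.abs_moll_sub_le hf.continuous fun y hy =>
    (by simpa using hf.norm_sub_le (x - y) x : |f (x - y) - f x| ≤ ‖y‖).trans hy

end IsMollifier

/-- The truncation of `f` between the cones `± (n - ‖x‖)⁺`: it is compactly supported and keeps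
the Lipschitz constant `1`. -/
def coneCut (n : ℕ) (f : Ed d → ℝ) (x : Ed d) : ℝ :=
  max (-max (n - ‖x‖) 0) (min (f x) (max (n - ‖x‖) 0))

lemma lipschitzWith_coneCut (n : ℕ) {f : Ed d → ℝ} (hf : LipschitzWith 1 f) :
    LipschitzWith 1 (coneCut n f) := by
  have hcone : LipschitzWith 1 fun x : Ed d => max ((n : ℝ) - ‖x‖) 0 :=
    LipschitzWith.max_const
      (by simpa using (LipschitzWith.const (n : ℝ)).sub (lipschitzWith_one_norm (E := Ed d))) 0
  simpa using! hcone.neg.max (hf.min hcone)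

lemma hasCompactSupport_coneCut (n : ℕ) (f : Ed d → ℝ) : HasCompactSupport (coneCut n f) := by
  refine HasCompactSupport.intro (isCompact_closedBall (0 : Ed d) n) fun x hx => ?_
  rw [mem_closedBall_zero_iff, not_le] at hx
  simp [coneCut, hx.le]

lemma abs_coneCut_le (n : ℕ) (f : Ed d → ℝ) (x : Ed d) : |coneCut n f x| ≤ |f x| := by
  have hcone : 0 ≤ max ((n : ℝ) - ‖x‖) 0 := le_max_right _ _
  unfold coneCut
  grind

lemma coneCut_eq_self {n : ℕ} {f : Ed d → ℝ} {x : Ed d} (h : |f x| + ‖x‖ ≤ n) :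
    coneCut n f x = f x := by
  have hcone : max ((n : ℝ) - ‖x‖) 0 = n - ‖x‖ := max_eq_left (by linarith [abs_nonneg (f x)])
  have hfx : |f x| ≤ n - ‖x‖ := by linarith
  rw [coneCut, hcone, min_eq_left (abs_le.1 hfx).2, max_eq_right (abs_le.1 hfx).1]

/-- The compactly supported `1`-Lipschitz functions. -/
abbrev CompactLipschitz (d : ℕ) : Type :=
  {f : Ed d → ℝ // LipschitzWith 1 f ∧ HasCompactSupport f}

/-- The Kantorovich distance of the measures mollified by `ψ`, written with mollified Lipschitz
functions; compact support makes them test functions. -/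
def mollKant (ψ : Ed d → ℝ) (μ ν : Measure (Ed d)) : ℝ :=
  ⨆ f : CompactLipschitz d, (∫ x, moll ψ f.1 x ∂μ - ∫ x, moll ψ f.1 x ∂ν)

namespace IsMollifier

variable {ε : ℝ} {ψ : Ed d → ℝ} {μ ν : Measure (Ed d)} [IsProbabilityMeasure μ]
  [IsProbabilityMeasure ν]

lemma tendsto_moll_coneCut (h : IsMollifier ε ψ) {f : Ed d → ℝ} (hf : LipschitzWith 1 f)
    (x : Ed d) : Tendsto (fun n : ℕ => moll ψ (coneCut n f) x) atTop (𝓝 (moll ψ f x)) := by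
  refine tendsto_const_nhds.congr' ?_
  filter_upwards [(tendsto_natCast_atTop_atTop (R := ℝ)).eventually_ge_atTop
    (|f x| + ‖x‖ + 2 * ε)] with n hn
  rw [moll_apply, moll_apply]
  refine integral_congr_ae (.of_forall fun y => ?_)
  by_cases hy : ψ y = 0
  · simp [hy]
  · have hyε := h.norm_le y hy
    have hfxy : |f (x - y)| ≤ |f x| + ‖y‖ := by
      have hdiff : |f (x - y) - f x| ≤ ‖y‖ := by simpa using hf.norm_sub_le (x - y) x
      linarith [abs_sub_abs_le_abs_sub (f (x - y)) (f x)]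
    have hxy := norm_sub_le x y
    dsimp only
    rw [coneCut_eq_self (by linarith)]

lemma tendsto_integral_moll_coneCut (h : IsMollifier ε ψ) (hμ : Integrable (fun x => ‖x‖) μ)
    {f : Ed d → ℝ} (hf : LipschitzWith 1 f) :
    Tendsto (fun n : ℕ => ∫ x, moll ψ (coneCut n f) x ∂μ) atTop (𝓝 (∫ x, moll ψ f x ∂μ)) := by
  refine tendsto_integral_of_dominated_convergence (fun x => ε + |f x|)
    (fun n => (h.lipschitzWith_moll (lipschitzWith_coneCut n hf)).continuous.aestronglyMeasurable)
    ((integrable_const ε).add (integrable_of_lipschitzWith hμ hf).abs)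
    (fun n => .of_forall fun x => ?_) (.of_forall (h.tendsto_moll_coneCut hf))
  calc ‖moll ψ (coneCut n f) x‖
      ≤ |moll ψ (coneCut n f) x - coneCut n f x| + |coneCut n f x| :=
        norm_le_norm_sub_add _ _
    _ ≤ ε + |f x| :=
        add_le_add (h.abs_moll_sub_self_le (lipschitzWith_coneCut n hf) x) (abs_coneCut_le n f x)

lemma isLUB_mollKant (h : IsMollifier ε ψ) (hμ : Integrable (fun x => ‖x‖) μ)
    (hν : Integrable (fun x => ‖x‖) ν) :
    IsLUB (range fun f : CompactLipschitz d => ∫ x, moll ψ f.1 x ∂μ - ∫ x, moll ψ f.1 x ∂ν)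
      (mollKant ψ μ ν) := by
  have : Nonempty (CompactLipschitz d) :=
    ⟨fun _ => 0, LipschitzWith.const' 0, HasCompactSupport.zero⟩
  refine isLUB_ciSup ⟨kant μ ν, ?_⟩
  rintro _ ⟨f, rfl⟩
  exact le_kant hμ hν (h.lipschitzWith_moll f.2.1)

lemma mollKant_le_kant (h : IsMollifier ε ψ) (hμ : Integrable (fun x => ‖x‖) μ)
    (hν : Integrable (fun x => ‖x‖) ν) : mollKant ψ μ ν ≤ kant μ ν := by
  refine (h.isLUB_mollKant hμ hν).2 ?_
  rintro _ ⟨f, rfl⟩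
  exact le_kant hμ hν (h.lipschitzWith_moll f.2.1)

lemma integral_moll_sub_le (h : IsMollifier ε ψ) (hμ : Integrable (fun x => ‖x‖) μ)
    (hν : Integrable (fun x => ‖x‖) ν) {f : Ed d → ℝ} (hf : LipschitzWith 1 f) :
    ∫ x, moll ψ f x ∂μ - ∫ x, moll ψ f x ∂ν ≤ mollKant ψ μ ν :=
  le_of_tendsto'
    ((h.tendsto_integral_moll_coneCut hμ hf).sub (h.tendsto_integral_moll_coneCut hν hf))
    fun n => (h.isLUB_mollKant hμ hν).1
      ⟨⟨coneCut n f, lipschitzWith_coneCut n hf, hasCompactSupport_coneCut n f⟩, rfl⟩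

lemma integral_moll_sub_le_mul (h : IsMollifier ε ψ) (hμ : Integrable (fun x => ‖x‖) μ)
    (hν : Integrable (fun x => ‖x‖) ν) {f : Ed d → ℝ} {r : ℝ≥0} (hr : 0 < r)
    (hf : LipschitzWith r f) :
    ∫ x, moll ψ f x ∂μ - ∫ x, moll ψ f x ∂ν ≤ r * mollKant ψ μ ν := by
  have hr' : (0 : ℝ) < r := hr
  have hscaled : LipschitzWith 1 fun x => (r : ℝ)⁻¹ * f x :=
    LipschitzWith.of_dist_le_mul fun x y => by
      rw [Real.dist_eq, ← mul_sub, abs_mul, abs_of_pos (inv_pos.2 hr'), inv_mul_le_iff₀ hr',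
        NNReal.coe_one, one_mul]
      exact hf.dist_le_mul x y
  have hle := h.integral_moll_sub_le hμ hν hscaled
  simp_rw [moll_const_mul, integral_const_mul] at hle
  rwa [← mul_sub, inv_mul_le_iff₀ hr'] at hle

lemma kant_le_mollKant_add (h : IsMollifier ε ψ) (hμ : Integrable (fun x => ‖x‖) μ)
    (hν : Integrable (fun x => ‖x‖) ν) : kant μ ν ≤ mollKant ψ μ ν + 2 * ε := by
  refine kant_le_of_forall fun f hf => ?_
  have hclose : ∀ (M : Measure (Ed d)) [IsProbabilityMeasure M], Integrable (fun x => ‖x‖) M →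
      |∫ x, moll ψ f x ∂M - ∫ x, f x ∂M| ≤ ε := fun M _ hM => by
    rw [← integral_sub (integrable_of_lipschitzWith hM (h.lipschitzWith_moll hf))
      (integrable_of_lipschitzWith hM hf)]
    simpa using! norm_integral_le_of_norm_le_const (μ := M) (f := fun x => moll ψ f x - f x)
      (.of_forall (h.abs_moll_sub_self_le hf))
  have hle := h.integral_moll_sub_le hμ hν hf
  linarith [(abs_le.1 (hclose μ hμ)).1, (abs_le.1 (hclose ν hν)).2]

end IsMollifier

/-! ### Taylor bounds and the Euler step -/

section

variable {E : Type*} [NormedAddCommGroup E] [NormedSpace ℝ E]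

lemma hasDerivAt_comp_add_smul {g : E → ℝ} (hg : Differentiable ℝ g) (x v : E) (t : ℝ) :
    HasDerivAt (fun t : ℝ => g (x + t • v)) (fderiv ℝ g (x + t • v) v) t := by
  have hline : HasDerivAt (fun t : ℝ => x + t • v) v t := by
    simpa using ((hasDerivAt_id t).smul_const v).const_add x
  exact (hg (x + t • v)).hasFDerivAt.comp_hasDerivAt t hline

lemma abs_comp_add_smul_sub_sub_le {g : E → ℝ} (hg : Differentiable ℝ g) {c : ℝ} {x v : E}
    (hc : ∀ y, |fderiv ℝ g y v - fderiv ℝ g x v| ≤ c * ‖y - x‖) (t : ℝ) :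
    |g (x + t • v) - g x - t * fderiv ℝ g x v| ≤ c * ‖v‖ * t ^ 2 := by
  have hderiv : ∀ s ∈ Icc (0 : ℝ) 1, HasDerivWithinAt
      (fun s : ℝ => g (x + s • t • v) - s * (t * fderiv ℝ g x v))
      (t * (fderiv ℝ g (x + s • t • v) v - fderiv ℝ g x v)) (Icc 0 1) s := fun s _ => by
    simpa [mul_sub] using ((hasDerivAt_comp_add_smul hg x (t • v) s).fun_sub
      ((hasDerivAt_id s).mul_const (t * fderiv ℝ g x v))).hasDerivWithinAt
  have hbound : ∀ s ∈ Ico (0 : ℝ) 1,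
      ‖t * (fderiv ℝ g (x + s • t • v) v - fderiv ℝ g x v)‖ ≤ c * ‖v‖ * t ^ 2 := fun s hs => by
    have hc' : 0 ≤ c * ‖t • v‖ := by simpa using (abs_nonneg _).trans (hc (x + t • v))
    calc ‖t * (fderiv ℝ g (x + s • t • v) v - fderiv ℝ g x v)‖
        ≤ |t| * (c * (s * ‖t • v‖)) := by
          rw [norm_mul, Real.norm_eq_abs, Real.norm_eq_abs]
          gcongr
          simpa [norm_smul, abs_of_nonneg hs.1] using hc (x + s • t • v)
      _ ≤ |t| * (c * ‖t • v‖) := by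
          refine mul_le_mul_of_nonneg_left ?_ (abs_nonneg t)
          linarith [mul_nonneg hc' (sub_nonneg.2 hs.2.le)]
      _ = c * ‖v‖ * t ^ 2 := by
          rw [norm_smul, Real.norm_eq_abs, ← sq_abs]
          ring
  simpa [sub_right_comm] using
    norm_image_sub_le_of_norm_deriv_le_segment' hderiv hbound 1 (right_mem_Icc.2 zero_le_one)

lemma abs_second_difference_sub_le {g : E → ℝ} {c : ℝ} {x e : E} (hg : Differentiable ℝ g)
    (hg' : Differentiable ℝ fun y => fderiv ℝ g y e)
    (hc : ∀ y, |fderiv ℝ (fun z => fderiv ℝ g z e) y e - fderiv ℝ (fun z => fderiv ℝ g z e) x e|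
      ≤ c * ‖y - x‖) {a : ℝ} (ha : 0 ≤ a) :
    |g (x + a • e) + g (x - a • e) - 2 * g x - a ^ 2 * fderiv ℝ (fun z => fderiv ℝ g z e) x e|
      ≤ 2 * (c * ‖e‖) * a ^ 3 := by
  set H := fderiv ℝ (fun z => fderiv ℝ g z e) x e
  have hderiv : ∀ t ∈ Icc 0 a, HasDerivWithinAt
      (fun t : ℝ => g (x + t • e) + g (x - t • e) - t ^ 2 * H)
      (fderiv ℝ g (x + t • e) e - fderiv ℝ g (x - t • e) e - 2 * t * H) (Icc 0 a) t := by
    intro t _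
    have := ((hasDerivAt_comp_add_smul hg x e t).fun_add
      (hasDerivAt_comp_add_smul hg x (-e) t)).fun_sub (((hasDerivAt_id t).pow 2).mul_const H)
    simpa [← sub_eq_add_neg] using this.hasDerivWithinAt
  have hbound : ∀ t ∈ Ico 0 a,
      ‖fderiv ℝ g (x + t • e) e - fderiv ℝ g (x - t • e) e - 2 * t * H‖
        ≤ 2 * (c * ‖e‖) * a ^ 2 := fun t ht => by
    have hforward := abs_comp_add_smul_sub_sub_le hg' hc t
    have hbackward := abs_comp_add_smul_sub_sub_le hg' hc (-t)
    have hce : 0 ≤ c * ‖e‖ := by simpa using (abs_nonneg _).trans (hc (x + e))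
    have hta : c * ‖e‖ * t ^ 2 ≤ c * ‖e‖ * a ^ 2 :=
      mul_le_mul_of_nonneg_left (pow_le_pow_left₀ ht.1 ht.2.le 2) hce
    rw [neg_smul, ← sub_eq_add_neg, neg_sq] at hbackward
    rw [Real.norm_eq_abs, abs_le]
    rw [abs_le] at hforward hbackward
    constructor <;> linarith [hforward.1, hforward.2, hbackward.1, hbackward.2]
  have hmean := norm_image_sub_le_of_norm_deriv_le_segment' hderiv hbound a (right_mem_Icc.2 ha)
  calc _ = ‖g (x + a • e) + g (x - a • e) - a ^ 2 * H
        - (g (x + (0 : ℝ) • e) + g (x - (0 : ℝ) • e) - 0 ^ 2 * H)‖ := by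
        simp only [zero_smul, add_zero, sub_zero, Real.norm_eq_abs]
        congr 1
        ring
    _ ≤ 2 * (c * ‖e‖) * a ^ 2 * (a - 0) := hmean
    _ = _ := by ring

end

lemma IsDissipative.lipschitzWith_add_smul {E : Type*} [NormedAddCommGroup E]
    [InnerProductSpace ℝ E] {B : E → E} {K : ℝ≥0} {κ s : ℝ} (hdiss : IsDissipative κ B)
    (hB : LipschitzWith K B) (hs : 0 ≤ s) (hsκ : s * κ ≤ 1) :
    LipschitzWith (1 - s * κ + s ^ 2 * K ^ 2 / 2).toNNReal fun x => x + s • B x := by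
  refine LipschitzWith.of_dist_le' fun x y => ?_
  have hnonneg : 0 ≤ 1 - s * κ + s ^ 2 * (K : ℝ) ^ 2 / 2 := by
    have : 0 ≤ s ^ 2 * (K : ℝ) ^ 2 / 2 := by positivity
    linarith
  have hinner := mul_le_mul_of_nonneg_left (hdiss x y) (show 0 ≤ 2 * s by positivity)
  have hnorm : ‖B x - B y‖ ^ 2 ≤ (K * ‖x - y‖) ^ 2 :=
    pow_le_pow_left₀ (norm_nonneg _) (hB.norm_sub_le x y) 2
  have hsplit : x + s • B x - (y + s • B y) = (x - y) + s • (B x - B y) := by module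
  rw [dist_eq_norm, dist_eq_norm, hsplit]
  refine le_of_sq_le_sq ?_ (mul_nonneg hnonneg (norm_nonneg _))
  calc ‖x - y + s • (B x - B y)‖ ^ 2
      = ‖x - y‖ ^ 2 + 2 * s * ⟪x - y, B x - B y⟫ + s ^ 2 * ‖B x - B y‖ ^ 2 := by
        rw [norm_add_sq_real, norm_smul, inner_smul_right, Real.norm_of_nonneg hs]
        ring
    _ ≤ (1 - 2 * (s * κ) + s ^ 2 * K ^ 2) * ‖x - y‖ ^ 2 := by
        linarith [mul_le_mul_of_nonneg_left hnorm (sq_nonneg s)]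
    _ ≤ ((1 - s * κ + s ^ 2 * K ^ 2 / 2) * ‖x - y‖) ^ 2 := by
        rw [mul_pow]
        gcongr
        nlinarith [sq_nonneg (s * κ - s ^ 2 * K ^ 2 / 2)]

/-- The transition operator, over a time step `τ`, of a Markov chain approximating the diffusion
with drift `B`: with probability `1/2` a symmetric jump along a coordinate axis, otherwise a drift
step of length `2 * τ`. -/
def eulerStep (B : Ed d → Ed d) (τ : ℝ) (f : Ed d → ℝ) (x : Ed d) : ℝ :=
  (4 * d : ℝ)⁻¹ * ∑ i, (f (x + √(4 * d * τ) • EuclideanSpace.single i 1)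
      + f (x + -(√(4 * d * τ) • EuclideanSpace.single i 1)))
    + 2⁻¹ * f (x + (2 * τ) • B x)

section

variable {B : Ed d → Ed d} {K : ℝ≥0} {κ τ : ℝ} {f : Ed d → ℝ}

@[fun_prop]
lemma continuous_eulerStep (hB : Continuous B) (τ : ℝ) (hf : Continuous f) :
    Continuous (eulerStep B τ f) := by
  unfold eulerStep
  fun_prop

lemma abs_sum_shift_sub_le (hf : LipschitzWith 1 f) (e : Fin d → Ed d) (x y : Ed d) :
    |∑ i, (f (x + e i) + f (x + -e i)) - ∑ i, (f (y + e i) + f (y + -e i))|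
      ≤ 2 * d * dist x y := by
  have hshift : ∀ v, |f (x + v) - f (y + v)| ≤ dist x y := fun v => by
    simpa [Real.dist_eq] using hf.dist_le_mul (x + v) (y + v)
  rw [← Finset.sum_sub_distrib]
  calc _ ≤ ∑ _i : Fin d, 2 * dist x y :=
        (Finset.abs_sum_le_sum_abs _ _).trans <| Finset.sum_le_sum fun i _ => by
          rw [add_sub_add_comm, two_mul]
          exact (abs_add_le _ _).trans (add_le_add (hshift _) (hshift _))
    _ = 2 * d * dist x y := by simp; ring

lemma lipschitzWith_eulerStep (hd : 0 < d) (hB : LipschitzWith K B) (hdiss : IsDissipative κ B)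
    (hτ : 0 ≤ τ) (hτκ : 2 * τ * κ ≤ 1) (hf : LipschitzWith 1 f) :
    LipschitzWith (1 - τ * κ + τ ^ 2 * K ^ 2).toNNReal (eulerStep B τ f) := by
  refine LipschitzWith.of_dist_le' fun x y => ?_
  set e : Fin d → Ed d := fun i => √(4 * d * τ) • EuclideanSpace.single i 1
  have hd' : (0 : ℝ) < d := mod_cast hd
  have hdrift : |f (x + (2 * τ) • B x) - f (y + (2 * τ) • B y)|
      ≤ (1 - 2 * τ * κ + (2 * τ) ^ 2 * K ^ 2 / 2) * dist x y := by
    have hle := (hf.comp (hdiss.lipschitzWith_add_smul hB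
      (show 0 ≤ 2 * τ by positivity) hτκ)).dist_le_mul x y
    have hnonneg : 0 ≤ (2 * τ) ^ 2 * (K : ℝ) ^ 2 / 2 := by positivity
    rwa [one_mul, Real.coe_toNNReal _ (by linarith), Real.dist_eq] at hle
  have hscale : (4 * d : ℝ)⁻¹ * (2 * d * dist x y) = 2⁻¹ * dist x y := by
    field_simp
    ring
  calc dist (eulerStep B τ f x) (eulerStep B τ f y)
      = |(4 * d : ℝ)⁻¹ * (∑ i, (f (x + e i) + f (x + -e i)) - ∑ i, (f (y + e i) + f (y + -e i)))
          + 2⁻¹ * (f (x + (2 * τ) • B x) - f (y + (2 * τ) • B y))| := by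
        rw [Real.dist_eq, eulerStep, eulerStep]
        congr 1
        ring
    _ ≤ (4 * d : ℝ)⁻¹ * (2 * d * dist x y)
          + 2⁻¹ * ((1 - 2 * τ * κ + (2 * τ) ^ 2 * K ^ 2 / 2) * dist x y) := by
        refine (abs_add_le _ _).trans ?_
        rw [abs_mul, abs_mul, abs_of_pos (show (0 : ℝ) < (4 * (d : ℝ))⁻¹ by positivity),
          abs_of_pos (show (0 : ℝ) < 2⁻¹ by positivity)]
        gcongr
        exact abs_sum_shift_sub_le hf e x y
    _ = (1 - τ * κ + τ ^ 2 * K ^ 2) * dist x y := by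
        rw [hscale]
        ring

lemma abs_sum_shift_sub_lap_le (hf : ContDiff ℝ 2 f) {x : Ed d} {c : ℝ}
    (hc : ∀ i y, |hess2 f y i i - hess2 f x i i| ≤ c * ‖y - x‖) {a : ℝ} (ha : 0 ≤ a) :
    |∑ i, (f (x + a • EuclideanSpace.single i 1) + f (x + -(a • EuclideanSpace.single i 1)))
      - 2 * d * f x - a ^ 2 * lap f x| ≤ d * (2 * c * a ^ 3) := by
  have hsum :
      ∑ i, (f (x + a • EuclideanSpace.single i 1) + f (x + -(a • EuclideanSpace.single i 1)))
      - 2 * d * f x - a ^ 2 * lap f x = ∑ i, (f (x + a • EuclideanSpace.single i 1)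
        + f (x - a • EuclideanSpace.single i 1) - 2 * f x - a ^ 2 * hess2 f x i i) := by
    simp only [lap, ← sub_eq_add_neg, Finset.sum_sub_distrib, Finset.mul_sum, Finset.sum_const,
      Finset.card_univ, Fintype.card_fin, nsmul_eq_mul]
    ring
  have hdiff : Differentiable ℝ f := hf.differentiable (by norm_num)
  rw [hsum]
  refine (Finset.abs_sum_le_sum_abs _ _).trans ?_
  refine (Finset.sum_le_card_nsmul _ _ (2 * c * a ^ 3) fun i _ => ?_).trans_eq (by simp)
  have hdiff' : Differentiable ℝ fun y => fderiv ℝ f y (EuclideanSpace.single i 1) :=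
    ((hf.fderiv_right (m := 1) (by norm_num)).clm_apply contDiff_const).differentiable (by simp)
  simp_rw [hess2_eq_fderiv_fderiv hf] at hc ⊢
  simpa using abs_second_difference_sub_le hdiff hdiff' (hc i) ha

lemma abs_eulerStep_sub_le (hd : 0 < d) (hτ : 0 ≤ τ) (hf : ContDiff ℝ 2 f) {x : Ed d} {c₁ c₂ : ℝ}
    (hc₁ : ∀ y v, |fderiv ℝ f y v - fderiv ℝ f x v| ≤ c₁ * ‖v‖ * ‖y - x‖)
    (hc₂ : ∀ i y, |hess2 f y i i - hess2 f x i i| ≤ c₂ * ‖y - x‖) :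
    |eulerStep B τ f x - f x - τ * LopI B f x|
      ≤ τ * (2 * d * √(4 * d * τ) * c₂ + 2 * τ * c₁ * ‖B x‖ ^ 2) := by
  have hd' : (0 : ℝ) < d := mod_cast hd
  have hsq : √(4 * d * τ) ^ 2 = 4 * d * τ := Real.sq_sqrt (by positivity)
  set a := √(4 * d * τ)
  set S := ∑ i, (f (x + a • EuclideanSpace.single i 1) + f (x + -(a • EuclideanSpace.single i 1)))
  have hdiff : Differentiable ℝ f := hf.differentiable (by norm_num)
  have hjump : |S - 2 * d * f x - a ^ 2 * lap f x| ≤ d * (2 * c₂ * a ^ 3) :=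
    abs_sum_shift_sub_lap_le hf hc₂ (Real.sqrt_nonneg _)
  have hdrift : |f (x + (2 * τ) • B x) - f x - 2 * τ * fderiv ℝ f x (B x)|
      ≤ c₁ * ‖B x‖ * ‖B x‖ * (2 * τ) ^ 2 :=
    abs_comp_add_smul_sub_sub_le hdiff (fun y => hc₁ y (B x)) (2 * τ)
  calc |eulerStep B τ f x - f x - τ * LopI B f x|
      = |(4 * d : ℝ)⁻¹ * (S - 2 * d * f x - a ^ 2 * lap f x)
          + 2⁻¹ * (f (x + (2 * τ) • B x) - f x - 2 * τ * fderiv ℝ f x (B x))| := by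
        rw [LopI_eq, eulerStep, hsq]
        congr 1
        field_simp
        ring
    _ ≤ (4 * d : ℝ)⁻¹ * (d * (2 * c₂ * a ^ 3)) + 2⁻¹ * (c₁ * ‖B x‖ * ‖B x‖ * (2 * τ) ^ 2) := by
        refine (abs_add_le _ _).trans ?_
        rw [abs_mul, abs_mul, abs_of_pos (show (0 : ℝ) < (4 * (d : ℝ))⁻¹ by positivity),
          abs_of_pos (show (0 : ℝ) < 2⁻¹ by positivity)]
        gcongr
    _ = _ := by
        rw [pow_succ a 2, hsq]
        field_simp

end

/-- The bound for the error, per unit of time, of one mollified Euler step of length `τ` at a point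
where the drift, of Lipschitz constant `K`, has squared norm `v`. -/
def eulerError (ψ : Ed d → ℝ) (K ε τ v : ℝ) : ℝ :=
  K * ε + (2 * d * √(4 * d * τ) * (∑ j, ∫ z, |hess2 ψ z j j|)
    + 2 * τ * (∫ z, ‖fderiv ℝ ψ z‖) * v)

lemma tendsto_eulerError (ψ : Ed d → ℝ) (K ε v : ℝ) :
    Tendsto (fun τ => eulerError ψ K ε τ v) (𝓝[>] 0) (𝓝 (K * ε)) := by
  have hcont : Continuous fun τ => eulerError ψ K ε τ v := by
    unfold eulerError
    fun_prop
  simpa [eulerError] using (hcont.tendsto 0).mono_left nhdsWithin_le_nhds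

lemma eulerError_mono (ψ : Ed d → ℝ) (K ε : ℝ) {τ v w : ℝ} (hτ : 0 ≤ τ) (hvw : v ≤ w) :
    eulerError ψ K ε τ v ≤ eulerError ψ K ε τ w := by
  have : 0 ≤ ∫ z, ‖fderiv ℝ ψ z‖ := integral_nonneg fun z => norm_nonneg _
  unfold eulerError
  gcongr

lemma eulerError_nonneg (ψ : Ed d → ℝ) {K ε τ v : ℝ} (hK : 0 ≤ K) (hε : 0 ≤ ε) (hτ : 0 ≤ τ)
    (hv : 0 ≤ v) : 0 ≤ eulerError ψ K ε τ v := by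
  have hfderiv : 0 ≤ ∫ z, ‖fderiv ℝ ψ z‖ := integral_nonneg fun z => norm_nonneg _
  have hhess : 0 ≤ ∑ j, ∫ z, |hess2 ψ z j j| :=
    Finset.sum_nonneg fun j _ => integral_nonneg fun z => abs_nonneg _
  unfold eulerError
  positivity

lemma integral_eulerError {M : Measure (Ed d)} [IsProbabilityMeasure M] (ψ : Ed d → ℝ)
    (K ε τ : ℝ) {g : Ed d → ℝ} (hg : Integrable g M) :
    ∫ x, eulerError ψ K ε τ (g x) ∂M = eulerError ψ K ε τ (∫ x, g x ∂M) := by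
  simp_rw [eulerError, ← add_assoc]
  rw [integral_add (integrable_const _) (hg.const_mul _), integral_const_mul]
  simp

namespace IsMollifier

variable {ε : ℝ} {ψ : Ed d → ℝ} {f : Ed d → ℝ}

lemma abs_fderiv_moll_sub_le (h : IsMollifier ε ψ) (hf : LipschitzWith 1 f) (x y v : Ed d) :
    |fderiv ℝ (moll ψ f) x v - fderiv ℝ (moll ψ f) y v|
      ≤ (∫ z, ‖fderiv ℝ ψ z‖) * ‖v‖ * ‖x - y‖ := by
  rw [fderiv_moll h.isTestFun hf.continuous, fderiv_moll h.isTestFun hf.continuous]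
  refine (abs_moll_sub_moll_le (h.isTestFun.fderiv_apply v) hf x y).trans ?_
  rw [NNReal.coe_one, mul_one]
  gcongr
  rw [← integral_mul_const]
  have hint : Integrable fun z => ‖fderiv ℝ ψ z‖ :=
    ((h.isTestFun.1.continuous_fderiv (by simp)).integrable_of_hasCompactSupport
      (h.isTestFun.2.fderiv ℝ)).norm
  exact integral_mono ((h.isTestFun.fderiv_apply v).integrable _).abs (hint.mul_const _)
    fun z => (fderiv ℝ ψ z).le_opNorm v

lemma abs_hess2_moll_sub_le (h : IsMollifier ε ψ) (hf : LipschitzWith 1 f) (i : Fin d)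
    (x y : Ed d) :
    |hess2 (moll ψ f) x i i - hess2 (moll ψ f) y i i|
      ≤ (∑ j, ∫ z, |hess2 ψ z j j|) * ‖x - y‖ := by
  rw [hess2_moll h.isTestFun hf.continuous, hess2_moll h.isTestFun hf.continuous]
  refine (abs_moll_sub_moll_le (h.isTestFun.hess2 i i) hf x y).trans ?_
  rw [NNReal.coe_one, mul_one]
  gcongr
  exact Finset.single_le_sum (f := fun j => ∫ z, |hess2 ψ z j j|)
    (fun j _ => integral_nonneg fun z => abs_nonneg _) (Finset.mem_univ i)

lemma norm_fderiv_moll_le_one (h : IsMollifier ε ψ) (hf : LipschitzWith 1 f) (x : Ed d) :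
    ‖fderiv ℝ (moll ψ f) x‖ ≤ 1 := by
  simpa using norm_fderiv_le_of_lipschitz ℝ (x₀ := x) (h.lipschitzWith_moll hf)

lemma abs_lap_moll_le (h : IsMollifier ε ψ) (hf : LipschitzWith 1 f) (x : Ed d) :
    |lap (moll ψ f) x| ≤ d * ∫ z, ‖fderiv ℝ ψ z‖ := by
  have hnonneg : 0 ≤ ∫ z, ‖fderiv ℝ ψ z‖ := integral_nonneg fun z => norm_nonneg _
  refine (Finset.abs_sum_le_sum_abs _ _).trans ((Finset.sum_le_card_nsmul _ _
    (∫ z, ‖fderiv ℝ ψ z‖) fun i _ => ?_).trans_eq (by simp))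
  have hlip : LipschitzWith (∫ z, ‖fderiv ℝ ψ z‖).toNNReal
      fun y => fderiv ℝ (moll ψ f) y (EuclideanSpace.single i 1) :=
    LipschitzWith.of_dist_le' fun y z => by
      simpa [Real.dist_eq, dist_eq_norm] using
        h.abs_fderiv_moll_sub_le hf y z (EuclideanSpace.single i 1)
  rw [hess2_eq_fderiv_fderiv (contDiff_infty.1 (contDiff_moll h.isTestFun hf.continuous) 2)]
  have hle := ContinuousLinearMap.le_of_opNorm_le _
    (norm_fderiv_le_of_lipschitz ℝ (x₀ := x) hlip) (EuclideanSpace.single i 1)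
  simpa [hnonneg] using hle

lemma moll_eulerStep_const (h : IsMollifier ε ψ) (hf : Continuous f) (u : Ed d) (τ : ℝ)
    (x : Ed d) :
    moll ψ (eulerStep (fun _ => u) τ f) x = eulerStep (fun _ => u) τ (moll ψ f) x := by
  have hψ := h.isTestFun
  unfold eulerStep
  rw [moll_add hψ (by fun_prop) (by fun_prop), moll_const_mul, moll_const_mul,
    moll_sum _ hψ (by fun_prop), moll_comp_add_right]
  congr! with i
  rw [moll_add hψ (by fun_prop) (by fun_prop), moll_comp_add_right, moll_comp_add_right]

lemma abs_moll_eulerStep_sub_const_le (h : IsMollifier ε ψ) {B : Ed d → Ed d} {K : ℝ≥0}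
    (hB : LipschitzWith K B) (hf : LipschitzWith 1 f) {τ : ℝ} (hτ : 0 ≤ τ) (x : Ed d) :
    |moll ψ (eulerStep B τ f) x - moll ψ (eulerStep (fun _ => B x) τ f) x| ≤ τ * (K * ε) := by
  have hfc := hf.continuous
  have hBc := hB.continuous
  rw [← moll_sub h.isTestFun (by fun_prop) (by fun_prop)]
  refine (sub_zero (moll ψ _ x)).symm ▸ h.abs_moll_sub_le (by fun_prop) fun y hy => ?_
  have hstep : eulerStep B τ f (x - y) - eulerStep (fun _ => B x) τ f (x - y) - 0
      = 2⁻¹ * (f (x - y + (2 * τ) • B (x - y)) - f (x - y + (2 * τ) • B x)) := by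
    simp only [eulerStep]
    ring
  rw [hstep, abs_mul, abs_of_pos (by positivity)]
  calc 2⁻¹ * |f (x - y + (2 * τ) • B (x - y)) - f (x - y + (2 * τ) • B x)|
      ≤ 2⁻¹ * ((2 * τ) * ‖B (x - y) - B x‖) := by
        gcongr
        simpa [← smul_sub, norm_smul, abs_of_nonneg hτ] using
          hf.norm_sub_le (x - y + (2 * τ) • B (x - y)) (x - y + (2 * τ) • B x)
    _ = τ * ‖B (x - y) - B x‖ := by ring
    _ ≤ τ * (K * ‖y‖) := by
        gcongr
        simpa using hB.norm_sub_le (x - y) x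
    _ ≤ τ * (K * ε) := by gcongr

lemma abs_moll_eulerStep_sub_le (h : IsMollifier ε ψ) (hd : 0 < d) {B : Ed d → Ed d} {K : ℝ≥0}
    (hB : LipschitzWith K B) (hf : LipschitzWith 1 f) {τ : ℝ} (hτ : 0 ≤ τ) (x : Ed d) :
    |moll ψ (eulerStep B τ f) x - moll ψ f x - τ * LopI B (moll ψ f) x|
      ≤ τ * eulerError ψ K ε τ (‖B x‖ ^ 2) := by
  have hfrozen := h.abs_moll_eulerStep_sub_const_le hB hf hτ x
  rw [h.moll_eulerStep_const hf.continuous] at hfrozen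
  have htaylor := abs_eulerStep_sub_le (B := B) hd hτ
    (contDiff_infty.1 (contDiff_moll h.isTestFun hf.continuous) 2)
    (fun y v => h.abs_fderiv_moll_sub_le hf y x v) fun i y => h.abs_hess2_moll_sub_le hf i y x
  calc _ ≤ |moll ψ (eulerStep B τ f) x - eulerStep B τ (moll ψ f) x|
        + |eulerStep B τ (moll ψ f) x - moll ψ f x - τ * LopI B (moll ψ f) x| := by
        rw [sub_sub _ (moll ψ f x), sub_sub _ (moll ψ f x)]
        exact abs_sub_le _ _ _
    _ ≤ _ := by
        rw [eulerError, mul_add]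
        exact add_le_add hfrozen htaylor

lemma abs_integral_moll_eulerStep_sub_le (h : IsMollifier ε ψ) (hd : 0 < d) {B : Ed d → Ed d}
    {K : ℝ≥0} (hB : LipschitzWith K B) (hf : LipschitzWith 1 f) (hfc : HasCompactSupport f) {τ : ℝ}
    (hτ : 0 ≤ τ) {M : Measure (Ed d)} [IsProbabilityMeasure M]
    (hM : Integrable (fun x => ‖B x‖ ^ 2) M) :
    |∫ x, moll ψ (eulerStep B τ f) x ∂M - ∫ x, moll ψ f x ∂M - τ * ∫ x, LopI B (moll ψ f) x ∂M|
      ≤ τ * eulerError ψ K ε τ (∫ x, ‖B x‖ ^ 2 ∂M) := by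
  have hg := isTestFun_moll h.isTestFun hf.continuous hfc
  have hL : Integrable (LopI B (moll ψ f)) M :=
    (hasPolyGrowth_of_lipschitzWith hB le_rfl).integrable_LopI hB.continuous.measurable hg
  have hstep : Continuous (moll ψ (eulerStep B τ f)) :=
    (contDiff_moll h.isTestFun (continuous_eulerStep hB.continuous τ hf.continuous)).continuous
  have hbound : Integrable (fun x => τ * eulerError ψ K ε τ (‖B x‖ ^ 2)) M :=
    ((integrable_const _).add ((integrable_const _).add (hM.const_mul _))).const_mul _
  have herror : Integrable
      (fun x => moll ψ (eulerStep B τ f) x - moll ψ f x - τ * LopI B (moll ψ f) x) M :=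
    hbound.mono' ((hstep.aestronglyMeasurable.sub (hg.integrable M).1).sub (hL.const_mul τ).1)
      (.of_forall (h.abs_moll_eulerStep_sub_le hd hB hf hτ))
  have hS : Integrable (moll ψ (eulerStep B τ f)) M :=
    ((herror.add (hL.const_mul τ)).add (hg.integrable M)).congr (.of_forall fun x => by simp)
  have hincrement : Integrable (fun x => moll ψ (eulerStep B τ f) x - moll ψ f x) M :=
    hS.sub (hg.integrable M)
  calc _ = |∫ x, (moll ψ (eulerStep B τ f) x - moll ψ f x - τ * LopI B (moll ψ f) x) ∂M| := by
        rw [integral_sub hincrement (hL.const_mul τ), integral_sub hS (hg.integrable M),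
          integral_const_mul]
    _ ≤ ∫ x, τ * eulerError ψ K ε τ (‖B x‖ ^ 2) ∂M := by
        rw [← Real.norm_eq_abs]
        exact norm_integral_le_of_norm_le hbound
          (.of_forall (h.abs_moll_eulerStep_sub_le hd hB hf hτ))
    _ = _ := by rw [integral_const_mul, integral_eulerError ψ K ε τ hM]

end IsMollifier

/-! ### Contraction in the Kantorovich distance -/

lemma integrable_norm_of_one_add_norm_rpow {M : Measure (Ed d)} {p : ℝ} (hp : 1 ≤ p)
    (hM : Integrable (fun x => (1 + ‖x‖) ^ p) M) : Integrable (fun x => ‖x‖) M :=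
  (hasPolyGrowth_of_lipschitzWith LipschitzWith.id hp).integrable_norm measurable_id hM

lemma abs_integral_LopI_sub_le {M : Measure (Ed d)} {B₁ B₂ : Ed d → Ed d} {φ : Ed d → ℝ}
    (hφ : ∀ x, ‖fderiv ℝ φ x‖ ≤ 1) (h₁ : Integrable (LopI B₁ φ) M)
    (h₂ : Integrable (LopI B₂ φ) M) (hi : Integrable (fun x => ‖B₁ x - B₂ x‖) M) :
    |∫ x, LopI B₁ φ x ∂M - ∫ x, LopI B₂ φ x ∂M| ≤ ∫ x, ‖B₁ x - B₂ x‖ ∂M := by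
  rw [← integral_sub h₁ h₂, ← Real.norm_eq_abs]
  refine norm_integral_le_of_norm_le hi (.of_forall fun x => ?_)
  rw [LopI_eq, LopI_eq, add_sub_add_left_eq_sub, ← map_sub]
  simpa using (fderiv ℝ φ x).le_of_opNorm_le (hφ x) (B₁ x - B₂ x)

namespace IsMollifier

variable {ε κ τ : ℝ} {ψ f : Ed d → ℝ} {B : Ed d → Ed d} {K : ℝ≥0} {μ σ : Measure (Ed d)}
  [IsProbabilityMeasure μ] [IsProbabilityMeasure σ]

-- The Euler step of size `τ` contracts Lipschitz constants by `1 - τ κ + O(τ²)`, and its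
-- difference quotient is the generator up to `eulerError`.
lemma integral_LopI_sub_le (h : IsMollifier ε ψ) (hd : 0 < d) (hB : LipschitzWith K B)
    (hdiss : IsDissipative κ B) (hτ : 0 < τ) (hτκ : 2 * τ * κ ≤ 1)
    (hμ : Integrable (fun x => ‖x‖) μ) (hσ : Integrable (fun x => ‖x‖) σ)
    (hμB : Integrable (fun x => ‖B x‖ ^ 2) μ) (hσB : Integrable (fun x => ‖B x‖ ^ 2) σ) {v : ℝ}
    (hμv : ∫ x, ‖B x‖ ^ 2 ∂μ ≤ v) (hσv : ∫ x, ‖B x‖ ^ 2 ∂σ ≤ v)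
    (hf : LipschitzWith 1 f) (hfc : HasCompactSupport f) :
    ∫ x, LopI B (moll ψ f) x ∂μ - ∫ x, LopI B (moll ψ f) x ∂σ
      ≤ (mollKant ψ μ σ - (∫ x, moll ψ f x ∂μ - ∫ x, moll ψ f x ∂σ)) / τ
        - (κ - τ * K ^ 2) * mollKant ψ μ σ + 2 * eulerError ψ K ε τ v := by
  have hrate : 0 < 1 - τ * κ + τ ^ 2 * K ^ 2 := by
    nlinarith [mul_nonneg (sq_nonneg τ) (sq_nonneg (K : ℝ))]
  have hstep := h.integral_moll_sub_le_mul hμ hσ (Real.toNNReal_pos.2 hrate)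
    (lipschitzWith_eulerStep hd hB hdiss hτ.le hτκ hf)
  rw [Real.coe_toNNReal _ hrate.le] at hstep
  have hconsistent : ∀ (M : Measure (Ed d)) [IsProbabilityMeasure M],
      Integrable (fun x => ‖B x‖ ^ 2) M → ∫ x, ‖B x‖ ^ 2 ∂M ≤ v →
      |∫ x, moll ψ (eulerStep B τ f) x ∂M - ∫ x, moll ψ f x ∂M
        - τ * ∫ x, LopI B (moll ψ f) x ∂M| ≤ τ * eulerError ψ K ε τ v := fun M _ hM hMv =>
    (h.abs_integral_moll_eulerStep_sub_le hd hB hf hfc hτ.le hM).trans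
      (mul_le_mul_of_nonneg_left (eulerError_mono ψ K ε hτ.le hMv) hτ.le)
  have hμstep := (abs_le.1 (hconsistent μ hμB hμv)).1
  have hσstep := (abs_le.1 (hconsistent σ hσB hσv)).2
  refine le_of_mul_le_mul_left ?_ hτ
  rw [mul_add, mul_sub τ (_ / τ), mul_div_cancel₀ _ hτ.ne']
  linarith

lemma abs_integral_LopI_moll_le (h : IsMollifier ε ψ) (hf : LipschitzWith 1 f)
    (hfc : HasCompactSupport f) {m c : ℝ} {β : Ed d → Ed d} (hβ : Measurable β)
    (hβgrow : HasPolyGrowth c m β) (hμ : Integrable (fun x => (1 + ‖x‖) ^ m) μ) :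
    |∫ x, LopI β (moll ψ f) x ∂μ|
      ≤ d * (∫ z, ‖fderiv ℝ ψ z‖) + c * ∫ x, (1 + ‖x‖) ^ m ∂μ := by
  rw [hβgrow.integral_LopI_eq hβ (isTestFun_moll h.isTestFun hf.continuous hfc)]
  refine (abs_add_le _ _).trans (add_le_add ?_ ?_)
  · simpa using! norm_integral_le_of_norm_le_const (μ := μ) (f := lap (moll ψ f))
      (.of_forall (h.abs_lap_moll_le hf))
  · simpa using hβgrow.abs_integral_fderiv_apply_le zero_le_one (h.norm_fderiv_moll_le_one hf) hμ

end IsMollifier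

lemma integral_LopI_le_of_isStationarySolI {m c c' δ : ℝ} {β b B : Ed d → Ed d}
    {μ σ : Measure (Ed d)} [IsProbabilityMeasure μ] [IsProbabilityMeasure σ] {φ : Ed d → ℝ}
    (hφ : IsTestFun φ) (hφ1 : ∀ x, ‖fderiv ℝ φ x‖ ≤ 1) (hβ : Measurable β)
    (hβgrow : HasPolyGrowth c m β) (hb : Measurable b) (hbgrow : HasPolyGrowth c m b)
    (hB : Measurable B) (hBgrow : HasPolyGrowth c' m B)
    (hμ : Integrable (fun x => (1 + ‖x‖) ^ m) μ) (hσm : Integrable (fun x => (1 + ‖x‖) ^ m) σ)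
    (hσ : IsStationarySolI b σ) (hβb : ∀ x, ‖β x - b x‖ ≤ δ) :
    ∫ x, LopI β φ x ∂μ ≤ (∫ x, LopI B φ x ∂μ - ∫ x, LopI B φ x ∂σ)
      + (δ + ∫ x, ‖b x - B x‖ ∂μ + ∫ x, ‖b x - B x‖ ∂σ) := by
  have hμbB := (hbgrow.sub hBgrow).integrable_norm (hb.sub hB) hμ
  have hμβB := (hβgrow.sub hBgrow).integrable_norm (hβ.sub hB) hμ
  have hflow := (abs_le.1 (abs_integral_LopI_sub_le hφ1 (hβgrow.integrable_LopI hβ hφ)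
    (hBgrow.integrable_LopI hB hφ) hμβB)).2
  have hstat := (abs_le.1 (abs_integral_LopI_sub_le hφ1 (hbgrow.integrable_LopI hb hφ)
    (hBgrow.integrable_LopI hB hφ) ((hbgrow.sub hBgrow).integrable_norm (hb.sub hB) hσm))).1
  rw [hσ φ hφ] at hstat
  have htriangle : ∫ x, ‖β x - B x‖ ∂μ ≤ δ + ∫ x, ‖b x - B x‖ ∂μ :=
    calc ∫ x, ‖β x - B x‖ ∂μ ≤ ∫ x, (δ + ‖b x - B x‖) ∂μ :=
          integral_mono hμβB ((integrable_const δ).add hμbB) fun x =>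
            (norm_sub_le_norm_sub_add_norm_sub _ (b x) _).trans (add_le_add_left (hβb x) _)
      _ = δ + ∫ x, ‖b x - B x‖ ∂μ := by
          rw [integral_add (integrable_const δ) hμbB]
          simp
  linarith

/-- `σ` is a stationary probability measure for a drift `b` of polynomial growth, with the moment
of order `m + 1` that the Euler steps need. -/
structure IsEquilibrium (m c : ℝ) (b : Ed d → Ed d) (σ : Measure (Ed d)) : Prop where
  prob : IsProbabilityMeasure σ
  meas : Measurable b
  grow : HasPolyGrowth c m b
  moment : Integrable (fun x => (1 + ‖x‖) ^ (m + 1)) σ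
  stationary : IsStationarySolI b σ

namespace IsFlow

variable {m c C κ T Q η ε τ : ℝ} {β : ℝ → Ed d → Ed d} {b B : Ed d → Ed d}
  {μ : ℝ → Measure (Ed d)} {σ : Measure (Ed d)} {K : ℝ≥0} {ψ : Ed d → ℝ}

lemma integral_LopI_moll_le (h : IsFlow m c β μ) (hd : 0 < d) (hC : 0 ≤ C)
    (hmom : ∀ s, Integrable (fun x => (1 + ‖x‖) ^ (m + 1)) (μ s))
    (hσ : IsEquilibrium m c b σ) (hσQ : ∫ x, (1 + ‖x‖) ^ (m + 1) ∂σ ≤ Q)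
    (hβ : ∀ s x, ‖β s x - b x‖ ≤ C * kant (μ s) σ) (hB : IsDriftApprox κ η T K b B μ σ)
    (hψ : IsMollifier ε ψ) (hτ : 0 < τ) (hτκ : 2 * τ * κ ≤ 1) (f : CompactLipschitz d) {s : ℝ}
    (hsQ : ∫ x, (1 + ‖x‖) ^ (m + 1) ∂(μ s) ≤ Q) :
    ∫ x, LopI (β s) (moll ψ f.1) x ∂(μ s)
      ≤ (mollKant ψ (μ s) σ - (∫ x, moll ψ f.1 x ∂(μ s) - ∫ x, moll ψ f.1 x ∂σ)) / τ
        - (κ - C - τ * K ^ 2) * mollKant ψ (μ s) σ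
        + (∫ x, ‖b x - B x‖ ∂(μ s)
          + (2 * C * ε + η + 2 * eulerError ψ K ε τ ((‖B 0‖ + K) ^ 2 * Q))) := by
  have hm := h.one_le
  have := h.prob s
  have := hσ.prob
  have hBm : Measurable B := hB.lipschitzWith.continuous.measurable
  have hBgrow := hasPolyGrowth_of_lipschitzWith hB.lipschitzWith le_rfl
  have hsq : ∀ {M : Measure (Ed d)}, Integrable (fun x => (1 + ‖x‖) ^ (m + 1)) M →
      ∫ x, (1 + ‖x‖) ^ (m + 1) ∂M ≤ Q → ∫ x, ‖B x‖ ^ 2 ∂M ≤ (‖B 0‖ + K) ^ 2 * Q := fun hM hMQ =>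
    (hBgrow.integral_norm_sq_le hBm (by linarith) hM).trans (by gcongr)
  have hμ1 := integrable_norm_of_one_add_norm_rpow (by linarith) (hmom s)
  have hσ1 := integrable_norm_of_one_add_norm_rpow (by linarith) hσ.moment
  have heuler := hψ.integral_LopI_sub_le hd hB.lipschitzWith hB.isDissipative hτ hτκ hμ1 hσ1
    (hBgrow.integrable_norm_sq hBm (by linarith) (hmom s))
    (hBgrow.integrable_norm_sq hBm (by linarith) hσ.moment)
    (hsq (hmom s) hsQ) (hsq hσ.moment hσQ) f.2.1 f.2.2
  have hdrift := integral_LopI_le_of_isStationarySolI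
    (isTestFun_moll hψ.isTestFun f.2.1.continuous f.2.2) (hψ.norm_fderiv_moll_le_one f.2.1)
    (h.meas s) (h.grow s) hσ.meas hσ.grow hBm (hasPolyGrowth_of_lipschitzWith hB.lipschitzWith hm)
    (integrable_one_add_norm_rpow_of_le (by linarith) (hmom s))
    (integrable_one_add_norm_rpow_of_le (by linarith) hσ.moment) hσ.stationary (hβ s)
  have hkant := mul_le_mul_of_nonneg_left (hψ.kant_le_mollKant_add hμ1 hσ1) hC
  linarith [hB.integral_le]

lemma abs_integral_LopI_moll_le (h : IsFlow m c β μ) (hψ : IsMollifier ε ψ)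
    (f : CompactLipschitz d) {s : ℝ} (hmom : Integrable (fun x => (1 + ‖x‖) ^ (m + 1)) (μ s))
    (hsQ : ∫ x, (1 + ‖x‖) ^ (m + 1) ∂(μ s) ≤ Q) :
    |∫ x, LopI (β s) (moll ψ f.1) x ∂(μ s)| ≤ d * (∫ z, ‖fderiv ℝ ψ z‖) + c * Q := by
  have := h.prob s
  refine (hψ.abs_integral_LopI_moll_le f.2.1 f.2.2 (h.meas s) (h.grow s)
    (integrable_one_add_norm_rpow_of_le (by linarith) hmom)).trans ?_
  gcongr
  · exact (h.grow s).nonneg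
  · exact (integral_one_add_norm_rpow_le_of_le (by linarith) hmom).trans hsQ

lemma mollKant_le_add_eulerError (h : IsFlow m c β μ) (hd : 0 < d) (hC : 0 ≤ C) (hT : 0 ≤ T)
    (hmom : ∀ s, Integrable (fun x => (1 + ‖x‖) ^ (m + 1)) (μ s))
    (hQ : ∀ s, s ≤ T → ∫ x, (1 + ‖x‖) ^ (m + 1) ∂(μ s) ≤ Q)
    (hσ : IsEquilibrium m c b σ) (hσQ : ∫ x, (1 + ‖x‖) ^ (m + 1) ∂σ ≤ Q)
    (hβ : ∀ s x, ‖β s x - b x‖ ≤ C * kant (μ s) σ) (hB : IsDriftApprox κ η T K b B μ σ)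
    (hψ : IsMollifier ε ψ) (hε : 0 ≤ ε) (hτ : 0 < τ) (hτκ : 2 * τ * κ ≤ 1)
    (hrate : 0 ≤ κ - C - τ * K ^ 2) :
    mollKant ψ (μ T) σ ≤ Real.exp (-(κ - C - τ * K ^ 2) * T) * mollKant ψ (μ 0) σ
      + (η + T * (2 * C * ε + η + 2 * eulerError ψ K ε τ ((‖B 0‖ + K) ^ 2 * Q))) := by
  have hm := h.one_le
  have hprob := h.prob
  have := hσ.prob
  have hQ0 : 0 ≤ Q := (integral_nonneg fun x => by positivity).trans hσQ
  have hη : 0 ≤ η := (integral_nonneg fun x => norm_nonneg _).trans hB.integral_le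
  have herror := eulerError_nonneg ψ K.coe_nonneg hε hτ.le
    (show 0 ≤ (‖B 0‖ + K) ^ 2 * Q by positivity)
  set R := 2 * C * ε + η + 2 * eulerError ψ K ε τ ((‖B 0‖ + K) ^ 2 * Q)
  have hR0 : 0 ≤ R := by positivity
  have hRint : IntegrableOn (fun _ : ℝ => R) (Ioc 0 T) := integrableOn_const (by simp)
  have htest := fun f : CompactLipschitz d =>
    isTestFun_moll hψ.isTestFun f.2.1.continuous f.2.2
  have hgronwall := le_exp_mul_add_integral_of_isLUB_range
    (F := fun (f : CompactLipschitz d) s => ∫ x, moll ψ f.1 x ∂(μ s) - ∫ x, moll ψ f.1 x ∂σ)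
    (D := fun f s => ∫ x, LopI (β s) (moll ψ f.1) x ∂(μ s)) (W := fun s => mollKant ψ (μ s) σ)
    (E := fun s => ∫ x, ‖b x - B x‖ ∂(μ s) + R) hT hτ hrate
    (fun s _ => hψ.isLUB_mollKant
      (integrable_norm_of_one_add_norm_rpow (by linarith) (hmom s))
      (integrable_norm_of_one_add_norm_rpow (by linarith) hσ.moment))
    (fun f s t hs hst _ => by rw [← h.sub_eq (htest f) hs (hs.trans hst)]; ring)
    (fun f s t hs hst _ => (h.intervalIntegrable (htest f) hs).symm.trans
      (h.intervalIntegrable (htest f) (hs.trans hst)))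
    (fun f s hs => (h.abs_integral_LopI_moll_le hψ f (hmom s) (hQ s hs.2)).trans
      (Real.le_coe_toNNReal _))
    (hB.integrableOn.add hRint)
    (fun s => add_nonneg (integral_nonneg fun x => norm_nonneg _) hR0)
    (fun f s hs => h.integral_LopI_moll_le hd hC hmom hσ hσQ hβ hB hψ hτ hτκ f (hQ s hs.2))
  refine hgronwall.trans (add_le_add_right ?_ _)
  rw [intervalIntegral.integral_of_le hT, integral_add hB.integrableOn hRint]
  simpa [hT] using hB.setIntegral_le

lemma mollKant_le (h : IsFlow m c β μ) (hd : 0 < d) (hC : 0 ≤ C) (hCκ : C < κ) (hT : 0 ≤ T)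
    (hmom : ∀ s, Integrable (fun x => (1 + ‖x‖) ^ (m + 1)) (μ s))
    (hQ : ∀ s, s ≤ T → ∫ x, (1 + ‖x‖) ^ (m + 1) ∂(μ s) ≤ Q)
    (hσ : IsEquilibrium m c b σ) (hσQ : ∫ x, (1 + ‖x‖) ^ (m + 1) ∂σ ≤ Q)
    (hβ : ∀ s x, ‖β s x - b x‖ ≤ C * kant (μ s) σ) (hB : IsDriftApprox κ η T K b B μ σ)
    (hψ : IsMollifier ε ψ) (hε : 0 ≤ ε) :
    mollKant ψ (μ T) σ ≤ Real.exp (-(κ - C) * T) * mollKant ψ (μ 0) σ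
      + (η + T * (2 * C * ε + η + 2 * (K * ε))) := by
  have hrate : Tendsto (fun τ => κ - C - τ * (K : ℝ) ^ 2) (𝓝[>] 0) (𝓝 (κ - C)) :=
    tendsto_nhdsWithin_of_tendsto_nhds (Continuous.tendsto' (by fun_prop) _ _ (by simp))
  have hsmall : Tendsto (fun τ => 2 * τ * κ) (𝓝[>] 0) (𝓝 0) :=
    tendsto_nhdsWithin_of_tendsto_nhds (Continuous.tendsto' (by fun_prop) _ _ (by simp))
  have hexp := Real.continuous_exp.continuousAt.tendsto.comp (hrate.neg.mul_const T)
  have herror := tendsto_eulerError ψ K ε ((‖B 0‖ + K) ^ 2 * Q)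
  refine ge_of_tendsto ((hexp.mul_const (mollKant ψ (μ 0) σ)).add
    (((herror.const_mul 2).const_add (2 * C * ε + η)).const_mul T |>.const_add η)) ?_
  filter_upwards [self_mem_nhdsWithin, hsmall.eventually_le_const one_pos,
    hrate.eventually_const_le (sub_pos.2 hCκ)] with τ hτ hτκ hτrate
  exact h.mollKant_le_add_eulerError hd hC hT hmom hQ hσ hσQ hβ hB hψ hε hτ hτκ hτrate

lemma kant_le_add (h : IsFlow m c β μ) (hd : 0 < d) (hC : 0 ≤ C) (hCκ : C < κ) (hT : 0 ≤ T)
    (hmom : ∀ s, Integrable (fun x => (1 + ‖x‖) ^ (m + 1)) (μ s))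
    (hQ : ∀ s, s ≤ T → ∫ x, (1 + ‖x‖) ^ (m + 1) ∂(μ s) ≤ Q)
    (hσ : IsEquilibrium m c b σ) (hσQ : ∫ x, (1 + ‖x‖) ^ (m + 1) ∂σ ≤ Q)
    (hβ : ∀ s x, ‖β s x - b x‖ ≤ C * kant (μ s) σ) (hB : IsDriftApprox κ η T K b B μ σ) :
    kant (μ T) σ ≤ Real.exp (-(κ - C) * T) * kant (μ 0) σ + (η + T * η) := by
  have hm := h.one_le
  have hprob := h.prob
  have := hσ.prob
  have hnorm := fun s => integrable_norm_of_one_add_norm_rpow (by linarith) (hmom s)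
  have hσ1 := integrable_norm_of_one_add_norm_rpow (by linarith) hσ.moment
  have hlim : Tendsto (fun ε : ℝ => Real.exp (-(κ - C) * T) * kant (μ 0) σ
      + (η + T * (2 * C * ε + η + 2 * (K * ε))) + 2 * ε) (𝓝[>] 0)
      (𝓝 (Real.exp (-(κ - C) * T) * kant (μ 0) σ + (η + T * η))) :=
    tendsto_nhdsWithin_of_tendsto_nhds (Continuous.tendsto' (by fun_prop) _ _ (by simp))
  refine ge_of_tendsto hlim ?_
  filter_upwards [self_mem_nhdsWithin] with ε hε
  obtain ⟨ψ, hψ⟩ := exists_isMollifier d hε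
  calc kant (μ T) σ ≤ mollKant ψ (μ T) σ + 2 * ε := hψ.kant_le_mollKant_add (hnorm T) hσ1
    _ ≤ Real.exp (-(κ - C) * T) * mollKant ψ (μ 0) σ
          + (η + T * (2 * C * ε + η + 2 * (K * ε))) + 2 * ε := by
        gcongr
        exact h.mollKant_le hd hC hCκ hT hmom hQ hσ hσQ hβ hB hψ (le_of_lt hε)
    _ ≤ _ := by
        gcongr
        exact hψ.mollKant_le_kant (hnorm 0) hσ1

theorem kant_le (h : IsFlow m c β μ) (hC : 0 ≤ C) (hCκ : C < κ) (hT : 0 ≤ T)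
    (hmom : ∀ s, Integrable (fun x => (1 + ‖x‖) ^ (m + 1)) (μ s))
    (hβdiss : ∀ s, IsDissipative κ (β s)) (hσ : IsEquilibrium m c b σ)
    (hbdiss : IsDissipative κ b) (hβ : ∀ s x, ‖β s x - b x‖ ≤ C * kant (μ s) σ) :
    kant (μ T) σ ≤ Real.exp (-(κ - C) * T) * kant (μ 0) σ := by
  have hprob := h.prob
  have := hσ.prob
  rcases Nat.eq_zero_or_pos d with rfl | hd
  · simp [kant_eq_zero_of_subsingleton]
  have hle : m ≤ m + 1 := by linarith
  obtain ⟨Q, hQ⟩ := h.exists_integral_one_add_norm_rpow_le (hC.trans_lt hCκ)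
    (by linarith [h.one_le]) hβdiss hmom T
  have hQmax := fun s hs => (hQ s hs).trans (le_max_left Q (∫ x, (1 + ‖x‖) ^ (m + 1) ∂σ))
  have hlim : Tendsto (fun η : ℝ => Real.exp (-(κ - C) * T) * kant (μ 0) σ + (η + T * η))
      (𝓝[>] 0) (𝓝 (Real.exp (-(κ - C) * T) * kant (μ 0) σ)) :=
    tendsto_nhdsWithin_of_tendsto_nhds (Continuous.tendsto' (by fun_prop) _ _ (by simp))
  refine ge_of_tendsto hlim ?_
  filter_upwards [self_mem_nhdsWithin] with η hη
  obtain ⟨B, K, hB⟩ := h.exists_isDriftApprox hd hT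
    (fun s => integrable_one_add_norm_rpow_of_le hle (hmom s))
    (fun s hs => (integral_one_add_norm_rpow_le_of_le hle (hmom s)).trans (hQ s hs))
    hσ.meas hσ.grow hbdiss (integrable_one_add_norm_rpow_of_le hle hσ.moment) hσ.stationary hη
  exact h.kant_le_add hd hC hCκ hT hmom hQmax hσ (le_max_right _ _) hβ hB

end IsFlow

lemma integrable_one_add_norm_rpow_of_memPV {V : Ed d → ℝ} {p : ℝ}
    (hVlow : ∀ x : Ed d, (1 + ‖x‖) ^ p ≤ V x) {μ : Measure (Ed d)} (hμ : memPV V μ) :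
    Integrable (fun x => (1 + ‖x‖) ^ p) μ :=
  hμ.2.mono' (continuous_one_add_norm_rpow p).aestronglyMeasurable (.of_forall fun x => by
    rw [Real.norm_of_nonneg (by positivity)]
    exact hVlow x)

lemma IsCauchySolI.isFlow {V : Ed d → ℝ} {m c : ℝ} (hm : 1 ≤ m)
    {b : Ed d → Measure (Ed d) → Ed d} (hb : ∀ μ, memPV V μ → Measurable fun x => b x μ)
    (hgrow : ∀ μ, memPV V μ → HasPolyGrowth c m fun x => b x μ) {ν : Measure (Ed d)}
    {μt : ℝ → Measure (Ed d)} (hμt : ∀ t, 0 ≤ t → memPV V (μt t)) (h : IsCauchySolI b ν μt) :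
    IsFlow m c (fun s x => b x (μt (max s 0))) fun s => μt (max s 0) where
  one_le := hm
  prob s := (hμt _ (le_max_right s 0)).1
  meas s := hb _ (hμt _ (le_max_right s 0))
  grow s := hgrow _ (hμt _ (le_max_right s 0))
  congr s t hst := by simp only [hst]
  frozen s hs := by simp [hs]
  eqn φ hφ t ht := by
    rw [max_eq_left ht, max_self, h.1, h.2 φ hφ t ht]
    refine intervalIntegral.integral_congr fun s hs => ?_
    rw [uIcc_of_le ht] at hs
    simp only [max_eq_left hs.1]

theorem stmt12_kantorovich_convergence_general {V : Ed d → ℝ} {m : ℝ} (hm : 1 ≤ m)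
    (hVlow : ∀ x : Ed d, (1 + ‖x‖) ^ (m + 1) ≤ V x) {b : Ed d → Measure (Ed d) → Ed d}
    (hb : ∀ μ, memPV V μ → Measurable fun x => b x μ) {c : ℝ}
    (hgrow : ∀ μ, memPV V μ → HasPolyGrowth c m fun x => b x μ) {C κ : ℝ} (hC : 0 ≤ C)
    (hCκ : C < κ)
    (hlip : ∀ x μ σ, memPV V μ → memPV V σ → ‖b x μ - b x σ‖ ≤ C * kant μ σ)
    (hdiss : ∀ μ, memPV V μ → IsDissipative κ fun x => b x μ) {μ : Measure (Ed d)}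
    (hμ : memPV V μ) (hμstat : IsStationarySolI (fun x => b x μ) μ) {ν : Measure (Ed d)}
    {μt : ℝ → Measure (Ed d)} (hμt : ∀ t, 0 ≤ t → memPV V (μt t)) (hsol : IsCauchySolI b ν μt)
    {t : ℝ} (ht : 0 ≤ t) : kant (μt t) μ ≤ Real.exp (-(κ - C) * t) * kant ν μ := by
  have hρ : ∀ s, memPV V (μt (max s 0)) := fun s => hμt _ (le_max_right s 0)
  have hequilibrium : IsEquilibrium m c (fun x => b x μ) μ :=
    ⟨hμ.1, hb μ hμ, hgrow μ hμ, integrable_one_add_norm_rpow_of_memPV hVlow hμ, hμstat⟩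
  have hcontract := (hsol.isFlow hm hb hgrow hμt).kant_le hC hCκ ht
    (fun s => integrable_one_add_norm_rpow_of_memPV hVlow (hρ s)) (fun s => hdiss _ (hρ s))
    hequilibrium (hdiss μ hμ) fun s x => hlip x _ μ (hρ s) hμ
  rwa [max_eq_left ht, max_self, hsol.1] at hcontract

/-- **Remark (Kantorovich metric)**: under a dissipativity condition with
constant `κ` and Lipschitz dependence on the measure with constant `C < κ`,
solutions of the Cauchy problem converge exponentially in the Kantorovich
metric to the stationary solution. -/
theorem stmt12_kantorovich_convergence
    (V : Ed d → ℝ) (hV : ContDiff ℝ 2 V) (hV1 : ∀ x, 1 ≤ V x)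
    (hVinf : Tendsto V (cocompact (Ed d)) atTop)
    (m : ℝ) (hm : 1 ≤ m)
    (hVlow : ∀ x : Ed d, (1 + ‖x‖) ^ (m + 1) ≤ V x)
    (b : Ed d → Measure (Ed d) → Ed d)
    (hbBorel : ∀ μ, Measurable (fun x => b x μ))
    (Cb : ℝ) (hbGrow : ∀ (x : Ed d) (μ : Measure (Ed d)), memPV V μ →
      ‖b x μ‖ ≤ Cb * (1 + ‖x‖) ^ m)
    (C κ : ℝ) (hC : 0 < C) (hCκ : C < κ)
    (hbLip : ∀ (x : Ed d) (μ σ : Measure (Ed d)), memPV V μ → memPV V σ →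
      ‖b x μ - b x σ‖ ≤ C * kant μ σ)
    (hbMono : ∀ (x y : Ed d) (μ : Measure (Ed d)), memPV V μ →
      ⟪x - y, b x μ - b y μ⟫ ≤ -κ * ‖x - y‖ ^ 2)
    (μ : Measure (Ed d)) (hμ : memPV V μ)
    (hμstat : IsStationarySolI (fun y => b y μ) μ)
    (ν : Measure (Ed d)) (hν : memPV V ν)
    (μt : ℝ → Measure (Ed d))
    (hμtPV : ∀ t, 0 ≤ t → memPV V (μt t))
    (hμtSol : IsCauchySolI b ν μt) :
    ∀ t : ℝ, 0 ≤ t →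
      kant (μt t) μ ≤ Real.exp (-(κ - C) * t) * kant ν μ := by
  exact fun t ht => stmt12_kantorovich_convergence_general hm hVlow (fun ρ _ => hbBorel ρ)
    (fun ρ hρ x => hbGrow x ρ hρ) hC.le hCκ hbLip (fun ρ hρ x y => hbMono x y ρ hρ) hμ hμstat
    hμtPV hμtSol ht
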